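/- arXiv:1305.1379 — 3 statements merged into one kernel-verified Lean document; each statement's English description precedes it below -/
import Mathlib

section
/- Every homeomorphism of the 2-sphere that is homotopic to the identity is isotopic to the identity: let S² be the unit sphere in ℝ³ and let h : S² → S² be a homeomorphism that is homotopic to the identity map (as continuous maps). Then there exists a continuous map F : [0,1] × S² → S² such that F(0,·) = h, F(1,·) = id, and F(t,·) : S² → S² is a homeomorphism for every t ∈ [0,1]. -/
section
open Set Filter Topology Metric

namespace SphIso

lemma hurwitz_local {ι : Type*} {l : Filter ι} [l.NeBot] {F : ι → ℂ → ℂ} {f : ℂ → ℂ} {U : Set ℂ}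
    (hU : IsOpen U) {b : ℂ} (hb : b ∈ U) (hlim : TendstoLocallyUniformlyOn F f l U)
    (hF : ∀ n, DifferentiableOn ℂ (F n) U) (hne : ∀ n, ∀ z ∈ U, F n z ≠ 0)
    (hf : ¬ ∀ᶠ z in 𝓝 b, f z = 0) : f b ≠ 0 := by
  have hfd : DifferentiableOn ℂ f U := hlim.differentiableOn (Eventually.of_forall hF) hU
  have hfa : AnalyticAt ℂ f b := hfd.analyticAt (hU.mem_nhds hb)
  have h1 := hfa.eventually_eq_zero_or_eventually_ne_zero.resolve_left hf
  rw [eventually_nhdsWithin_iff] at h1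
  obtain ⟨r, hr, hrb⟩ := Metric.nhds_basis_closedBall.mem_iff.1 (Filter.inter_mem h1 (hU.mem_nhds hb))
  have hsphne : (sphere b r).Nonempty := NormedSpace.sphere_nonempty.2 hr.le
  have hsub : sphere b r ⊆ U := fun z hz => (hrb (sphere_subset_closedBall hz)).2
  obtain ⟨z₀, hz₀, hmin⟩ := (isCompact_sphere b r).exists_isMinOn hsphne
    ((hfd.continuousOn.mono hsub).norm)
  set m := ‖f z₀‖ with hm
  have hmpos : 0 < m := by
    rw [hm, norm_pos_iff]
    apply (hrb (sphere_subset_closedBall hz₀)).1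
    intro h
    rw [h] at hz₀
    simp at hz₀
    exact hr.ne hz₀
  have hcb : closedBall b r ⊆ U := fun z hz => (hrb hz).2
  have hunif := (tendstoLocallyUniformlyOn_iff_forall_isCompact hU).1 hlim _ hcb
    (isCompact_closedBall b r)
  rw [Metric.tendstoUniformlyOn_iff] at hunif
  have key : ∀ᶠ n in l, m / 2 ≤ ‖F n b‖ := by
    filter_upwards [hunif (m/2) (by positivity)] with n hn
    have hd : DiffContOnCl ℂ (fun z => (F n z)⁻¹) (ball b r) := by
      apply DifferentiableOn.diffContOnCl
      rw [closure_ball b hr.ne']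
      exact ((hF n).mono hcb).inv (fun z hz => hne n z (hcb hz))
    have := Complex.norm_le_of_forall_mem_frontier_norm_le (isBounded_ball) hd (C := 2 / m) (by
      intro z hz
      rw [frontier_ball b hr.ne'] at hz
      have h2 := hn z (sphere_subset_closedBall hz)
      have h3 : m ≤ ‖f z‖ := hmin hz
      rw [dist_eq_norm] at h2
      have h4 : m / 2 ≤ ‖F n z‖ := by
        have := norm_sub_norm_le (f z) (F n z)
        linarith
      rw [norm_inv]
      rw [inv_le_comm₀ (by linarith) (by positivity), inv_div]
      exact h4) (subset_closure (mem_ball_self hr))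
    rw [norm_inv] at this
    rwa [inv_le_comm₀ (norm_pos_iff.2 (hne n b hb)) (by positivity), inv_div] at this
  have ht : Tendsto (fun n => ‖F n b‖) l (𝓝 ‖f b‖) := (hlim.tendsto_at hb).norm
  have := ge_of_tendsto ht key
  intro h
  rw [h, norm_zero] at this
  linarith

/-- ultrafilter limit of uniformly bounded holomorphic functions. -/
lemma montel_ultra {F : ℕ → ℂ → ℂ} {U : Set ℂ} (hU : IsOpen U) (l : Ultrafilter ℕ)
    (hF : ∀ n, DifferentiableOn ℂ (F n) U) (hm : ∀ n, MapsTo (F n) U (ball 0 1)) :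
    ∃ f : ℂ → ℂ, TendstoLocallyUniformlyOn F f l U := by
  have h1 : ∀ z ∈ U, ∃ y, Tendsto (fun n => F n z) l (𝓝 y) := by
    intro z hz
    have hc := isCompact_iff_ultrafilter_le_nhds.1 (isCompact_closedBall (0:ℂ) 1)
      (l.map (fun n => F n z)) (by
        rw [Ultrafilter.coe_map, le_principal_iff, mem_map]
        exact Filter.univ_mem' (fun n => ball_subset_closedBall (hm n hz)))
    obtain ⟨y, -, hy⟩ := hc
    exact ⟨y, hy⟩
  choose! f hf using h1
  refine ⟨f, ?_⟩
  rw [Metric.tendstoLocallyUniformlyOn_iff]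
  intro ε hε c hc
  obtain ⟨R, hR, hRU⟩ := Metric.isOpen_iff.1 hU c hc
  have hlip : ∀ n, ∀ z ∈ ball c R, dist (F n z) (F n c) ≤ 2 / R * dist z c := by
    intro n z hz
    refine Complex.dist_le_div_mul_dist_of_mapsTo_ball ((hF n).mono hRU) ?_ hz
    intro w hw
    have h1 := hm n (hRU hw)
    have h2 := hm n hc
    rw [mem_ball_zero_iff] at h1 h2
    rw [mem_closedBall, dist_eq_norm]
    have := norm_sub_le (F n w) (F n c)
    linarith
  have hlipf : ∀ z ∈ ball c R, dist (f z) (f c) ≤ 2 / R * dist z c := by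
    intro z hz
    exact le_of_tendsto ((hf z (hRU hz)).dist (hf c hc)) (Eventually.of_forall (fun n => hlip n z hz))
  set δ := min R (R * ε / 8) with hδ
  have hδpos : 0 < δ := by positivity
  refine ⟨ball c δ, mem_nhdsWithin_of_mem_nhds (ball_mem_nhds c hδpos), ?_⟩
  have h3 := (Metric.tendsto_nhds.1 (hf c hc)) (ε/4) (by positivity)
  filter_upwards [h3] with n hn z hz
  have hzR : z ∈ ball c R := ball_subset_ball (min_le_left _ _) hz
  have hz' : dist z c < R * ε / 8 := lt_of_lt_of_le hz (min_le_right _ _)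
  have hb : 2 / R * dist z c ≤ ε / 4 := by
    calc 2 / R * dist z c ≤ 2 / R * (R * ε / 8) := by gcongr
      _ = ε / 4 := by field_simp; norm_num
  calc dist (f z) (F n z) ≤ dist (f z) (f c) + dist (f c) (F n c) + dist (F n c) (F n z) :=
        dist_triangle4 _ _ _ _
    _ < ε := by
        have e1 := hlipf z hzR
        have e2 := hlip n z hzR
        rw [dist_comm (f c) (F n c), dist_comm (F n c) (F n z)]
        linarith

/-- The family for the Riemann mapping theorem. -/
def RF (U : Set ℂ) (u : ℂ) (f : ℂ → ℂ) : Prop :=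
  DifferentiableOn ℂ f U ∧ MapsTo f U (ball 0 1) ∧ InjOn f U ∧ (∀ z ∈ U, deriv f z ≠ 0) ∧ f u = 0


/-- Disc automorphism. -/
noncomputable def mob (w z : ℂ) : ℂ := (z - w) / (1 - (starRingEnd ℂ) w * z)

lemma mob_den {w z : ℂ} (hw : ‖w‖ < 1) (hz : ‖z‖ < 1) : 1 - (starRingEnd ℂ) w * z ≠ 0 := by
  intro h
  have h1 : (starRingEnd ℂ) w * z = 1 := (sub_eq_zero.1 h).symm
  have h2 : ‖w‖ * ‖z‖ = 1 := by
    have := congrArg norm h1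
    rwa [norm_mul, RCLike.norm_conj, norm_one] at this
  nlinarith [norm_nonneg w, norm_nonneg z]

lemma mob_norm {w z : ℂ} (hw : ‖w‖ < 1) (hz : ‖z‖ < 1) : ‖mob w z‖ < 1 := by
  have hd := mob_den hw hz
  rw [mob, norm_div, div_lt_one (norm_pos_iff.2 hd)]
  rw [← sq_lt_sq₀ (norm_nonneg _) (norm_nonneg _)]
  have hw2 : ‖w‖ ^ 2 < 1 := by nlinarith [norm_nonneg w]
  have hz2 : ‖z‖ ^ 2 < 1 := by nlinarith [norm_nonneg z]
  rw [← Complex.normSq_eq_norm_sq, Complex.normSq_apply] at hw2 hz2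
  rw [← Complex.normSq_eq_norm_sq, ← Complex.normSq_eq_norm_sq, Complex.normSq_apply, Complex.normSq_apply]
  simp
  nlinarith [mul_pos (sub_pos.2 hw2) (sub_pos.2 hz2)]

lemma mob_hasDerivAt {w z : ℂ} (hw : ‖w‖ < 1) (hz : ‖z‖ < 1) :
    HasDerivAt (mob w) ((1 - (starRingEnd ℂ) w * w) / (1 - (starRingEnd ℂ) w * z) ^ 2) z := by
  have hd := mob_den hw hz
  have h1 : HasDerivAt (fun z : ℂ => z - w) 1 z := (hasDerivAt_id z).sub_const w
  have h2 : HasDerivAt (fun z : ℂ => 1 - (starRingEnd ℂ) w * z) (-((starRingEnd ℂ) w)) z := by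
    simpa using ((hasDerivAt_id z).const_mul ((starRingEnd ℂ) w)).const_sub 1
  have := h1.div h2 hd
  convert! this using 1
  congr 1
  ring

lemma mob_deriv_ne {w z : ℂ} (hw : ‖w‖ < 1) (hz : ‖z‖ < 1) :
    (1 - (starRingEnd ℂ) w * w) / (1 - (starRingEnd ℂ) w * z) ^ 2 ≠ 0 :=
  div_ne_zero (mob_den hw hw) (pow_ne_zero _ (mob_den hw hz))

lemma mob_inj {w z z' : ℂ} (hw : ‖w‖ < 1) (hz : ‖z‖ < 1) (hz' : ‖z'‖ < 1)
    (h : mob w z = mob w z') : z = z' := by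
  rw [mob, mob, div_eq_div_iff (mob_den hw hz) (mob_den hw hz')] at h
  have : (1 - (starRingEnd ℂ) w * w) * (z - z') = 0 := by linear_combination h
  rcases mul_eq_zero.1 this with h | h
  · exact absurd h (mob_den hw hw)
  · exact sub_eq_zero.1 h

lemma koebe {U : Set ℂ} (hUo : IsOpen U) (hUc : IsSimplyConnected U) {u : ℂ} (hu : u ∈ U)
    {f : ℂ → ℂ} (hf : RF U u f) {w : ℂ} (hw : ‖w‖ < 1) (hwf : w ∉ f '' U) :
    ∃ g, RF U u g ∧ ‖deriv f u‖ < ‖deriv g u‖ := by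
  obtain ⟨hfd, hfm, hfi, hf', hfu⟩ := hf
  have hfb : ∀ z ∈ U, ‖f z‖ < 1 := fun z hz => by simpa using hfm hz
  have had : ∀ z ∈ U, HasDerivAt (fun z => mob w (f z))
      ((1 - (starRingEnd ℂ) w * w) / (1 - (starRingEnd ℂ) w * f z) ^ 2 * deriv f z) z := by
    intro z hz
    exact (mob_hasDerivAt hw (hfb z hz)).comp z ((hfd z hz).differentiableAt (hUo.mem_nhds hz)).hasDerivAt
  have hane : ∀ z ∈ U, mob w (f z) ≠ 0 := by
    intro z hz
    refine div_ne_zero ?_ (mob_den hw (hfb z hz))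
    intro h
    exact hwf ⟨z, hz, sub_eq_zero.1 h⟩
  obtain ⟨s, hsc, hs⟩ := Complex.exists_continuousOn_pow_eq hUc hUo (g := fun z => mob w (f z))
    (fun z hz => (had z hz).continuousAt.continuousWithinAt)
    (by rintro ⟨z, hz, h⟩; exact hane z hz h) (n := 2) two_ne_zero
  have hsne : ∀ z ∈ U, s z ≠ 0 := by
    intro z hz h
    apply hane z hz
    rw [← hs z, h]; norm_num
  have hsb : ∀ z ∈ U, ‖s z‖ < 1 := by
    intro z hz
    have := mob_norm hw (hfb z hz)
    rw [← hs z, norm_pow] at this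
    nlinarith [norm_nonneg (s z)]
  have hsd : ∀ z ∈ U, HasDerivAt s
      ((1 - (starRingEnd ℂ) w * w) / (1 - (starRingEnd ℂ) w * f z) ^ 2 * deriv f z / (2 * s z)) z := by
    intro z hz
    have h1 := hasDerivAt_iff_tendsto_slope.1 (had z hz)
    rw [hasDerivAt_iff_tendsto_slope]
    have hcs : ContinuousAt s z := (hsc z hz).continuousAt (hUo.mem_nhds hz)
    have h2 : Tendsto (fun y => s y + s z) (𝓝[≠] z) (𝓝 (2 * s z)) := by
      rw [two_mul]
      exact (hcs.tendsto.mono_left nhdsWithin_le_nhds).add_const _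
    have h0 : (2 * s z) ≠ 0 := mul_ne_zero two_ne_zero (hsne z hz)
    refine (h1.div h2 h0).congr' ?_
    filter_upwards [h2.eventually_ne h0] with y hy
    simp only [Pi.div_apply, slope_def_field]
    rw [← hs y, ← hs z]
    rw [div_eq_iff hy]
    ring
  have hsi : InjOn s U := by
    intro x hx y hy hxy
    apply hfi hx hy
    apply mob_inj hw (hfb x hx) (hfb y hy)
    rw [← hs x, ← hs y, hxy]
  set β := s u with hβ
  have hβb : ‖β‖ < 1 := hsb u hu
  have hgd : ∀ z ∈ U, HasDerivAt (fun z => mob β (s z))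
      ((1 - (starRingEnd ℂ) β * β) / (1 - (starRingEnd ℂ) β * s z) ^ 2 *
      ((1 - (starRingEnd ℂ) w * w) / (1 - (starRingEnd ℂ) w * f z) ^ 2 * deriv f z / (2 * s z))) z :=
    fun z hz => (mob_hasDerivAt hβb (hsb z hz)).comp z (hsd z hz)
  refine ⟨fun z => mob β (s z), ⟨?_, ?_, ?_, ?_, ?_⟩, ?_⟩
  · exact fun z hz => (hgd z hz).differentiableAt.differentiableWithinAt
  · intro z hz
    simpa using mob_norm hβb (hsb z hz)
  · intro x hx y hy hxy
    exact hsi hx hy (mob_inj hβb (hsb x hx) (hsb y hy) hxy)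
  · intro z hz
    rw [(hgd z hz).deriv]
    exact mul_ne_zero (mob_deriv_ne hβb (hsb z hz)) (div_ne_zero
      (mul_ne_zero (mob_deriv_ne hw (hfb z hz)) (hf' z hz)) (mul_ne_zero two_ne_zero (hsne z hz)))
  · simp [mob, ← hβ]
  · rw [(hgd u hu).deriv, hfu, ← hβ]
    have hβ2 : β ^ 2 = - w := by
      rw [hβ, hs u, hfu]; simp [mob]
    have hwβ : w = - β ^ 2 := by rw [hβ2]; ring
    have hβ0 : β ≠ 0 := hsne u hu
    have e1 : (1 - (starRingEnd ℂ) β * β) = ((1 - ‖β‖ ^ 2 : ℝ) : ℂ) := by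
      rw [mul_comm, Complex.mul_conj, Complex.normSq_eq_norm_sq]; push_cast; rfl
    have e2 : (1 - (starRingEnd ℂ) w * w) = ((1 - ‖β‖ ^ 4 : ℝ) : ℂ) := by
      rw [mul_comm, Complex.mul_conj, Complex.normSq_eq_norm_sq, hwβ]
      rw [norm_neg, norm_pow]; push_cast; ring
    rw [e1, e2]
    have hb0 : 0 < ‖β‖ := norm_pos_iff.2 hβ0
    have hp1 : 0 < 1 - ‖β‖ ^ 2 := by nlinarith
    have hp2 : 0 < 1 - ‖β‖ ^ 4 := by nlinarith [sq_nonneg ‖β‖]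
    have hD : 0 < ‖deriv f u‖ := norm_pos_iff.2 (hf' u hu)
    rw [mul_zero, sub_zero, one_pow, div_one]
    simp only [norm_mul, norm_div, norm_pow, Complex.norm_real, Real.norm_eq_abs, abs_of_pos hp1,
      abs_of_pos hp2]
    rw [RCLike.norm_ofNat]
    have : (1 - ‖β‖ ^ 2) / (1 - ‖β‖ ^ 2) ^ 2 * ((1 - ‖β‖ ^ 4) * ‖deriv f u‖ / (2 * ‖β‖)) =
       ‖deriv f u‖ * ((1 + ‖β‖^2) / (2 * ‖β‖)) := by
      field_simp
      ring
    rw [this]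
    have : 1 < (1 + ‖β‖^2) / (2 * ‖β‖) := by
      rw [lt_div_iff₀ (by positivity)]
      nlinarith [mul_pos (sub_pos.2 hβb) (sub_pos.2 hβb)]
    nlinarith

end SphIso
end

section
open Set Filter Topology Metric

namespace SphIso

lemma rmt_extremal {U : Set ℂ} (hUo : IsOpen U) (hUc : IsPreconnected U)
    (hUb : Bornology.IsBounded U) {u : ℂ} (hu : u ∈ U) :
    ∃ f, RF U u f ∧ ∀ g, RF U u g → ‖deriv g u‖ ≤ ‖deriv f u‖ := by
  obtain ⟨R, hR, hRU⟩ := Metric.isOpen_iff.1 hUo u hu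
  set S : Set ℝ := (fun f : ℂ → ℂ => ‖deriv f u‖) '' {f | RF U u f} with hS
  have hbdd : BddAbove S := by
    refine ⟨1 / R, ?_⟩
    rintro _ ⟨f, ⟨hfd, hfm, -, -, hfu⟩, rfl⟩
    refine Complex.norm_deriv_le_div_of_mapsTo_ball (hfd.mono hRU) ?_ hR
    rw [hfu]
    exact fun z hz => ball_subset_closedBall (hfm (hRU hz))
  obtain ⟨B, hB⟩ := hUb.subset_ball u
  have hBpos : 0 < B := by
    have := hB hu
    simpa using this
  have hlin : RF U u (fun z => (z - u) / B) := by
    have hd : ∀ z, HasDerivAt (fun z : ℂ => (z - u) / (B : ℂ)) (1 / B) z :=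
      fun z => ((hasDerivAt_id z).sub_const u).div_const _
    have hB0 : (B : ℂ) ≠ 0 := by exact_mod_cast hBpos.ne'
    refine ⟨fun z _ => (hd z).differentiableAt.differentiableWithinAt, ?_, ?_, ?_, by simp⟩
    · intro z hz
      have := hB hz
      rw [mem_ball, dist_eq_norm] at this
      rw [mem_ball_zero_iff, norm_div, Complex.norm_real, Real.norm_eq_abs, abs_of_pos hBpos,
        div_lt_one hBpos]
      exact this
    · intro x _ y _ hxy
      simp only at hxy
      field_simp at hxy
      linear_combination hxy
    · intro z _
      rw [(hd z).deriv]
      simp [hB0]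
  have hSne : S.Nonempty := ⟨_, _, hlin, rfl⟩
  obtain ⟨v, -, hv, hvS⟩ := exists_seq_tendsto_sSup hSne hbdd
  choose F hF hFv using hvS
  have hMpos : 0 < sSup S := by
    refine lt_of_lt_of_le ?_ (le_csSup hbdd ⟨_, hlin, rfl⟩)
    exact norm_pos_iff.2 (hlin.2.2.2.1 u hu)
  obtain ⟨f, hf⟩ := montel_ultra hUo (hyperfilter ℕ) (fun n => (hF n).1) (fun n => (hF n).2.1)
  have hFd : ∀ n, DifferentiableOn ℂ (F n) U := fun n => (hF n).1
  have hfd : DifferentiableOn ℂ f U := hf.differentiableOn (Eventually.of_forall hFd) hUo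
  have hfderiv := hf.deriv (Eventually.of_forall hFd) hUo
  have hfu' : ‖deriv f u‖ = sSup S := by
    have h1 := (hfderiv.tendsto_at hu).norm
    have h2 : Tendsto v (hyperfilter ℕ) (𝓝 (sSup S)) := hv.mono_left Nat.hyperfilter_le_atTop
    refine tendsto_nhds_unique h1 (h2.congr ?_)
    intro n
    exact (hFv n).symm
  have hne0 : deriv f u ≠ 0 := by
    rw [← norm_pos_iff, hfu']; exact hMpos
  have hfan : AnalyticOnNhd ℂ f U := hfd.analyticOnNhd hUo
  have hnonconst : ∀ w, ¬ (∀ z ∈ U, f z = w) := by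
    intro w h
    apply hne0
    have : f =ᶠ[𝓝 u] fun _ => w := by
      filter_upwards [hUo.mem_nhds hu] with z hz using h z hz
    rw [this.deriv_eq]; simp
  have hfle : ∀ z ∈ U, ‖f z‖ ≤ 1 := by
    intro z hz
    refine le_of_tendsto (hf.tendsto_at hz).norm (Eventually.of_forall fun n => ?_)
    have := (hF n).2.1 hz
    rw [mem_ball_zero_iff] at this
    exact this.le
  refine ⟨f, ⟨hfd, ?_, ?_, ?_, ?_⟩, ?_⟩
  · rcases hfan.is_constant_or_isOpen hUc with ⟨w, hw⟩ | h
    · exact absurd hw (hnonconst w)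
    · have ho := h U subset_rfl hUo
      have : f '' U ⊆ interior (closedBall 0 1) := by
        rw [ho.subset_interior_iff]
        rintro _ ⟨z, hz, rfl⟩
        simpa using hfle z hz
      rw [interior_closedBall _ one_ne_zero] at this
      exact fun z hz => this ⟨z, hz, rfl⟩
  · intro a ha b hb hab
    by_contra hne
    have hopen : IsOpen (U \ {a}) := hUo.sdiff isClosed_singleton
    have hbU : b ∈ U \ {a} := ⟨hb, fun h => hne h.symm⟩
    have hconst : TendstoLocallyUniformlyOn (fun n (_ : ℂ) => F n a) (fun _ => f a)
        (hyperfilter ℕ) (U \ {a}) := by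
      apply TendstoUniformlyOn.tendstoLocallyUniformlyOn
      rw [Metric.tendstoUniformlyOn_iff]
      intro ε hε
      filter_upwards [(Metric.tendsto_nhds.1 (hf.tendsto_at ha)) ε hε] with n hn z _
      rw [dist_comm]; exact hn
    have hsub : TendstoLocallyUniformlyOn (fun n z => F n z - F n a) (fun z => f z - f a)
        (hyperfilter ℕ) (U \ {a}) := (hf.mono sdiff_subset).sub hconst
    refine hurwitz_local hopen hbU hsub (fun n => ((hFd n).mono sdiff_subset).sub_const _) ?_ ?_ ?_
    · intro n z hz h
      exact hz.2 ((hF n).2.2.1 hz.1 ha (sub_eq_zero.1 h))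
    · intro h
      refine hnonconst (f a) ?_
      refine hfan.eqOn_of_preconnected_of_eventuallyEq analyticOnNhd_const hUc hb ?_
      filter_upwards [h] with z hz using sub_eq_zero.1 hz
    · rw [hab, sub_self]
  · intro b hb
    have hda : AnalyticOnNhd ℂ (deriv f) U := hfan.deriv
    refine hurwitz_local hUo hb hfderiv (fun n => ((hFd n).deriv hUo)) (fun n => (hF n).2.2.2.1) ?_
    intro h
    exact hne0 (hda.eqOn_zero_of_preconnected_of_eventuallyEq_zero hUc hb h hu)
  · refine tendsto_nhds_unique (hf.tendsto_at hu) ?_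
    refine tendsto_const_nhds.congr ?_
    intro n; exact (hF n).2.2.2.2.symm
  · intro g hg
    rw [hfu']
    exact le_csSup hbdd ⟨g, hg, rfl⟩

/-- Riemann mapping theorem for bounded simply connected domains. -/
theorem rmt {U : Set ℂ} (hUo : IsOpen U) (hUc : IsSimplyConnected U)
    (hUb : Bornology.IsBounded U) :
    ∃ φ f : ℂ → ℂ, DifferentiableOn ℂ φ (ball 0 1) ∧ DifferentiableOn ℂ f U ∧
      MapsTo φ (ball 0 1) U ∧ MapsTo f U (ball 0 1) ∧ (∀ z ∈ ball 0 1, f (φ z) = z) ∧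
      (∀ z ∈ U, φ (f z) = z) := by
  obtain ⟨u, hu⟩ := hUc.nonempty
  obtain ⟨f, hf, hmax⟩ := rmt_extremal hUo hUc.isPathConnected.isConnected.isPreconnected hUb hu
  have hsurj : ball (0:ℂ) 1 ⊆ f '' U := by
    intro w hw
    by_contra hwf
    obtain ⟨g, hg, hlt⟩ := koebe hUo hUc hu hf (by simpa using hw) hwf
    exact absurd (hmax g hg) (not_le.2 hlt)
  obtain ⟨hfd, hfm, hfi, hf', -⟩ := hf
  have hbij : BijOn f U (ball 0 1) := ⟨hfm, hfi, hsurj⟩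
  have hinv := hbij.invOn_invFunOn
  set φ := Function.invFunOn f U with hφ
  have hφm : MapsTo φ (ball 0 1) U := hbij.surjOn.mapsTo_invFunOn
  have hfan : AnalyticOnNhd ℂ f U := hfd.analyticOnNhd hUo
  have hleft : ∀ z ∈ ball (0:ℂ) 1, f (φ z) = z := fun z hz => hinv.2 hz
  have hright : ∀ z ∈ U, φ (f z) = z := fun z hz => hinv.1 hz
  refine ⟨φ, f, ?_, hfd, hφm, hfm, hleft, hright⟩
  intro z hz
  have hzU := hφm hz
  have hda : HasDerivAt f (deriv f (φ z)) (φ z) := ((hfd _ hzU).differentiableAt (hUo.mem_nhds hzU)).hasDerivAt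
  have hsd : HasStrictDerivAt f (deriv f (φ z)) (φ z) := (hfan _ hzU).hasStrictDerivAt
  have hcont : ContinuousAt φ z := by
    intro V hV
    have hmap := hsd.map_nhds_eq (hf' _ hzU)
    rw [hleft z hz] at hmap
    have : f '' (V ∩ U) ∈ 𝓝 z := by
      rw [← hmap]
      refine image_mem_map (Filter.inter_mem hV (hUo.mem_nhds hzU))
    rw [mem_map]
    filter_upwards [this] with y hy
    obtain ⟨x, ⟨hxV, hxU⟩, rfl⟩ := hy
    show φ (f x) ∈ V
    rw [hright x hxU]; exact hxV
  refine (HasDerivAt.of_local_left_inverse hcont hda (hf' _ hzU) ?_).differentiableAt.differentiableWithinAt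
  filter_upwards [isOpen_ball.mem_nhds hz] with y hy using hleft y hy

end SphIso
end

section
open Set Filter Topology Metric

namespace SphIso

open MeasureTheory ENNReal in
lemma area_formula {S : Set ℂ} (hS : IsOpen S) {Φ : ℂ → ℂ} (hd : DifferentiableOn ℂ Φ S)
    (hi : InjOn Φ S) : ∫⁻ z in S, ‖deriv Φ z‖ₑ ^ 2 = volume (Φ '' S) := by
  have h := lintegral_abs_det_fderiv_eq_addHaar_image volume (f := Φ) (s := S)
    (f' := fun z => ((ContinuousLinearMap.mul ℂ ℂ (deriv Φ z)).restrictScalars ℝ))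
    hS.measurableSet ?_ hi
  · rw [← h]
    refine lintegral_congr fun z => ?_
    have : ((ContinuousLinearMap.mul ℂ ℂ (deriv Φ z)).restrictScalars ℝ).det = Complex.normSq (deriv Φ z) := by
      rw [← Algebra.norm_complex_apply, Algebra.norm_apply]
      rfl
    rw [this, abs_of_nonneg (Complex.normSq_nonneg _), Complex.normSq_eq_norm_sq,
      ENNReal.ofReal_pow (norm_nonneg _), ofReal_norm]
  · intro z hz
    have h1 := ((hd z hz).differentiableAt (hS.mem_nhds hz)).hasDerivAt.hasFDerivAt
    have h2 := (h1.restrictScalars ℝ).hasFDerivWithinAt (s := S)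
    convert! h2 using 1
    ext x
    simp [mul_comm]

open MeasureTheory ENNReal in
lemma length_area {Φ : ℂ → ℂ}
    (hd : DifferentiableOn ℂ Φ {w : ℂ | w.im ∈ Ioo 0 Real.pi})
    (hi : InjOn Φ {w : ℂ | w.im ∈ Ioo 0 Real.pi})
    (hb : Bornology.IsBounded (Φ '' {w : ℂ | w.im ∈ Ioo 0 Real.pi})) {ε : ℝ} (hε : 0 < ε) (X : ℝ) :
    ∃ x < X, ∀ θ ∈ Ioo 0 Real.pi, ∀ θ' ∈ Ioo 0 Real.pi,
      dist (Φ (x + θ * Complex.I)) (Φ (x + θ' * Complex.I)) ≤ ε := by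
  set S := {w : ℂ | w.im ∈ Ioo 0 Real.pi} with hSdef
  have hSo : IsOpen S := isOpen_Ioo.preimage Complex.continuous_im
  have hpi := Real.pi_pos
  set η := ε / Real.pi with hη
  have hηpos : 0 < η := by positivity
  have harea := area_formula hSo hd hi
  have hfin : volume (Φ '' S) < ∞ := hb.measure_lt_top
  have hfub : ∫⁻ z in S, ‖deriv Φ z‖ₑ ^ 2 =
      ∫⁻ x : ℝ, ∫⁻ θ in Ioo 0 Real.pi, ‖deriv Φ (x + θ * Complex.I)‖ₑ ^ 2 := by
    have hmp := Complex.volume_preserving_equiv_real_prod.symm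
    have hS' : S = Complex.measurableEquivRealProd ⁻¹' (univ ×ˢ Ioo 0 Real.pi) := by
      ext z
      simp [hSdef, Complex.measurableEquivRealProd]
    have h1 := hmp.setLIntegral_comp_preimage_emb (MeasurableEquiv.measurableEmbedding _)
      (fun z => ‖deriv Φ z‖ₑ ^ 2) S
    rw [← h1]
    have h2 : (Complex.measurableEquivRealProd.symm ⁻¹' S) = univ ×ˢ Ioo 0 Real.pi := by
      rw [hS']; ext p; simp
    rw [h2, Measure.volume_eq_prod, setLIntegral_prod]
    · simp only [Measure.restrict_univ]
      refine lintegral_congr fun x => lintegral_congr fun θ => ?_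
      congr 3
      apply Complex.ext <;> simp
    · apply Measurable.aemeasurable
      have := measurable_deriv Φ
      fun_prop
  have hx : ∃ x < X, ∫⁻ θ in Ioo 0 Real.pi, ‖deriv Φ (x + θ * Complex.I)‖ₑ ^ 2 ≤ ENNReal.ofReal (ε * η) := by
    by_contra hcon
    push Not at hcon
    have : ∫⁻ x : ℝ in Iio X, ENNReal.ofReal (ε * η) ≤ ∫⁻ x : ℝ, ∫⁻ θ in Ioo 0 Real.pi, ‖deriv Φ (x + θ * Complex.I)‖ₑ ^ 2 := by
      refine (setLIntegral_mono' measurableSet_Iio (fun x hx => (hcon x hx).le)).trans ?_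
      exact setLIntegral_le_lintegral _ _
    rw [← hfub, harea] at this
    simp only [lintegral_const, Measure.restrict_apply MeasurableSet.univ, univ_inter, Real.volume_Iio] at this
    rw [ENNReal.mul_top (by simp; positivity)] at this
    exact absurd (lt_of_le_of_lt this hfin) (lt_irrefl _)
  obtain ⟨x, hxX, hx⟩ := hx
  refine ⟨x, hxX, ?_⟩
  have hmeas : Measurable (fun θ : ℝ => ‖deriv Φ (x + θ * Complex.I)‖ₑ ^ 2) := by
    have := measurable_deriv Φ
    fun_prop
  have hL : ∫⁻ θ in Ioo 0 Real.pi, ‖deriv Φ (x + θ * Complex.I)‖ₑ ≤ ENNReal.ofReal ε := by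
    have hpt : ∀ θ : ℝ, ‖deriv Φ (x + θ * Complex.I)‖ₑ ≤
        ENNReal.ofReal (η / 2) + ENNReal.ofReal (1 / (2 * η)) * ‖deriv Φ (x + θ * Complex.I)‖ₑ ^ 2 := by
      intro θ
      rw [← ofReal_norm, ← ENNReal.ofReal_pow (norm_nonneg _), ← ENNReal.ofReal_mul (by positivity),
        ← ENNReal.ofReal_add (by positivity) (by positivity)]
      apply ENNReal.ofReal_le_ofReal
      set a := ‖deriv Φ (x + θ * Complex.I)‖
      have : η / 2 + 1 / (2 * η) * a ^ 2 - a = (η - a) ^ 2 / (2 * η) := by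
        field_simp; ring
      have h2 : 0 ≤ (η - a) ^ 2 / (2 * η) := by positivity
      linarith
    refine (lintegral_mono hpt).trans ?_
    rw [lintegral_add_left (by fun_prop), lintegral_const_mul _ hmeas]
    simp only [lintegral_const, Measure.restrict_apply MeasurableSet.univ, univ_inter, Real.volume_Ioo, sub_zero]
    calc _ ≤ ENNReal.ofReal (η / 2) * ENNReal.ofReal Real.pi + ENNReal.ofReal (1 / (2 * η)) * ENNReal.ofReal (ε * η) := by gcongr
      _ = ENNReal.ofReal ε := by
        rw [← ENNReal.ofReal_mul (by positivity), ← ENNReal.ofReal_mul (by positivity),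
          ← ENNReal.ofReal_add (by positivity) (by positivity)]
        congr 1
        rw [hη]
        field_simp
        ring
  have hdS := hd.deriv hSo
  have key : ∀ θ ∈ Ioo 0 Real.pi, ∀ θ' ∈ Ioo 0 Real.pi, θ ≤ θ' →
      dist (Φ (x + θ * Complex.I)) (Φ (x + θ' * Complex.I)) ≤ ε := by
    intro θ hθ θ' hθ' hle
    have hsub : Icc θ θ' ⊆ Ioo 0 Real.pi := fun t ht => ⟨hθ.1.trans_le ht.1, ht.2.trans_lt hθ'.2⟩
    have hmem : ∀ t ∈ Icc θ θ', (x + t * Complex.I : ℂ) ∈ S := by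
      intro t ht
      simpa [hSdef] using hsub ht
    have hline : ∀ t : ℝ, HasDerivAt (fun t : ℝ => (x + t * Complex.I : ℂ)) Complex.I t := by
      intro t
      have := ((Complex.ofRealCLM.hasDerivAt (x := t)).mul_const Complex.I).const_add (x : ℂ)
      simpa using this
    have hder : ∀ t ∈ uIcc θ θ', HasDerivAt (fun t : ℝ => Φ (x + t * Complex.I))
        (deriv Φ (x + t * Complex.I) * Complex.I) t := by
      intro t ht
      rw [uIcc_of_le hle] at ht
      exact (((hd _ (hmem t ht)).differentiableAt (hSo.mem_nhds (hmem t ht))).hasDerivAt).comp t (hline t)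
    have hcont : ContinuousOn (fun t : ℝ => deriv Φ (x + t * Complex.I) * Complex.I) (uIcc θ θ') := by
      rw [uIcc_of_le hle]
      refine ContinuousOn.mul ?_ continuousOn_const
      refine hdS.continuousOn.comp (Continuous.continuousOn (by fun_prop)) hmem
    have hinteg := intervalIntegral.integral_eq_sub_of_hasDerivAt hder hcont.intervalIntegrable
    rw [dist_comm, dist_eq_norm, ← hinteg, intervalIntegral.integral_of_le hle]
    have h3 := enorm_integral_le_lintegral_enorm (μ := volume.restrict (Ioc θ θ'))
      (fun t : ℝ => deriv Φ (x + t * Complex.I) * Complex.I)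
    have h4 : ∫⁻ t in Ioc θ θ', ‖deriv Φ (x + t * Complex.I) * Complex.I‖ₑ ≤ ENNReal.ofReal ε := by
      refine le_trans ?_ hL
      refine (lintegral_mono_set (Ioc_subset_Icc_self.trans hsub)).trans ?_
      refine lintegral_mono fun t => ?_
      have hI : ‖Complex.I‖ₑ = 1 := by rw [← ofReal_norm]; simp
      rw [enorm_mul, hI, mul_one]
    have h5 := h3.trans h4
    rw [← ofReal_norm] at h5
    exact (ENNReal.ofReal_le_ofReal_iff hε.le).1 h5
  intro θ hθ θ' hθ'
  rcases le_total θ θ' with h | h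
  · exact key θ hθ θ' hθ' h
  · rw [dist_comm]; exact key θ' hθ' θ hθ h

end SphIso
end

section
open Set Filter Topology Metric

namespace SphIso

/-- `g` and `k` are mutually inverse self-homeomorphisms of the open unit disc. -/
structure DH (g k : ℂ → ℂ) : Prop where
  cg : ContinuousOn g (ball 0 1)
  ck : ContinuousOn k (ball 0 1)
  mg : MapsTo g (ball 0 1) (ball 0 1)
  mk2 : MapsTo k (ball 0 1) (ball 0 1)
  gk : ∀ z ∈ ball (0:ℂ) 1, g (k z) = z
  kg : ∀ z ∈ ball (0:ℂ) 1, k (g z) = z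

lemma DH.proper {g k : ℂ → ℂ} (H : DH g k) {r : ℝ} (hr : r < 1) :
    ∃ s < 1, ∀ z ∈ ball (0:ℂ) 1, s < ‖z‖ → r < ‖g z‖ := by
  have hK : IsCompact (k '' closedBall 0 r) :=
    (isCompact_closedBall 0 r).image_of_continuousOn (H.ck.mono (closedBall_subset_ball hr))
  have hsub : ∀ z ∈ k '' closedBall 0 r, ‖z‖ < 1 := by
    rintro _ ⟨w, hw, rfl⟩
    simpa using H.mk2 (closedBall_subset_ball hr hw)
  have : ∃ s < 1, ∀ z ∈ k '' closedBall 0 r, ‖z‖ ≤ s := by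
    rcases (k '' closedBall 0 r).eq_empty_or_nonempty with he | hne
    · exact ⟨0, by norm_num, by simp [he]⟩
    · obtain ⟨w, hw, hmax⟩ := hK.exists_isMaxOn hne continuous_norm.continuousOn
      exact ⟨‖w‖, hsub w hw, fun z hz => hmax hz⟩
  obtain ⟨s, hs, hsK⟩ := this
  refine ⟨s, hs, fun z hz hsz => ?_⟩
  by_contra! hcon
  have := hsK (k (g z)) ⟨g z, by simpa using hcon, rfl⟩
  rw [H.kg z hz] at this
  linarith

/-- existence of short crosscuts -/
lemma crosscut {φ : ℂ → ℂ} (hd : DifferentiableOn ℂ φ (ball 0 1)) (hi : InjOn φ (ball 0 1))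
    (hb : Bornology.IsBounded (φ '' ball 0 1)) {ζ : ℂ} (hζ : ‖ζ‖ = 1) {ε ρ₀ : ℝ} (hε : 0 < ε)
    (hρ₀ : 0 < ρ₀) : ∃ ρ, 0 < ρ ∧ ρ < ρ₀ ∧ ∀ z ∈ ball (0:ℂ) 1, ∀ z' ∈ ball (0:ℂ) 1,
      ‖z - ζ‖ = ρ * ‖z + ζ‖ → ‖z' - ζ‖ = ρ * ‖z' + ζ‖ → dist (φ z) (φ z') ≤ ε := by
  have hζ0 : ζ ≠ 0 := by intro h; simp [h] at hζ
  set S := {w : ℂ | w.im ∈ Ioo 0 Real.pi} with hSdef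
  set M : ℂ → ℂ := fun w => ζ * (1 + Complex.I * Complex.exp w) / (1 - Complex.I * Complex.exp w) with hM
  have him : ∀ w ∈ S, 0 < (Complex.exp w).im := by
    intro w hw
    rw [Complex.exp_im]
    exact mul_pos (Real.exp_pos _) (Real.sin_pos_of_pos_of_lt_pi hw.1 hw.2)
  have hden : ∀ w ∈ S, 1 - Complex.I * Complex.exp w ≠ 0 := by
    intro w hw h
    have h1 := congrArg Complex.re h
    simp only [Complex.sub_re, Complex.one_re, Complex.mul_re, Complex.I_re, Complex.I_im, zero_mul,
      one_mul, zero_sub, Complex.zero_re, sub_neg_eq_add] at h1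
    have := him w hw
    linarith
  have hMD : MapsTo M S (ball 0 1) := by
    intro w hw
    have h0 := him w hw
    have hd0 := hden w hw
    rw [mem_ball_zero_iff, hM]
    simp only
    rw [norm_div, norm_mul, hζ, one_mul, div_lt_one (norm_pos_iff.2 hd0)]
    rw [← sq_lt_sq₀ (norm_nonneg _) (norm_nonneg _), ← Complex.normSq_eq_norm_sq,
      ← Complex.normSq_eq_norm_sq, Complex.normSq_apply, Complex.normSq_apply]
    simp
    nlinarith
  have hMd : DifferentiableOn ℂ M S := by
    intro w hw
    have := hden w hw
    apply DifferentiableAt.differentiableWithinAt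
    apply DifferentiableAt.div
    · fun_prop
    · fun_prop
    · exact this
  have hMi : InjOn M S := by
    intro w hw w' hw' heq
    have h1 := hden w hw
    have h2 := hden w' hw'
    simp only [hM] at heq
    rw [div_eq_div_iff h1 h2] at heq
    have h3 : Complex.exp w = Complex.exp w' := by
      have : (2 * ζ * Complex.I) * (Complex.exp w - Complex.exp w') = 0 := by linear_combination heq
      have hne : 2 * ζ * Complex.I ≠ 0 := by simp [hζ0]
      exact sub_eq_zero.1 ((mul_eq_zero.1 this).resolve_left hne)
    apply Complex.exp_inj_of_neg_pi_lt_of_le_pi _ _ _ _ h3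
    · have := hw.1; have := Real.pi_pos; linarith
    · exact hw.2.le
    · have := hw'.1; have := Real.pi_pos; linarith
    · exact hw'.2.le
  have hinv : ∀ ρ > 0, ∀ z ∈ ball (0:ℂ) 1, ‖z - ζ‖ = ρ * ‖z + ζ‖ →
      ∃ θ ∈ Ioo 0 Real.pi, M ((Real.log ρ : ℝ) + θ * Complex.I) = z := by
    intro ρ hρ z hz hzρ
    have hz1 : ‖z‖ < 1 := by simpa using hz
    have hzζ : z + ζ ≠ 0 := by
      intro h
      have : z = -ζ := eq_neg_of_add_eq_zero_left h
      rw [this, norm_neg, hζ] at hz1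
      exact lt_irrefl _ hz1
    set v := -Complex.I * ((z - ζ) / (z + ζ)) with hv
    have hvn : ‖v‖ = ρ := by
      rw [hv, norm_mul, norm_div, hzρ]
      have := norm_pos_iff.2 hzζ
      simp
      field_simp
    have hvim : 0 < v.im := by
      have h1 : v.im = -((z - ζ) / (z + ζ)).re := by simp [hv]
      rw [h1, Complex.div_re, ← add_div, neg_pos]
      apply div_neg_of_neg_of_pos _ (Complex.normSq_pos.2 hzζ)
      have e1 : Complex.normSq z < 1 := by
        rw [Complex.normSq_eq_norm_sq]; nlinarith [norm_nonneg z]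
      have e2 : Complex.normSq ζ = 1 := by rw [Complex.normSq_eq_norm_sq, hζ]; norm_num
      rw [Complex.normSq_apply] at e1 e2
      simp
      nlinarith
    have hv0 : v ≠ 0 := by intro h; rw [h] at hvim; simp at hvim
    refine ⟨Complex.arg v, ⟨?_, ?_⟩, ?_⟩
    · rcases (Complex.arg_nonneg_iff.2 hvim.le).lt_or_eq with h | h
      · exact h
      · have := (Complex.arg_eq_zero_iff.1 h.symm).2
        linarith
    · rcases (Complex.arg_le_pi v).lt_or_eq with h | h
      · exact h
      · have := (Complex.arg_eq_pi_iff.1 h).2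
        linarith
    · have hlog : ((Real.log ρ : ℝ) + Complex.arg v * Complex.I : ℂ) = Complex.log v := by
        rw [← hvn]; rfl
      rw [hlog]
      simp only [hM]
      rw [Complex.exp_log hv0]
      have e : Complex.I * v = (z - ζ) / (z + ζ) := by
        rw [hv, ← mul_assoc]; simp
      rw [e]
      have h2 : 1 - (z - ζ) / (z + ζ) = 2 * ζ / (z + ζ) := by field_simp; ring
      have h3 : 1 + (z - ζ) / (z + ζ) = 2 * z / (z + ζ) := by field_simp; ring
      rw [h2, h3]
      field_simp
  obtain ⟨x, hx, hxx⟩ := length_area (Φ := φ ∘ M) (hd.comp hMd hMD) (hi.comp hMi hMD)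
    (hb.subset (by rw [image_comp]; exact image_mono hMD.image_subset)) hε (Real.log ρ₀)
  refine ⟨Real.exp x, Real.exp_pos _, ?_, ?_⟩
  · rwa [← Real.lt_log_iff_exp_lt hρ₀]
  · intro z hz z' hz' h h'
    obtain ⟨θ, hθ, e⟩ := hinv _ (Real.exp_pos x) z hz h
    obtain ⟨θ', hθ', e'⟩ := hinv _ (Real.exp_pos x) z' hz' h'
    have := hxx θ hθ θ' hθ'
    simp only [Function.comp] at this
    rw [Real.log_exp] at e e'
    rwa [e, e'] at this

lemma DH.cauchy {g k : ℂ → ℂ} (H : DH g k) {ζ : ℂ} (hζ : ‖ζ‖ = 1)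
    (hcc : ∀ ε > 0, ∀ ρ₀ > 0, ∃ ρ, 0 < ρ ∧ ρ < ρ₀ ∧ ∀ z ∈ ball (0:ℂ) 1, ∀ z' ∈ ball (0:ℂ) 1,
      ‖z - ζ‖ = ρ * ‖z + ζ‖ → ‖z' - ζ‖ = ρ * ‖z' + ζ‖ → dist (g z) (g z') ≤ ε)
    {ε : ℝ} (hε : 0 < ε) : ∃ δ > 0, ∃ n : ℂ, ∀ z ∈ ball (0:ℂ) 1, dist z ζ < δ → dist (g z) n < ε := by
  have h0D : (0:ℂ) ∈ ball (0:ℂ) 1 := by simp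
  have hg0 : ‖g 0‖ < 1 := by simpa using H.mg h0D
  set η := min (ε ^ 2 / 4) ((1 - ‖g 0‖) / 4) with hη
  have hηpos : 0 < η := lt_min (by positivity) (by linarith)
  have hη1 : η ≤ ε ^ 2 / 4 := min_le_left _ _
  have hη2 : η ≤ (1 - ‖g 0‖) / 4 := min_le_right _ _
  obtain ⟨s, hs, hsp⟩ := H.proper (r := 1 - η) (by linarith)
  obtain ⟨ρ, hρ, hρ', hρc⟩ := hcc (η / 2) (by linarith) (min ((1 - s) / 2) 1)
    (lt_min (by linarith) one_pos)
  have hρ1 : ρ < 1 := hρ'.trans_le (min_le_right _ _)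
  have hρs : ρ < (1 - s) / 2 := hρ'.trans_le (min_le_left _ _)
  set z0 : ℂ := ((1 - ρ) / (1 + ρ) : ℝ) * ζ with hz0
  have hnz0 : ‖z0‖ = (1 - ρ) / (1 + ρ) := by
    rw [hz0, norm_mul, hζ, mul_one, Complex.norm_real, Real.norm_of_nonneg]
    apply div_nonneg <;> linarith
  have hz0D : z0 ∈ ball (0:ℂ) 1 := by
    rw [mem_ball_zero_iff, hnz0, div_lt_one (by linarith)]; linarith
  have hz0C : ‖z0 - ζ‖ = ρ * ‖z0 + ζ‖ := by
    have hne : (1 + ρ : ℂ) ≠ 0 := by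
      intro h
      have := congrArg Complex.re h
      simp at this; linarith
    have e1 : z0 - ζ = ((-(2 * ρ) / (1 + ρ) : ℝ) : ℂ) * ζ := by
      rw [hz0]; push_cast; field_simp; ring
    have e2 : z0 + ζ = ((2 / (1 + ρ) : ℝ) : ℂ) * ζ := by
      rw [hz0]; push_cast; field_simp; ring
    rw [e1, e2, norm_mul, norm_mul, hζ, Complex.norm_real, Complex.norm_real, neg_div, norm_neg,
      Real.norm_of_nonneg (by positivity), Real.norm_of_nonneg (by positivity)]
    field_simp
  set p := g z0 with hp
  have hpn : 1 - η < ‖p‖ := by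
    apply hsp z0 hz0D
    rw [hnz0, lt_div_iff₀ (by linarith)]
    nlinarith
  have hppos : 0 < ‖p‖ := by linarith [norm_nonneg (g 0)]
  set n : ℂ := p / ‖p‖ with hn
  have hnn : ‖n‖ = 1 := by
    rw [hn, norm_div, Complex.norm_real, norm_norm, div_self hppos.ne']
  set L : ℂ → ℝ := fun z => (z * (starRingEnd ℂ) n).re with hL
  have hLsub : ∀ z w, L (z - w) = L z - L w := by intro z w; simp [hL, sub_mul]; ring
  have hLn : ∀ z, L z ≤ ‖z‖ := by
    intro z
    refine (Complex.re_le_norm _).trans ?_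
    rw [norm_mul, RCLike.norm_conj, hnn, mul_one]
  have hLp : L p = ‖p‖ := by
    have e : p * (starRingEnd ℂ) n = (‖p‖ : ℂ) := by
      rw [hn, map_div₀, Complex.conj_ofReal, mul_div_assoc', Complex.mul_conj, Complex.normSq_eq_norm_sq]
      have : (‖p‖ : ℂ) ≠ 0 := by exact_mod_cast hppos.ne'
      push_cast
      field_simp
    simp only [hL]
    rw [e, Complex.ofReal_re]
  set E : Set ℂ := ball 0 1 ∩ {z | L z ≤ 1 - 2 * η} with hE
  have hEconv : Convex ℝ E := by
    apply (convex_ball 0 1).inter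
    have hlin : IsLinearMap ℝ L := by
      constructor
      · intro x y; simp [hL, add_mul]; ring
      · intro c x; simp [hL]; ring
    exact convex_halfSpace_le hlin _
  have hkE : IsPreconnected (k '' E) :=
    hEconv.isPreconnected.image k (H.ck.mono inter_subset_left)
  have hg0E : g 0 ∈ E := by
    refine ⟨H.mg h0D, ?_⟩
    have := hLn (g 0)
    change L (g 0) ≤ 1 - 2 * η
    linarith
  have h0k : (0:ℂ) ∈ k '' E := ⟨g 0, hg0E, H.kg 0 h0D⟩
  set m : ℂ → ℝ := fun z => ‖z - ζ‖ - ρ * ‖z + ζ‖ with hm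
  have hmc : Continuous m := by fun_prop
  have hmne : ∀ z ∈ k '' E, m z ≠ 0 := by
    rintro _ ⟨e, he, rfl⟩ h0
    have hke := H.mk2 he.1
    have h1 := hρc (k e) hke z0 hz0D (sub_eq_zero.1 h0) hz0C
    rw [H.gk e he.1, dist_comm, dist_eq_norm] at h1
    have h2 := hLn (p - e)
    rw [hLsub, hLp] at h2
    have h3 : L e ≤ 1 - 2 * η := he.2
    change ‖p - e‖ ≤ η / 2 at h1
    linarith
  have hmpos : ∀ z ∈ k '' E, 0 < m z := by
    intro z hz
    by_contra! hcon
    obtain ⟨y, hy, hy0⟩ := hkE.intermediate_value hz h0k hmc.continuousOn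
      (show (0:ℝ) ∈ Icc (m z) (m 0) from ⟨hcon, by simp [hm, hζ]; exact hρ1.le⟩)
    exact hmne y hy hy0
  refine ⟨ρ, hρ, n, fun z hz hzζ => ?_⟩
  have hmz : m z < 0 := by
    have h1 : ‖z - ζ‖ < ρ := by rwa [← dist_eq_norm]
    have h2 : 1 ≤ ‖z + ζ‖ := by
      have : (2:ℝ) * ‖ζ‖ = ‖(z + ζ) - (z - ζ)‖ := by
        rw [show (z + ζ) - (z - ζ) = 2 * ζ by ring, norm_mul]; simp
      have h3 := norm_sub_le (z + ζ) (z - ζ)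
      rw [← this, hζ] at h3
      linarith
    simp only [hm]
    nlinarith
  have hnE : g z ∉ E := by
    intro h
    have := hmpos (k (g z)) ⟨_, h, rfl⟩
    rw [H.kg z hz] at this
    linarith
  have hgz := H.mg hz
  have hLz : 1 - 2 * η < L (g z) := by
    by_contra! h
    exact hnE ⟨hgz, h⟩
  have hgn : ‖g z‖ < 1 := by simpa using hgz
  rw [dist_eq_norm]
  have hsq : ‖g z - n‖ ^ 2 = ‖g z‖ ^ 2 + ‖n‖ ^ 2 - 2 * L (g z) := by
    rw [← Complex.normSq_eq_norm_sq, ← Complex.normSq_eq_norm_sq, ← Complex.normSq_eq_norm_sq,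
      Complex.normSq_sub]
  have : ‖g z - n‖ ^ 2 < ε ^ 2 := by
    rw [hsq, hnn]
    nlinarith [norm_nonneg (g z)]
  exact lt_of_pow_lt_pow_left₀ 2 hε.le this

end SphIso
end

section
open Set Filter Topology Metric

namespace SphIso

/-- continuous extension of a disc homeo -/
structure DHE (g k : ℂ → ℂ) : Prop extends DH g k where
  cc : ContinuousOn g (closedBall 0 1)

lemma mem_closedBall_cases {z : ℂ} (hz : z ∈ closedBall (0:ℂ) 1) :
    z ∈ ball (0:ℂ) 1 ∨ z ∈ sphere (0:ℂ) 1 := by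
  rw [← ball_union_sphere] at hz; exact hz

lemma closure_ball_one : closure (ball (0:ℂ) 1) = closedBall 0 1 :=
  closure_ball 0 one_ne_zero

lemma nhdsWithin_ball_neBot {z : ℂ} (hz : z ∈ closedBall (0:ℂ) 1) : (𝓝[ball (0:ℂ) 1] z).NeBot := by
  rw [← mem_closure_iff_nhdsWithin_neBot, closure_ball_one]; exact hz

lemma DHE.tendsto {g k : ℂ → ℂ} (H : DHE g k) {z : ℂ} (hz : z ∈ closedBall (0:ℂ) 1) :
    Tendsto g (𝓝[ball (0:ℂ) 1] z) (𝓝 (g z)) :=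
  (H.cc z hz).mono_left (nhdsWithin_mono _ ball_subset_closedBall)

lemma DHE.sphere_maps {g k : ℂ → ℂ} (H : DHE g k) : MapsTo g (sphere (0:ℂ) 1) (sphere (0:ℂ) 1) := by
  intro ζ hζ
  have hζc := sphere_subset_closedBall hζ
  have hζn : ‖ζ‖ = 1 := by simpa using hζ
  have := nhdsWithin_ball_neBot hζc
  have ht := (H.tendsto hζc).norm
  rw [mem_sphere_zero_iff_norm]
  apply le_antisymm
  · apply le_of_tendsto ht
    filter_upwards [self_mem_nhdsWithin] with z hz
    simpa using (mem_ball_zero_iff.1 (H.mg hz)).le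
  · apply le_of_forall_lt
    intro r hr
    obtain ⟨r', hr1, hr2⟩ := exists_between hr
    obtain ⟨s, hs, hsp⟩ := H.proper hr2
    refine hr1.trans_le (ge_of_tendsto ht ?_)
    have : ∀ᶠ z in 𝓝[ball (0:ℂ) 1] ζ, s < ‖z‖ :=
      nhdsWithin_le_nhds (continuous_norm.continuousAt.eventually_const_lt (by simpa [hζn] using hs))
    filter_upwards [self_mem_nhdsWithin, this] with z hz hz2
    exact (hsp z hz hz2).le

lemma DHE.surj {g k : ℂ → ℂ} (H : DHE g k) : SurjOn g (closedBall (0:ℂ) 1) (closedBall (0:ℂ) 1) := by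
  have hc : IsClosed (g '' closedBall 0 1) :=
    ((isCompact_closedBall 0 1).image_of_continuousOn H.cc).isClosed
  rw [SurjOn, ← closure_ball_one]
  apply closure_minimal _ (by rwa [closure_ball_one])
  intro z hz
  rw [closure_ball_one]
  exact ⟨k z, ball_subset_closedBall (H.mk2 hz), H.gk z hz⟩

lemma sphere_diff_preconnected {p : ℂ} (hp : ‖p‖ = 1) : IsPreconnected (sphere (0:ℂ) 1 \ {p}) := by
  have hp0 : p ≠ 0 := by intro h; simp [h] at hp
  have : sphere (0:ℂ) 1 \ {p} = (fun θ : ℝ => p * Complex.exp (θ * Complex.I)) '' Ioo 0 (2 * Real.pi) := by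
    ext q
    constructor
    · rintro ⟨hq, hqp⟩
      have hq1 : ‖q‖ = 1 := by simpa using hq
      have hx : ‖q / p‖ = 1 := by rw [norm_div, hq1, hp, div_one]
      have hpq : q = p * (q / p) := by field_simp
      have harg : Complex.exp ((q / p).arg * Complex.I) = q / p := by
        have := Complex.norm_mul_exp_arg_mul_I (q / p)
        rwa [hx, Complex.ofReal_one, one_mul] at this
      have hne : (q / p).arg ≠ 0 := by
        intro h0
        rw [h0] at harg
        simp at harg
        apply hqp
        rw [hpq, ← harg, mul_one]
        rfl
      rcases lt_or_gt_of_ne hne with hlt | hgt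
      · refine ⟨(q / p).arg + 2 * Real.pi, ⟨?_, by linarith⟩, ?_⟩
        · have := Complex.neg_pi_lt_arg (q / p); linarith
        · simp only
          push_cast
          rw [add_mul, Complex.exp_add, harg, Complex.exp_two_pi_mul_I, mul_one, ← hpq]
      · refine ⟨(q / p).arg, ⟨hgt, ?_⟩, ?_⟩
        · have := Complex.arg_le_pi (q / p); have := Real.pi_pos; linarith
        · simp only
          rw [harg, ← hpq]
    · rintro ⟨θ, hθ, rfl⟩
      refine ⟨by simp [hp, Complex.norm_exp_ofReal_mul_I], fun h => ?_⟩
      have h : p * Complex.exp (θ * Complex.I) = p := h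
      have h1 : Complex.exp (θ * Complex.I) = 1 := by
        exact mul_left_cancel₀ hp0 (by rw [h, mul_one])
      rw [Complex.exp_eq_one_iff] at h1
      obtain ⟨n, hn⟩ := h1
      have h2 : (θ : ℂ) = ((n * (2 * Real.pi) : ℝ) : ℂ) := by
        apply mul_right_cancel₀ Complex.I_ne_zero
        rw [hn]; push_cast; ring
      have h3 : θ = n * (2 * Real.pi) := by exact_mod_cast h2
      have hpi := Real.pi_pos
      rw [h3] at hθ
      have h4 : (0:ℝ) < n := by
        by_contra! hh
        have := hθ.1
        nlinarith
      have h5 : (n:ℝ) < 1 := by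
        by_contra! hh
        have := hθ.2
        nlinarith
      have : 0 < n := by exact_mod_cast h4
      have : n < 1 := by exact_mod_cast h5
      omega
  rw [this]
  exact isPreconnected_Ioo.image _ (Continuous.continuousOn (by fun_prop))

/-- A function holomorphic in the disc, continuous on closure, without zeros in the disc cannot vanish
on an open arc -/
lemma no_arc_zero {F : ℂ → ℂ} (hc : ContinuousOn F (closedBall 0 1))
    (hd : DifferentiableOn ℂ F (ball 0 1)) (h0 : F 0 ≠ 0) {ξ : ℂ} (hξ : ‖ξ‖ = 1) {r : ℝ} (hr : 0 < r)
    (hz : ∀ z ∈ sphere (0:ℂ) 1, z ∈ ball ξ r → F z = 0) : False := by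
  have hξ0 : ξ ≠ 0 := by intro h; simp [h] at hξ
  obtain ⟨t, hts, htc⟩ := (isCompact_sphere (0:ℂ) 1).elim_nhds_subcover
    (fun η => (fun z => ξ / η * z) ⁻¹' ball ξ r) (fun η hη => by
      have hη0 : η ≠ 0 := by intro h; simp [h] at hη
      apply IsOpen.mem_nhds (isOpen_ball.preimage (by fun_prop))
      simp [hη0, hr])
  have hrot : ∀ η ∈ t, ∀ z, ‖ξ / η * z‖ = ‖z‖ := by
    intro η hη z
    have : ‖η‖ = 1 := by simpa using hts η hη
    rw [norm_mul, norm_div, this, hξ]; simp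
  set P : ℂ → ℂ := fun z => ∏ η ∈ t, F (ξ / η * z) with hP
  have hPd : DiffContOnCl ℂ P (ball 0 1) := by
    constructor
    · apply DifferentiableOn.fun_finsetProd
      intro η hη
      apply hd.comp (by fun_prop)
      intro z hz
      rw [mem_ball_zero_iff, hrot η hη]; simpa using hz
    · rw [closure_ball_one]
      apply continuousOn_finsetProd
      intro η hη
      apply hc.comp (by fun_prop)
      intro z hz
      rw [mem_closedBall_zero_iff, hrot η hη]; simpa using hz
  have hle := Complex.norm_le_of_forall_mem_frontier_norm_le (C := 0) isBounded_ball hPd (by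
    intro z hz'
    rw [frontier_ball _ one_ne_zero] at hz'
    obtain ⟨η, hη, hzη⟩ := mem_iUnion₂.1 (htc hz')
    rw [norm_le_zero_iff]
    apply Finset.prod_eq_zero hη
    apply hz _ _ hzη
    rw [mem_sphere_zero_iff_norm, hrot η hη]; simpa using hz') (subset_closure (mem_ball_self one_pos))
  rw [norm_le_zero_iff, Finset.prod_eq_zero_iff] at hle
  obtain ⟨η, _, h⟩ := hle
  simp at h
  exact h0 h

/-- chord side function -/
def side (a b : ℂ) (z : ℂ) : ℝ := ((z - a) * (starRingEnd ℂ) (b - a)).im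

lemma side_cont (a b : ℂ) : Continuous (side a b) := by unfold side; fun_prop

lemma side_swap (a b z : ℂ) : side b a z = - side a b z := by
  simp [side]; ring

lemma side_zero {a b z : ℂ} (ha : ‖a‖ = 1) (hb : ‖b‖ = 1) (hz : ‖z‖ = 1) (hab : a ≠ b)
    (h : side a b z = 0) : z = a ∨ z = b := by
  by_contra! hcon
  have hba : b - a ≠ 0 := sub_ne_zero.2 (Ne.symm hab)
  -- z = a + t (b-a)
  have hn : Complex.normSq (b - a) ≠ 0 := by simpa using hba
  set t : ℝ := ((z - a) * (starRingEnd ℂ) (b - a)).re / Complex.normSq (b - a) with ht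
  have h1 : (z - a) * (starRingEnd ℂ) (b - a) = (((z - a) * (starRingEnd ℂ) (b - a)).re : ℂ) := by
    apply Complex.ext
    · simp
    · rw [Complex.ofReal_im]; exact h
  have hz' : z - a = t * (b - a) := by
    have hnc : (Complex.normSq (b - a) : ℂ) ≠ 0 := by exact_mod_cast hn
    apply mul_right_cancel₀ hnc
    calc (z - a) * (Complex.normSq (b - a) : ℂ) = ((z - a) * (starRingEnd ℂ) (b - a)) * (b - a) := by
          rw [Complex.normSq_eq_conj_mul_self]; ring
      _ = _ := by
          rw [h1, ht]; push_cast; field_simp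
  have e1 : a.re * a.re + a.im * a.im = 1 := by
    rw [← Complex.normSq_apply, Complex.normSq_eq_norm_sq, ha]; norm_num
  have e2 : b.re * b.re + b.im * b.im = 1 := by
    rw [← Complex.normSq_apply, Complex.normSq_eq_norm_sq, hb]; norm_num
  have e3 : z.re * z.re + z.im * z.im = 1 := by
    rw [← Complex.normSq_apply, Complex.normSq_eq_norm_sq, hz]; norm_num
  have r1 : z.re = a.re + t * (b.re - a.re) := by
    have := congrArg Complex.re hz'; simp at this; linarith
  have r2 : z.im = a.im + t * (b.im - a.im) := by
    have := congrArg Complex.im hz'; simp at this; linarith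
  rw [Complex.normSq_apply] at hn
  simp only [Complex.sub_re, Complex.sub_im] at hn
  have h5 : t * (t - 1) * ((b.re - a.re) * (b.re - a.re) + (b.im - a.im) * (b.im - a.im)) = 0 := by
    rw [r1, r2] at e3
    linear_combination e3 - (1 - t) * e1 - t * e2
  rcases mul_eq_zero.1 ((mul_eq_zero.1 h5).resolve_right hn) with h6 | h6
  · apply hcon.1
    rw [h6] at hz'; simp at hz'; exact sub_eq_zero.1 hz'
  · apply hcon.2
    have : t = 1 := by linarith
    rw [this] at hz'; simp at hz'; exact hz'

lemma side_neg_exists {a b : ℂ} (ha : ‖a‖ = 1) (hb : ‖b‖ = 1) (hab : a ≠ b) :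
    ∃ ξ : ℂ, ‖ξ‖ = 1 ∧ side a b ξ < 0 := by
  have hba : b - a ≠ 0 := sub_ne_zero.2 (Ne.symm hab)
  have hd : 0 < ‖b - a‖ := norm_pos_iff.2 hba
  set d := ‖b - a‖ with hdd
  have hdc : (d : ℂ) ≠ 0 := by exact_mod_cast hd.ne'
  refine ⟨-Complex.I * ((b - a) / d), ?_, ?_⟩
  · rw [norm_mul, norm_div, Complex.norm_real, ← hdd]
    simp [abs_of_pos hd, hd.ne']
  · have e1 : a.re * a.re + a.im * a.im = 1 := by
      rw [← Complex.normSq_apply, Complex.normSq_eq_norm_sq, ha]; norm_num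
    have e2 : b.re * b.re + b.im * b.im = 1 := by
      rw [← Complex.normSq_apply, Complex.normSq_eq_norm_sq, hb]; norm_num
    have e3 : (b.re - a.re) * (b.re - a.re) + (b.im - a.im) * (b.im - a.im) = d ^ 2 := by
      rw [hdd, ← Complex.normSq_eq_norm_sq, Complex.normSq_apply]; simp
    have hs : side a b (-Complex.I * ((b - a) / d)) = - d - (a * (starRingEnd ℂ) b).im := by
      have : (-Complex.I * ((b - a) / d) - a) * (starRingEnd ℂ) (b - a)
          = -Complex.I * d - a * (starRingEnd ℂ) b + Complex.normSq a := by
        have h1 : (b - a) * (starRingEnd ℂ) (b - a) = (d : ℂ) ^ 2 := by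
          rw [Complex.mul_conj, Complex.normSq_eq_norm_sq]; push_cast; rfl
        have h2 : a * (starRingEnd ℂ) a = Complex.normSq a := Complex.mul_conj a
        have h3 : -Complex.I * ((b - a) / d) * (starRingEnd ℂ) (b - a) = -Complex.I * d := by
          rw [mul_assoc, div_mul_eq_mul_div, h1]; field_simp
        rw [sub_mul, h3, ← h2, map_sub]; ring
      rw [side, this]; simp
    rw [hs]
    have e4 : (a * (starRingEnd ℂ) b).im = a.im * b.re - a.re * b.im := by simp; ring
    rw [e4]
    set s := a.im * b.re - a.re * b.im
    set c := a.re * b.re + a.im * b.im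
    have h1 : c ^ 2 + s ^ 2 = 1 := by
      simp only [s, c]
      linear_combination (b.re ^ 2 + b.im ^ 2) * e1 + e2
    have h2 : d ^ 2 = 2 - 2 * c := by
      simp only [c]
      linear_combination -e3 + e1 + e2
    have h3 : s ^ 2 < d ^ 2 := by nlinarith [pow_pos hd 2, sq_nonneg (1 - c)]
    have := abs_lt_of_sq_lt_sq h3 hd.le
    linarith [(abs_lt.1 this).1]

lemma DHE.not_same {g k : ℂ → ℂ} (H : DHE g k) {a b : ℂ} (ha : ‖a‖ = 1) (hb : ‖b‖ = 1) (hab : a ≠ b)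
    (hp : g a = g b)
    (harc : ∀ ξ : ℂ, ‖ξ‖ = 1 → ∀ r > 0, ∃ z ∈ sphere (0:ℂ) 1, z ∈ ball ξ r ∧ g z ≠ g a) : False := by
  have hp1 : ‖g a‖ = 1 := by simpa using H.sphere_maps (show a ∈ sphere (0:ℂ) 1 by simpa using ha)
  -- main half argument
  have half : ∀ a' b' : ℂ, ‖a'‖ = 1 → ‖b'‖ = 1 → a' ≠ b' →
      (∀ q ∈ sphere (0:ℂ) 1 \ {g a}, ∀ᶠ z in 𝓝[ball (0:ℂ) 1] q, 0 < side a' b' (k z)) → False := by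
    intro a' b' ha' hb' hab' hq
    obtain ⟨ξ, hξ, hξs⟩ := side_neg_exists ha' hb' hab'
    obtain ⟨r, hr, hrs⟩ := Metric.isOpen_iff.1 (isOpen_Iio.preimage (side_cont a' b')) ξ hξs
    obtain ⟨z, hz, hzr, hzne⟩ := harc ξ hξ r hr
    have hzc := sphere_subset_closedBall hz
    have h1 := hq (g z) ⟨H.sphere_maps hz, hzne⟩
    have := nhdsWithin_ball_neBot hzc
    have ht : Tendsto g (𝓝[ball (0:ℂ) 1] z) (𝓝[ball (0:ℂ) 1] (g z)) := by
      refine tendsto_nhdsWithin_iff.2 ⟨H.tendsto hzc, ?_⟩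
      filter_upwards [self_mem_nhdsWithin] with w hw using H.mg hw
    have h2 := ht.eventually h1
    have h3 : ∀ᶠ w in 𝓝[ball (0:ℂ) 1] z, side a' b' w < 0 :=
      nhdsWithin_le_nhds ((isOpen_Iio.preimage (side_cont a' b')).mem_nhds (hrs hzr))
    obtain ⟨w, hw, hw2, hw3⟩ := (h2.and (h3.and self_mem_nhdsWithin)).exists
    rw [H.kg w hw3] at hw
    linarith
  -- compact chord image
  have hLc : IsClosed (g '' (closedBall 0 1 ∩ {z | side a b z = 0})) := by
    apply IsCompact.isClosed
    apply IsCompact.image_of_continuousOn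
    · exact (isCompact_closedBall 0 1).inter_right (isClosed_eq (side_cont a b) continuous_const)
    · exact H.cc.mono inter_subset_left
  have hcov : ∀ q ∈ sphere (0:ℂ) 1 \ {g a}, (∃ r > 0, ∀ z ∈ ball q r ∩ ball (0:ℂ) 1, 0 < side a b (k z)) ∨
      (∃ r > 0, ∀ z ∈ ball q r ∩ ball (0:ℂ) 1, side a b (k z) < 0) := by
    rintro q ⟨hq, hqp⟩
    have hqL : q ∈ (g '' (closedBall 0 1 ∩ {z | side a b z = 0}))ᶜ := by
      rintro ⟨w, ⟨hw, hws⟩, rfl⟩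
      rcases mem_closedBall_cases hw with h | h
      · have h1 := H.mg h
        rw [mem_ball_zero_iff] at h1
        rw [mem_sphere_zero_iff_norm] at hq
        linarith
      · rcases side_zero ha hb (by simpa using h) hab hws with rfl | rfl
        · exact hqp rfl
        · exact hqp hp.symm
    obtain ⟨r, hr, hrs⟩ := Metric.isOpen_iff.1 hLc.isOpen_compl q hqL
    have hconv : IsPreconnected (k '' (ball q r ∩ ball (0:ℂ) 1)) :=
      ((convex_ball q r).inter (convex_ball 0 1)).isPreconnected.image k (H.ck.mono inter_subset_right)
    have hne : ∀ w ∈ k '' (ball q r ∩ ball (0:ℂ) 1), side a b w ≠ 0 := by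
      rintro _ ⟨w, hw, rfl⟩ h0
      exact hrs hw.1 ⟨k w, ⟨ball_subset_closedBall (H.mk2 hw.2), h0⟩, H.gk w hw.2⟩
    by_cases hall : ∀ z ∈ ball q r ∩ ball (0:ℂ) 1, 0 < side a b (k z)
    · exact Or.inl ⟨r, hr, hall⟩
    · push Not at hall
      obtain ⟨z, hz, hzs⟩ := hall
      refine Or.inr ⟨r, hr, fun w hw => ?_⟩
      by_contra! hcon
      obtain ⟨y, hy, hy0⟩ := hconv.intermediate_value ⟨z, hz, rfl⟩ ⟨w, hw, rfl⟩
        (side_cont a b).continuousOn (show (0:ℝ) ∈ Icc _ _ from ⟨hzs, hcon⟩)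
      exact hne y hy hy0
  have hopen : ∀ P : ℂ → Prop, IsOpen {q : ℂ | ∃ r > 0, ∀ z ∈ ball q r ∩ ball (0:ℂ) 1, P z} := by
    intro P
    rw [Metric.isOpen_iff]
    rintro q ⟨r, hr, hrs⟩
    refine ⟨r / 2, by linarith, fun q' hq' => ⟨r / 2, by linarith, fun z hz => hrs z ⟨?_, hz.2⟩⟩⟩
    have h1 := hz.1
    rw [mem_ball] at hq' h1 ⊢
    have := dist_triangle z q' q
    linarith
  have hconn := sphere_diff_preconnected hp1
  have hev : ∀ (P : ℂ → Prop) (q : ℂ), (∃ r > 0, ∀ z ∈ ball q r ∩ ball (0:ℂ) 1, P z) →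
      ∀ᶠ z in 𝓝[ball (0:ℂ) 1] q, P z := by
    rintro P q ⟨r, hr, hrs⟩
    rw [eventually_nhdsWithin_iff]
    filter_upwards [ball_mem_nhds q hr] with z hz hz2 using hrs z ⟨hz, hz2⟩
  by_cases hpos : ∀ q ∈ sphere (0:ℂ) 1 \ {g a}, ∃ r > 0, ∀ z ∈ ball q r ∩ ball (0:ℂ) 1, 0 < side a b (k z)
  · exact half a b ha hb hab (fun q hq => hev _ q (hpos q hq))
  · push Not at hpos
    obtain ⟨q0, hq0, hq0'⟩ := hpos
    apply half b a hb ha hab.symm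
    intro q hq
    rcases hcov q hq with h | h
    · exfalso
      have h0 : ∃ r > 0, ∀ z ∈ ball q0 r ∩ ball (0:ℂ) 1, side a b (k z) < 0 := by
        rcases hcov q0 hq0 with h' | h'
        · obtain ⟨r, hr, hrs⟩ := h'
          obtain ⟨z, hz, hz'⟩ := hq0' r hr
          exact absurd (hrs z hz) (not_lt.2 hz')
        · exact h'
      obtain ⟨y, hy, hy1, hy2⟩ := hconn _ _ (hopen fun z => 0 < side a b (k z)) (hopen fun z => side a b (k z) < 0)
        (fun q hq => hcov q hq) ⟨q, hq, h⟩ ⟨q0, hq0, h0⟩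
      have := nhdsWithin_ball_neBot (sphere_subset_closedBall hy.1)
      obtain ⟨w, hw1, hw2⟩ := ((hev _ y hy1).and (hev _ y hy2)).exists
      exact lt_asymm hw1 hw2
    · filter_upwards [hev _ q h] with z hz
      rw [side_swap]; linarith

theorem caratheodory (h : ℂ ≃ₜ ℂ) : ∃ g : ℂ → ℂ, ContinuousOn g (closedBall 0 1) ∧
    BijOn g (closedBall 0 1) (closedBall 0 1) ∧ MapsTo g (sphere 0 1) (sphere 0 1) ∧
    MapsTo g (ball 0 1) (ball 0 1) ∧ ∃ c : ℂ, c ≠ 0 ∧ HasDerivAt (h ∘ g) c 0 := by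
  set U := h '' ball (0:ℂ) 1 with hU
  have hUo : IsOpen U := h.isOpenMap _ isOpen_ball
  have hUs : IsSimplyConnected U := by
    rw [hU, Homeomorph.isSimplyConnected_image]
    have := (convex_ball (0:ℂ) 1).contractibleSpace ⟨0, by simp⟩
    exact (inferInstance : SimplyConnectedSpace (ball (0:ℂ) 1))
  have hUc : IsCompact (h '' closedBall (0:ℂ) 1) := (isCompact_closedBall 0 1).image h.continuous
  have hUb : Bornology.IsBounded U := hUc.isBounded.subset (image_mono ball_subset_closedBall)
  obtain ⟨φ, f, hφd, hfd, hφm, hfm, hfφ, hφf⟩ := rmt hUo hUs hUb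
  have hsymm : ∀ w ∈ U, h.symm w ∈ ball (0:ℂ) 1 := by
    rintro _ ⟨z, hz, rfl⟩; simpa using hz
  set g0 : ℂ → ℂ := fun z => h.symm (φ z) with hg0
  set k : ℂ → ℂ := fun z => f (h z) with hk
  have H0 : DH g0 k := by
    constructor
    · exact h.symm.continuous.comp_continuousOn hφd.continuousOn
    · exact hfd.continuousOn.comp h.continuous.continuousOn (mapsTo_image _ _)
    · intro z hz; exact hsymm _ (hφm hz)
    · intro z hz; exact hfm (mem_image_of_mem _ hz)
    · intro z hz; simp only [hg0, hk]; rw [hφf _ (mem_image_of_mem _ hz)]; simp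
    · intro z hz; simp only [hg0, hk]; simp [hfφ z hz]
  have hφi : InjOn φ (ball 0 1) := fun z hz w hw e => by rw [← hfφ z hz, e, hfφ w hw]
  have hφb : Bornology.IsBounded (φ '' ball 0 1) := hUb.subset hφm.image_subset
  have huc : UniformContinuousOn h.symm (h '' closedBall (0:ℂ) 1) :=
    hUc.uniformContinuousOn_of_continuous h.symm.continuous.continuousOn
  have hlim : ∀ ζ ∈ closedBall (0:ℂ) 1, ∃ y, Tendsto g0 (𝓝[ball (0:ℂ) 1] ζ) (𝓝 y) := by
    intro ζ hζ
    rcases mem_closedBall_cases hζ with hζ' | hζ'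
    · exact ⟨_, H0.cg ζ hζ'⟩
    have hζ1 : ‖ζ‖ = 1 := by simpa using hζ'
    have := nhdsWithin_ball_neBot hζ
    rw [← cauchy_map_iff_exists_tendsto, Metric.cauchy_iff]
    refine ⟨inferInstance, fun ε hε => ?_⟩
    obtain ⟨δ, hδ, n, hn⟩ := H0.cauchy hζ1 (fun ε hε ρ₀ hρ₀ => by
      obtain ⟨ε', hε', hu⟩ := Metric.uniformContinuousOn_iff_le.1 huc ε hε
      obtain ⟨ρ, h1, h2, h3⟩ := crosscut hφd hφi hφb hζ1 hε' hρ₀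
      refine ⟨ρ, h1, h2, fun z hz z' hz' e e' => ?_⟩
      exact hu _ (image_mono ball_subset_closedBall (hφm hz)) _
        (image_mono ball_subset_closedBall (hφm hz')) (h3 z hz z' hz' e e')) (half_pos hε)
    refine ⟨ball n (ε / 2), ?_, ?_⟩
    · rw [mem_map, mem_nhdsWithin_iff_exists_mem_nhds_inter]
      exact ⟨ball ζ δ, ball_mem_nhds _ hδ, fun z hz => hn z hz.2 hz.1⟩
    · intro x hx y hy
      have := dist_triangle_right x y n
      rw [mem_ball] at hx hy
      linarith
  set g := extendFrom (ball (0:ℂ) 1) g0 with hg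
  have hgc : ContinuousOn g (closedBall 0 1) :=
    continuousOn_extendFrom (by rw [closure_ball_one]) hlim
  have hgg : ∀ z ∈ ball (0:ℂ) 1, g z = g0 z := fun z hz =>
    extendFrom_eq (subset_closure hz) (H0.cg z hz)
  have H : DHE g k := by
    constructor
    · constructor
      · exact hgc.mono ball_subset_closedBall
      · exact H0.ck
      · intro z hz; rw [hgg z hz]; exact H0.mg hz
      · exact H0.mk2
      · intro z hz; rw [hgg _ (H0.mk2 hz)]; exact H0.gk z hz
      · intro z hz; rw [hgg _ hz]; exact H0.kg z hz
    · exact hgc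
  have hhg : ∀ z ∈ ball (0:ℂ) 1, h (g z) = φ z := by
    intro z hz; rw [hgg z hz]; simp [hg0]
  have hmt : MapsTo g (closedBall 0 1) (closedBall 0 1) := by
    intro z hz
    rcases mem_closedBall_cases hz with h | h
    · exact ball_subset_closedBall (H.mg h)
    · exact sphere_subset_closedBall (H.sphere_maps h)
  refine ⟨g, hgc, ⟨hmt, ?_, H.surj⟩, H.sphere_maps, H.mg, ?_⟩
  · have hsep : ∀ z w, z ∈ ball (0:ℂ) 1 → w ∈ sphere (0:ℂ) 1 → g z ≠ g w := by
      intro z w hz hw e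
      have h1 := H.mg hz
      have h2 := H.sphere_maps hw
      rw [e, mem_ball_zero_iff] at h1
      rw [mem_sphere_zero_iff_norm] at h2
      linarith
    intro z hz w hw e
    rcases mem_closedBall_cases hz with h1 | h1 <;> rcases mem_closedBall_cases hw with h2 | h2
    · rw [← H.kg z h1, e, H.kg w h2]
    · exact absurd e (hsep z w h1 h2)
    · exact absurd e.symm (hsep w z h2 h1)
    · by_contra hne
      apply H.not_same (by simpa using h1) (by simpa using h2) hne e
      intro ξ hξ r hr
      by_contra! hcon
      refine no_arc_zero (F := fun x => h (g x) - h (g z)) ?_ ?_ ?_ hξ hr ?_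
      · exact (h.continuous.comp_continuousOn hgc).sub continuousOn_const
      · have : DifferentiableOn ℂ (fun x => φ x - h (g z)) (ball 0 1) := hφd.sub_const _
        refine this.congr fun x hx => ?_
        rw [hhg x hx]
      · rw [sub_ne_zero]
        exact fun e0 => hsep 0 z (by simp) h1 (h.injective e0)
      · intro x hx hxr
        rw [sub_eq_zero, hcon x hx hxr]
  · have h0 : (0:ℂ) ∈ ball (0:ℂ) 1 := by simp
    have hd : HasDerivAt φ (deriv φ 0) 0 := (hφd.differentiableAt (isOpen_ball.mem_nhds h0)).hasDerivAt
    refine ⟨deriv φ 0, ?_, ?_⟩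
    · intro hz
      have hf : HasDerivAt f (deriv f (φ 0)) (φ 0) :=
        (hfd.differentiableAt (hUo.mem_nhds (hφm h0))).hasDerivAt
      have h1 := hf.comp 0 hd
      have h2 : HasDerivAt (f ∘ φ) 1 0 := by
        refine (hasDerivAt_id (0:ℂ)).congr_of_eventuallyEq ?_
        filter_upwards [isOpen_ball.mem_nhds h0] with z hz using hfφ z hz
      have := h1.unique h2
      rw [hz] at this; simp at this
    · refine hd.congr_of_eventuallyEq ?_
      filter_upwards [isOpen_ball.mem_nhds h0] with z hz using hhg z hz

end SphIso
end

section
open Set Filter Topology Metric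

namespace SphIso
open unitInterval

/-- isotopy through continuous bijections -/
def SI {X : Type*} [TopologicalSpace X] (f g : X → X) : Prop :=
  ∃ F : I × X → X, Continuous F ∧ (∀ x, F (0, x) = f x) ∧ (∀ x, F (1, x) = g x) ∧
    ∀ t, Function.Bijective fun x => F (t, x)

section
variable {X Y : Type*} [TopologicalSpace X] [TopologicalSpace Y]

lemma SI.refl {f : X → X} (hf : Continuous f) (hb : Function.Bijective f) : SI f f :=
  ⟨fun p => f p.2, by fun_prop, fun _ => rfl, fun _ => rfl, fun _ => hb⟩

lemma SI.symm {f g : X → X} (h : SI f g) : SI g f := by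
  obtain ⟨F, hc, h0, h1, hb⟩ := h
  exact ⟨fun p => F (σ p.1, p.2), by fun_prop, by simpa using h1, by simpa using h0, fun t => hb (σ t)⟩

lemma SI.trans {f g h : X → X} (h1 : SI f g) (h2 : SI g h) : SI f h := by
  obtain ⟨F, Fc, F0, F1, Fb⟩ := h1
  obtain ⟨G, Gc, G0, G1, Gb⟩ := h2
  have cf : Continuous f := by
    have : f = fun x => F (0, x) := by ext x; rw [F0]
    rw [this]; fun_prop
  have cg : Continuous g := by
    have : g = fun x => F (1, x) := by ext x; rw [F1]
    rw [this]; fun_prop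
  have ch : Continuous h := by
    have : h = fun x => G (1, x) := by ext x; rw [G1]
    rw [this]; fun_prop
  let F' : ContinuousMap.Homotopy ⟨f, cf⟩ ⟨g, cg⟩ := ⟨⟨F, Fc⟩, F0, F1⟩
  let G' : ContinuousMap.Homotopy ⟨g, cg⟩ ⟨h, ch⟩ := ⟨⟨G, Gc⟩, G0, G1⟩
  refine ⟨F'.trans G', by fun_prop, fun x => by simp, fun x => by simp, fun t => ?_⟩
  simp only [ContinuousMap.Homotopy.trans_apply]
  split_ifs with ht
  · exact Fb ⟨2 * t, (unitInterval.mul_pos_mem_iff zero_lt_two).2 ⟨t.2.1, ht⟩⟩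
  · exact Gb ⟨2 * t - 1, unitInterval.two_mul_sub_one_mem_iff.2 ⟨(not_le.1 ht).le, t.2.2⟩⟩

lemma SI.comp {f f' g g' : X → X} (h1 : SI f f') (h2 : SI g g') : SI (f ∘ g) (f' ∘ g') := by
  obtain ⟨F, Fc, F0, F1, Fb⟩ := h1
  obtain ⟨G, Gc, G0, G1, Gb⟩ := h2
  refine ⟨fun p => F (p.1, G p), by fun_prop, fun x => by simp [F0, G0], fun x => by simp [F1, G1], fun t => ?_⟩
  exact (Fb t).comp (Gb t)

lemma SI.conj {f g : X → X} (h : SI f g) (e : X ≃ₜ Y) : SI (e ∘ f ∘ e.symm) (e ∘ g ∘ e.symm) := by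
  obtain ⟨F, Fc, F0, F1, Fb⟩ := h
  refine ⟨fun p => e (F (p.1, e.symm p.2)), by fun_prop, fun x => by simp [F0], fun x => by simp [F1], fun t => ?_⟩
  exact e.bijective.comp ((Fb t).comp e.symm.bijective)
end

/-- isotopy of plane homeos, extended to the Riemann sphere -/
def PSI (f g : ℂ → ℂ) : Prop := SI (OnePoint.map f) (OnePoint.map g)

lemma onePoint_map_bij {f : ℂ → ℂ} (hf : Function.Bijective f) : Function.Bijective (OnePoint.map f) :=
  ⟨Option.map_injective hf.1, by
    intro y
    induction y using OnePoint.rec with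
    | infty => exact ⟨OnePoint.infty, rfl⟩
    | coe y =>
      obtain ⟨x, rfl⟩ := hf.2 y
      exact ⟨(x : OnePoint ℂ), rfl⟩⟩

lemma PSI.mk {f g : ℂ → ℂ} (F : I × ℂ → ℂ) (hc : Continuous F) (h0 : ∀ z, F (0, z) = f z)
    (h1 : ∀ z, F (1, z) = g z) (hb : ∀ t, Function.Bijective fun z => F (t, z))
    (hp : ∀ R : ℝ, ∃ M : ℝ, ∀ t z, M ≤ ‖z‖ → R ≤ ‖F (t, z)‖) : PSI f g := by
  refine ⟨fun p => OnePoint.map (fun z => F (p.1, z)) p.2, ?_, ?_, ?_, fun t => onePoint_map_bij (hb t)⟩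
  · rw [continuous_iff_continuousAt]
    rintro ⟨t, x⟩
    induction x using OnePoint.rec with
    | infty =>
      rw [ContinuousAt]
      simp only [OnePoint.map_infty]
      rw [OnePoint.hasBasis_nhds_infty.tendsto_right_iff]
      rintro s ⟨hs, hsc⟩
      obtain ⟨R, hR⟩ := hsc.isBounded.subset_ball 0
      obtain ⟨M, hM⟩ := hp R
      have hmem : {x : OnePoint ℂ | ∀ z : ℂ, x = z → M ≤ ‖z‖} ∈ 𝓝 (OnePoint.infty : OnePoint ℂ) := by
        rw [OnePoint.hasBasis_nhds_infty.mem_iff]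
        refine ⟨closedBall 0 M, ⟨isClosed_closedBall, isCompact_closedBall 0 M⟩, ?_⟩
        rintro x (⟨w, hw, rfl⟩ | hx) z hz
        · have : w = z := by simpa using hz
          subst this
          have : ¬ ‖w‖ ≤ M := by simpa using hw
          linarith
        · rw [hx] at hz; simp at hz
      filter_upwards [prod_mem_nhds univ_mem hmem] with p hp
      obtain ⟨t', x⟩ := p
      induction x using OnePoint.rec with
      | infty => right; rfl
      | coe z =>
        left
        refine ⟨F (t', z), ?_, rfl⟩
        intro hin
        have h1 := hM t' z (hp.2 z rfl)
        have h2 := hR hin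
        rw [mem_ball_zero_iff] at h2
        linarith
    | coe z =>
      have hoe : IsOpenEmbedding (Prod.map id ((↑) : ℂ → OnePoint ℂ) : I × ℂ → I × OnePoint ℂ) :=
        IsOpenEmbedding.id.prodMap OnePoint.isOpenEmbedding_coe
      have := hoe.continuousAt_iff (x := (t, z))
        (g := fun p : I × OnePoint ℂ => OnePoint.map (fun z => F (p.1, z)) p.2)
      apply this.1
      have h2 : Continuous (fun p : I × ℂ => ((F p : ℂ) : OnePoint ℂ)) := OnePoint.continuous_coe.comp hc
      exact h2.continuousAt
  · intro x
    have : (fun z => F (0, z)) = f := funext h0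
    simp only [this]
  · intro x
    have : (fun z => F (1, z)) = g := funext h1
    simp only [this]

lemma PSI.symm {f g : ℂ → ℂ} (h : PSI f g) : PSI g f := SI.symm h
lemma PSI.trans {f g k : ℂ → ℂ} (h : PSI f g) (h' : PSI g k) : PSI f k := SI.trans h h'
lemma PSI.comp {f f' g g' : ℂ → ℂ} (h : PSI f f') (h' : PSI g g') : PSI (f ∘ g) (f' ∘ g') := by
  unfold PSI
  rw [OnePoint.map_comp, OnePoint.map_comp]
  exact SI.comp h h'

lemma homeo_proper (e : ℂ ≃ₜ ℂ) (R : ℝ) : ∃ M : ℝ, ∀ z, M ≤ ‖z‖ → R ≤ ‖e z‖ := by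
  have hK : IsCompact (e.symm '' closedBall 0 R) := (isCompact_closedBall 0 R).image e.symm.continuous
  obtain ⟨M, hM⟩ := hK.isBounded.subset_ball 0
  refine ⟨M, fun z hz => ?_⟩
  by_contra! hcon
  have := hM (show z ∈ e.symm '' closedBall 0 R from ⟨e z, by simpa using hcon.le, by simp⟩)
  simp at this
  linarith

lemma PSI.refl (e : ℂ ≃ₜ ℂ) : PSI e e :=
  PSI.mk (fun p => e p.2) (by fun_prop) (fun _ => rfl) (fun _ => rfl) (fun _ => e.bijective)
    (fun R => by obtain ⟨M, hM⟩ := homeo_proper e R; exact ⟨M, fun t z h => hM z h⟩)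

lemma mkHomeo {f : ℂ → ℂ} (hc : Continuous f) (hb : Function.Bijective f)
    (hp : ∀ R : ℝ, ∃ M : ℝ, ∀ z, M ≤ ‖z‖ → R ≤ ‖f z‖) : ∃ e : ℂ ≃ₜ ℂ, ⇑e = f := by
  have hpr : IsProperMap f := by
    rw [isProperMap_iff_tendsto_cocompact]
    refine ⟨hc, ?_⟩
    rw [← Metric.cobounded_eq_cocompact, ← tendsto_norm_atTop_iff_cobounded, Filter.tendsto_atTop]
    intro R
    obtain ⟨M, hM⟩ := hp R
    filter_upwards [tendsto_norm_cobounded_atTop.eventually_ge_atTop M] with z hz using hM z hz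
  exact ⟨(Equiv.ofBijective f hb).toHomeomorphOfContinuousClosed hc hpr.isClosedMap, rfl⟩

lemma mul_bij (c : ℂ) (hc : c ≠ 0) : Function.Bijective (fun z : ℂ => c * z) :=
  (Homeomorph.mulLeft₀ c hc).bijective

lemma div_bij (c : ℂ) (hc : c ≠ 0) : Function.Bijective (fun z : ℂ => z / c) := by
  simp only [div_eq_mul_inv]
  exact (Homeomorph.mulRight₀ c⁻¹ (inv_ne_zero hc)).bijective

/-- bounded displacement -/
lemma PSI.bounded (k : ℂ ≃ₜ ℂ) {C : ℝ} (hC : ∀ z, ‖k z - z‖ ≤ C) : PSI k id := by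
  apply PSI.symm
  have hC0 : 0 ≤ C := (norm_nonneg _).trans (hC 0)
  set F : I × ℂ → ℂ := fun p => p.2 + (p.1 : ℝ) * (k (p.2 / (p.1 : ℝ)) - p.2 / (p.1 : ℝ)) with hF
  have hest : ∀ p : I × ℂ, ‖F p - p.2‖ ≤ (p.1 : ℝ) * C := by
    rintro ⟨t, z⟩
    have : F (t, z) - z = (t : ℝ) * (k (z / (t : ℝ)) - z / (t : ℝ)) := by simp [hF]
    simp only
    rw [this, norm_mul, Complex.norm_real, Real.norm_of_nonneg t.2.1]
    exact mul_le_mul_of_nonneg_left (hC _) t.2.1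
  have hest' : ∀ p : I × ℂ, ‖F p - p.2‖ ≤ C := fun p =>
    (hest p).trans (mul_le_of_le_one_left hC0 p.1.2.2)
  refine PSI.mk F ?_ (by simp [hF]) (by simp [hF]) ?_ ?_
  · rw [continuous_iff_continuousAt]
    rintro ⟨t, z⟩
    by_cases ht : (t : ℝ) = 0
    · have hFt : F (t, z) = z := by simp [hF, ht]
      rw [ContinuousAt, hFt]
      have h1 : Tendsto (fun p : I × ℂ => F p - p.2) (𝓝 (t, z)) (𝓝 0) := by
        apply squeeze_zero_norm hest
        have : Continuous fun p : I × ℂ => (p.1 : ℝ) * C := by fun_prop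
        have := this.tendsto (t, z)
        simpa [ht] using this
      have h2 := h1.add (continuous_snd.tendsto (t, z))
      simpa using h2
    · have ht' : ((t : ℝ) : ℂ) ≠ 0 := by exact_mod_cast ht
      have h1 : ContinuousAt (fun p : I × ℂ => p.2 / ((p.1 : ℝ) : ℂ)) (t, z) := by
        exact ContinuousAt.div₀ (f := fun p : I × ℂ => p.2) (g := fun p : I × ℂ => ((p.1 : ℝ) : ℂ)) (by fun_prop) (by fun_prop) ht'
      have h2 : ContinuousAt (fun p : I × ℂ => k (p.2 / ((p.1 : ℝ) : ℂ))) (t, z) :=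
        k.continuous.continuousAt.comp h1
      have h3 : ContinuousAt (fun p : I × ℂ => ((p.1 : ℝ) : ℂ)) (t, z) := by fun_prop
      exact continuousAt_snd.add (h3.mul (h2.sub h1))
  · intro t
    by_cases ht : (t : ℝ) = 0
    · have : (fun z => F (t, z)) = id := by ext z; simp [hF, ht]
      rw [this]; exact Function.bijective_id
    · have ht' : ((t : ℝ) : ℂ) ≠ 0 := by exact_mod_cast ht
      have : (fun z => F (t, z)) = (fun z => ((t : ℝ) : ℂ) * z) ∘ k ∘ (fun z => z / ((t : ℝ) : ℂ)) := by
        ext z; simp [hF]; field_simp; ring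
      rw [this]
      exact (mul_bij _ ht').comp (k.bijective.comp (div_bij _ ht'))
  · intro R
    refine ⟨R + C, fun t z hz => ?_⟩
    have h1 := hest' (t, z)
    have h2 := norm_sub_norm_le z (F (t, z))
    rw [norm_sub_rev] at h2
    simp only at h1
    linarith

lemma PSI.mul {c : ℂ} (hc : c ≠ 0) : PSI (fun z => c * z) id := by
  apply PSI.symm
  refine PSI.mk (fun p => Complex.exp ((p.1 : ℝ) * Complex.log c) * p.2) (by fun_prop) (by simp)
    (by simp [Complex.exp_log hc]) (fun t => mul_bij (Complex.exp ((t : ℝ) * Complex.log c)) (Complex.exp_ne_zero _)) ?_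
  intro R
  refine ⟨|R| * Real.exp ‖Complex.log c‖, fun t z hz => ?_⟩
  rw [norm_mul, Complex.norm_exp]
  have h1 : -‖Complex.log c‖ ≤ (((t : ℝ) : ℂ) * Complex.log c).re := by
    have h2 := (abs_le.1 (Complex.abs_re_le_norm (((t : ℝ) : ℂ) * Complex.log c))).1
    rw [norm_mul, Complex.norm_real, Real.norm_of_nonneg t.2.1] at h2
    have := mul_le_of_le_one_left (norm_nonneg (Complex.log c)) t.2.2
    linarith
  calc R ≤ |R| := le_abs_self R
    _ = Real.exp (-‖Complex.log c‖) * (|R| * Real.exp ‖Complex.log c‖) := by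
      rw [Real.exp_neg]; field_simp
    _ ≤ _ := by gcongr

lemma PSI.of_deriv (f : ℂ ≃ₜ ℂ) {c : ℂ} (hc : c ≠ 0) (hf : HasDerivAt f c 0) : PSI f id := by
  obtain ⟨T, hT⟩ : ∃ T : ℂ ≃ₜ ℂ, ∀ z, T z = z - f 0 := ⟨Homeomorph.subRight (f 0), fun z => rfl⟩
  have hT1 : PSI T id := PSI.bounded T (C := ‖f 0‖) (fun z => by rw [hT]; simp)
  have h1 : PSI (T ∘ f) (id ∘ f) := hT1.comp (PSI.refl f)
  refine PSI.trans h1.symm ?_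
  set q : ℂ → ℂ := dslope f 0 with hq
  have hd : deriv f 0 = c := hf.deriv
  have hqc : Continuous q := by
    rw [continuous_iff_continuousAt]
    intro z
    by_cases hz : z = 0
    · rw [hz]; exact continuousAt_dslope_same.2 hf.differentiableAt
    · exact (continuousAt_dslope_of_ne hz).2 f.continuous.continuousAt
  have hqmul : ∀ w, q w * w = f w - f 0 := by
    intro w
    have := sub_smul_dslope f 0 w
    simp only [sub_zero, smul_eq_mul] at this
    rw [← this, mul_comm]
  have hq0 : ∀ w, q w ≠ 0 := by
    intro w
    by_cases hw : w = 0
    · rw [hw, hq, dslope_same, hd]; exact hc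
    · intro h
      have := hqmul w
      rw [h, zero_mul, eq_comm, sub_eq_zero] at this
      exact hw (f.injective this)
  set F : I × ℂ → ℂ := fun p => q ((p.1 : ℝ) * p.2) * p.2 with hF
  have hFt : ∀ (t : I) (z : ℂ), (t : ℝ) ≠ 0 → F (t, z) = (f ((t : ℝ) * z) - f 0) / (t : ℝ) := by
    intro t z ht
    have ht' : ((t : ℝ) : ℂ) ≠ 0 := by exact_mod_cast ht
    rw [← hqmul, hF]
    field_simp
  have h2 : PSI (fun z => c * z) (T ∘ f) := by
    refine PSI.mk F (by fun_prop) ?_ ?_ ?_ ?_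
    · intro z
      simp [hF, hq, dslope_same, hd]
    · intro z
      rw [hFt _ _ (by simp)]
      simp [hT]
    · intro t
      by_cases ht : (t : ℝ) = 0
      · have : (fun z => F (t, z)) = fun z => c * z := by
          ext z; simp [hF, hq, dslope_same, hd, ht]
        rw [this]; exact mul_bij _ hc
      · have ht' : ((t : ℝ) : ℂ) ≠ 0 := by exact_mod_cast ht
        have : (fun z => F (t, z)) = (fun z => z / ((t : ℝ) : ℂ)) ∘ T ∘ f ∘ (fun z => ((t : ℝ) : ℂ) * z) := by
          ext z; rw [hFt t z ht]; simp [hT]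
        rw [this]
        exact (div_bij _ ht').comp (T.bijective.comp (f.bijective.comp (mul_bij _ ht')))
    · intro R
      obtain ⟨M1, hM1⟩ := homeo_proper (f.trans T) |R|
      set M := max M1 0 with hM
      obtain ⟨w, hw, hmin⟩ := (isCompact_closedBall (0:ℂ) M).exists_isMinOn ⟨0, by simp [hM]⟩
        hqc.norm.continuousOn
      have hm : 0 < ‖q w‖ := norm_pos_iff.2 (hq0 w)
      refine ⟨|R| / ‖q w‖, fun t z hz => (le_abs_self R).trans ?_⟩
      by_cases hin : (((t : ℝ) : ℂ) * z) ∈ closedBall (0:ℂ) M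
      · have h3 : ‖q w‖ ≤ ‖q (((t : ℝ) : ℂ) * z)‖ := hmin hin
        rw [hF]
        simp only
        rw [norm_mul]
        rw [div_le_iff₀ hm] at hz
        nlinarith [norm_nonneg z]
      · have h4 : M < ‖((t : ℝ) : ℂ) * z‖ := by simpa using hin
        have ht : (t : ℝ) ≠ 0 := by
          intro h
          rw [h] at h4
          simp at h4
          have := le_max_right M1 0
          linarith
        have htp : 0 < (t : ℝ) := lt_of_le_of_ne t.2.1 (Ne.symm ht)
        have h5 := hM1 (((t : ℝ) : ℂ) * z) ((le_max_left _ _).trans h4.le)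
        rw [hFt t z ht, norm_div, Complex.norm_real, Real.norm_of_nonneg t.2.1, le_div_iff₀ htp]
        have h6 : (f.trans T) (((t : ℝ) : ℂ) * z) = f (((t : ℝ) : ℂ) * z) - f 0 := by simp [hT]
        rw [h6] at h5
        exact (mul_le_of_le_one_right (abs_nonneg R) t.2.2).trans h5
  exact h2.symm.trans (PSI.mul hc)

end SphIso
end

section
open Set Filter Topology Metric

namespace SphIso
open unitInterval

lemma exp_I_eq_iff (a b : ℝ) : Complex.exp (a * Complex.I) = Complex.exp (b * Complex.I) ↔
    ∃ n : ℤ, a = b + n * (2 * Real.pi) := by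
  rw [Complex.exp_eq_exp_iff_exists_int]
  refine exists_congr fun n => ?_
  constructor
  · intro h
    have : ((a : ℂ)) = ((b + n * (2 * Real.pi) : ℝ) : ℂ) := by
      apply mul_right_cancel₀ Complex.I_ne_zero
      rw [h]; push_cast; ring
    exact_mod_cast this
  · intro h
    rw [h]; push_cast; ring

lemma exists_log_real {g : ℝ → ℂ} (hg : Continuous g) (h0 : ∀ x, g x ≠ 0) :
    ∃ f : ℝ → ℂ, Continuous f ∧ ∀ x, Complex.exp (f x) = g x := by
  have : IsSimplyConnected (univ : Set ℝ) := by
    have := (convex_univ (𝕜 := ℝ) (E := ℝ)).contractibleSpace ⟨0, by simp⟩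
    exact (inferInstance : SimplyConnectedSpace (univ : Set ℝ))
  obtain ⟨f, hf, he⟩ := Complex.exists_continuousOn_eqOn_exp_comp this isOpen_univ hg.continuousOn
    (by rintro ⟨x, _, hx⟩; exact h0 x hx)
  exact ⟨f, continuousOn_univ.1 hf, fun x => he (mem_univ x)⟩

/-- continuous functions with values in a discrete progression are constant -/
lemma const_of_int_valued {f : ℝ → ℝ} (hf : Continuous f) {c : ℝ} (hc : 0 < c)
    (h : ∀ x, ∃ n : ℤ, f x = n * c) : ∃ n : ℤ, ∀ x, f x = n * c := by
  obtain ⟨n, hn⟩ := h 0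
  refine ⟨n, fun x => ?_⟩
  obtain ⟨m, hm⟩ := h x
  by_contra hne
  have key : ∀ a b : ℝ, ∀ p q : ℤ, f a = p * c → f b = q * c → ¬ p < q := by
    intro a b p q ha hb hpq
    have hpq' : (p : ℝ) + 1 ≤ q := by exact_mod_cast hpq
    obtain ⟨y, hy⟩ := mem_range_of_exists_le_of_exists_ge hf
      (c := (p + 1 / 2) * c) ⟨a, by rw [ha]; nlinarith⟩ ⟨b, by rw [hb]; nlinarith⟩
    obtain ⟨r, hr⟩ := h y
    rw [hr] at hy
    have h1 : (r : ℝ) = p + 1 / 2 := mul_right_cancel₀ hc.ne' hy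
    have h2 : ((2 * r : ℤ) : ℝ) = ((2 * p + 1 : ℤ) : ℝ) := by push_cast; linarith
    have h3 : 2 * r = 2 * p + 1 := by exact_mod_cast h2
    omega
  rcases lt_trichotomy n m with h1 | h1 | h1
  · exact key 0 x n m hn hm h1
  · exact hne (by rw [hm, h1])
  · exact key x 0 m n hm hn h1

lemma lift_step {G : ℝ → ℝ} (hc : Continuous G) (hm : StrictMono G)
    (hi : ∀ x y, (∃ n : ℤ, G x = G y + n * (2 * Real.pi)) → ∃ n : ℤ, x = y + n * (2 * Real.pi))
    {n : ℤ} (hn : ∀ x, G (x + 2 * Real.pi) - G x = n * (2 * Real.pi)) :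
    ∀ x, G (x + 2 * Real.pi) = G x + 2 * Real.pi := by
  have hpi := Real.pi_pos
  have h0 := hn 0
  have h1 : G 0 < G (0 + 2 * Real.pi) := hm (by linarith)
  have hn0 : (0:ℝ) < n := by
    by_contra! h; nlinarith
  have hn1 : (n:ℝ) ≤ 1 := by
    by_contra! h
    have h2 : (1:ℤ) < n := by exact_mod_cast h
    have h3 : (2:ℝ) ≤ n := by exact_mod_cast h2
    obtain ⟨y, ⟨hy1, hy2⟩, hy⟩ := intermediate_value_Icc (show (0:ℝ) ≤ 0 + 2 * Real.pi by linarith) hc.continuousOn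
      (show G 0 + 2 * Real.pi ∈ Icc _ _ from ⟨by linarith, by nlinarith⟩)
    obtain ⟨m, hm'⟩ := hi y 0 ⟨1, by rw [hy]; simp⟩
    have hy0 : 0 < y := by
      apply lt_of_le_of_ne hy1
      intro h; rw [← h] at hy; linarith
    have hy2' : y < 2 * Real.pi := by
      apply lt_of_le_of_ne (by linarith)
      intro h
      rw [h] at hy
      rw [zero_add] at h0
      nlinarith
    rw [hm', zero_add] at hy0 hy2'
    have a1 : (0:ℝ) < m := by by_contra! h; nlinarith
    have a2 : (m:ℝ) < 1 := by by_contra! h; nlinarith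
    have : 0 < m := by exact_mod_cast a1
    have : m < 1 := by exact_mod_cast a2
    omega
  have hn2 : (0:ℤ) < n := by exact_mod_cast hn0
  have hn3 : n ≤ 1 := by exact_mod_cast hn1
  have hn4 : n = 1 := by omega
  intro x
  have := hn x
  rw [hn4] at this
  push_cast at this
  linarith

lemma lift_cases {G : ℝ → ℝ} (hc : Continuous G)
    (h2 : ∀ x, ∃ n : ℤ, G (x + 2 * Real.pi) = G x + n * (2 * Real.pi))
    (hi : ∀ x y, (∃ n : ℤ, G x = G y + n * (2 * Real.pi)) → ∃ n : ℤ, x = y + n * (2 * Real.pi)) :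
    (StrictMono G ∧ ∀ x, G (x + 2 * Real.pi) = G x + 2 * Real.pi) ∨
    (StrictMono (fun x => - G x) ∧ ∀ x, - G (x + 2 * Real.pi) = - G x + 2 * Real.pi) := by
  have hpi := Real.pi_pos
  obtain ⟨n, hn⟩ := const_of_int_valued (f := fun x => G (x + 2 * Real.pi) - G x) (by fun_prop)
    (c := 2 * Real.pi) (by linarith) (fun x => by
      obtain ⟨n, hn⟩ := h2 x; exact ⟨n, by rw [hn]; ring⟩)
  have hn0 : n ≠ 0 := by
    rintro rfl
    have hd : Continuous fun x => G (x + Real.pi) - G x := by fun_prop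
    have e : G (Real.pi + Real.pi) - G Real.pi = -(G (0 + Real.pi) - G 0) := by
      have := hn 0
      simp only [Int.cast_zero, zero_mul, zero_add] at this
      rw [zero_add, ← two_mul]; linarith
    obtain ⟨y, hy⟩ : ∃ y, G (y + Real.pi) - G y = 0 := by
      rcases le_total 0 (G (0 + Real.pi) - G 0) with h | h
      · exact mem_range_of_exists_le_of_exists_ge hd ⟨Real.pi, by rw [e]; linarith⟩ ⟨0, h⟩
      · exact mem_range_of_exists_le_of_exists_ge hd ⟨0, h⟩ ⟨Real.pi, by rw [e]; linarith⟩
    obtain ⟨m, hm⟩ := hi (y + Real.pi) y ⟨0, by simp; linarith⟩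
    have h3 : Real.pi * (1 - 2 * m) = 0 := by linear_combination hm
    have h4 : (1 - 2 * (m:ℝ)) = 0 := (mul_eq_zero.1 h3).resolve_left hpi.ne'
    have h5 : (1 - 2 * m : ℤ) = 0 := by exact_mod_cast h4
    omega
  have hshift : ∀ (m : ℕ) (x : ℝ), G (x + m * (2 * Real.pi)) = G x + m * n * (2 * Real.pi) := by
    intro m
    induction m with
    | zero => intro x; simp
    | succ k ih =>
      intro x
      have := hn (x + k * (2 * Real.pi))
      push_cast
      rw [show x + (k + 1) * (2 * Real.pi) = x + k * (2 * Real.pi) + 2 * Real.pi by ring]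
      rw [ih] at this
      linarith
  have hinj : Function.Injective G := by
    have key : ∀ x y (m : ℕ), x = y + m * (2 * Real.pi) → G x = G y → x = y := by
      intro x y m hx hG
      rw [hx, hshift] at hG
      have : (m : ℝ) * n * (2 * Real.pi) = 0 := by linarith
      have hnr : (n : ℝ) ≠ 0 := by exact_mod_cast hn0
      have hm : (m : ℝ) = 0 := by
        rcases mul_eq_zero.1 this with h | h
        · exact (mul_eq_zero.1 h).resolve_right hnr
        · linarith
      rw [hx, hm]; ring
    intro x y hG
    obtain ⟨m, hm⟩ := hi x y ⟨0, by simp [hG]⟩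
    rcases Int.eq_nat_or_neg m with ⟨k, rfl | rfl⟩
    · exact key x y k (by simpa using hm) hG
    · exact (key y x k (by rw [hm]; push_cast; ring) hG.symm).symm
  rcases hc.strictMono_of_inj hinj with h | h
  · exact Or.inl ⟨h, lift_step hc h hi hn⟩
  · right
    have hm : StrictMono (fun x => - G x) := fun x y hxy => neg_lt_neg (h hxy)
    refine ⟨hm, lift_step (G := fun x => - G x) (by fun_prop) hm ?_ (n := -n) ?_⟩
    · rintro x y ⟨k, hk⟩
      exact hi x y ⟨-k, by push_cast; linarith⟩
    · intro x
      have := hn x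
      push_cast
      linarith

/-- angular map -/
noncomputable def tw (G : ℝ → ℝ) (z : ℂ) : ℂ :=
  z * Complex.exp (((G z.arg - z.arg : ℝ) : ℂ) * Complex.I)

lemma tw_norm (G : ℝ → ℝ) (z : ℂ) : ‖tw G z‖ = ‖z‖ := by
  rw [tw, norm_mul, Complex.norm_exp_ofReal_mul_I, mul_one]

lemma tw_polar (G : ℝ → ℝ) (z : ℂ) : tw G z = ‖z‖ * Complex.exp ((G z.arg : ℝ) * Complex.I) := by
  rw [tw]
  conv_lhs => rw [← Complex.norm_mul_exp_arg_mul_I z]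
  rw [mul_assoc, ← Complex.exp_add, Complex.norm_mul_exp_arg_mul_I]
  congr 2
  push_cast; ring

lemma int_shift {G : ℝ → ℝ} (h2 : ∀ x, G (x + 2 * Real.pi) = G x + 2 * Real.pi) (m : ℤ) (x : ℝ) :
    G (x + m * (2 * Real.pi)) = G x + m * (2 * Real.pi) := by
  have hp : Function.Periodic (fun x => G x - x) (2 * Real.pi) := by
    intro x; beta_reduce; rw [h2]; ring
  have := hp.int_mul m x
  linarith

lemma tw_apply {G : ℝ → ℝ} (h2 : ∀ x, G (x + 2 * Real.pi) = G x + 2 * Real.pi) {r : ℝ} (hr : 0 ≤ r) (x : ℝ) :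
    tw G (r * Complex.exp (x * Complex.I)) = r * Complex.exp (G x * Complex.I) := by
  rcases hr.eq_or_lt with rfl | hr
  · simp [tw]
  set z := (r : ℂ) * Complex.exp (x * Complex.I) with hz
  have hn : ‖z‖ = r := by
    rw [hz, norm_mul, Complex.norm_exp_ofReal_mul_I, Complex.norm_real, Real.norm_of_nonneg hr.le, mul_one]
  rw [tw_polar, hn]
  have h1 : Complex.exp (z.arg * Complex.I) = Complex.exp (x * Complex.I) := by
    have := Complex.norm_mul_exp_arg_mul_I z
    rw [hn, hz] at this
    exact mul_left_cancel₀ (by exact_mod_cast hr.ne') this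
  obtain ⟨m, hm⟩ := (exp_I_eq_iff _ _).1 h1
  congr 1
  rw [exp_I_eq_iff]
  exact ⟨m, by rw [hm, int_shift h2]⟩

lemma tw_bij {G : ℝ → ℝ} (hc : Continuous G) (hm : StrictMono G)
    (h2 : ∀ x, G (x + 2 * Real.pi) = G x + 2 * Real.pi) : Function.Bijective (tw G) := by
  constructor
  · intro z w h
    have hn : ‖z‖ = ‖w‖ := by rw [← tw_norm G z, h, tw_norm]
    by_cases hz : ‖z‖ = 0
    · have hw0 : ‖w‖ = 0 := by rw [← hn]; exact hz
      rw [norm_eq_zero.1 hz, norm_eq_zero.1 hw0]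
    rw [tw_polar, tw_polar, hn] at h
    have hw : (‖w‖ : ℂ) ≠ 0 := by rw [← hn]; exact_mod_cast hz
    obtain ⟨m, hm'⟩ := (exp_I_eq_iff _ _).1 (mul_left_cancel₀ hw h)
    rw [← int_shift h2] at hm'
    have := hm.injective hm'
    rw [← Complex.norm_mul_exp_arg_mul_I z, ← Complex.norm_mul_exp_arg_mul_I w, hn,
      (exp_I_eq_iff z.arg w.arg).2 ⟨m, this⟩]
  · intro w
    have hsurj : ∃ x, G x = w.arg := by
      have hpi := Real.pi_pos
      obtain ⟨m, hm1⟩ := exists_int_gt ((w.arg - G 0) / (2 * Real.pi))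
      obtain ⟨k, hk1⟩ := exists_int_lt ((w.arg - G 0) / (2 * Real.pi))
      rw [div_lt_iff₀ (by linarith)] at hm1
      rw [lt_div_iff₀ (by linarith)] at hk1
      have e1 := int_shift h2 m 0
      have e2 := int_shift h2 k 0
      exact mem_range_of_exists_le_of_exists_ge hc ⟨0 + k * (2 * Real.pi), by rw [e2]; linarith⟩
        ⟨0 + m * (2 * Real.pi), by rw [e1]; linarith⟩
    obtain ⟨x, hx⟩ := hsurj
    refine ⟨‖w‖ * Complex.exp (x * Complex.I), ?_⟩
    rw [tw_apply h2 (norm_nonneg w), hx, Complex.norm_mul_exp_arg_mul_I]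

lemma arg_periodic_continuousAt {v : ℝ → ℝ} (hv : Continuous v) (hp : Function.Periodic v (2 * Real.pi))
    {z : ℂ} (hz : z ≠ 0) : ContinuousAt (fun z : ℂ => v z.arg) z := by
  have hl : Continuous (hp.lift : AddCircle (2 * Real.pi) → ℝ) := by
    exact (QuotientAddGroup.isQuotientMap_mk _).continuous_iff.2 hv
  have h1 : ContinuousAt (fun z : ℂ => (z.arg : Real.Angle)) z := Complex.continuousAt_arg_coe_angle hz
  exact hl.continuousAt.comp (x := z) (f := fun z : ℂ => ((z.arg : Real.Angle) : AddCircle (2 * Real.pi))) h1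

lemma PSI.tw {G : ℝ → ℝ} (hc : Continuous G) (hm : StrictMono G)
    (h2 : ∀ x, G (x + 2 * Real.pi) = G x + 2 * Real.pi) : PSI (tw G) id ∧ Continuous (tw G) := by
  set F : I × ℂ → ℂ := fun p => p.2 * Complex.exp ((((1 - (p.1 : ℝ)) * (G p.2.arg - p.2.arg) : ℝ) : ℂ) * Complex.I) with hF
  have hFt : ∀ t : I, (fun z => F (t, z)) = SphIso.tw (fun x => (1 - (t:ℝ)) * G x + t * x) := by
    intro t; ext z
    simp only [hF, SphIso.tw]
    congr 4
    ring
  have hn : ∀ p, ‖F p‖ = ‖p.2‖ := by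
    intro p; simp only [hF]; rw [norm_mul, Complex.norm_exp_ofReal_mul_I, mul_one]
  have hFc : Continuous F := by
    rw [continuous_iff_continuousAt]
    rintro ⟨t, z⟩
    by_cases hz : z = 0
    · subst hz
      have h0 : F (t, 0) = 0 := by simp [hF]
      rw [ContinuousAt, h0]
      apply squeeze_zero_norm (a := fun p : I × ℂ => ‖p.2‖) (fun p => (hn p).le)
      have : Continuous fun p : I × ℂ => ‖p.2‖ := by fun_prop
      simpa using this.tendsto (t, (0:ℂ))
    · have h1 : ContinuousAt (fun z : ℂ => G z.arg - z.arg) z := by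
        refine arg_periodic_continuousAt (v := fun x => G x - x) (by fun_prop) ?_ hz
        intro x; beta_reduce; rw [h2]; ring
      have h3 : ContinuousAt (fun p : I × ℂ => G p.2.arg - p.2.arg) (t, z) :=
        ContinuousAt.comp (f := Prod.snd) (g := fun z : ℂ => G z.arg - z.arg) h1 continuousAt_snd
      have h4 : ContinuousAt (fun p : I × ℂ => (1 - (p.1 : ℝ)) * (G p.2.arg - p.2.arg)) (t, z) :=
        ContinuousAt.mul (by fun_prop) h3
      have h5 : ContinuousAt (fun p : I × ℂ => (((1 - (p.1 : ℝ)) * (G p.2.arg - p.2.arg) : ℝ) : ℂ)) (t, z) :=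
        Complex.continuous_ofReal.continuousAt.comp h4
      exact continuousAt_snd.mul ((h5.mul continuousAt_const).cexp)
  have h0 : ∀ z, F (0, z) = SphIso.tw G z := by intro z; simp [hF, SphIso.tw]
  constructor
  · refine PSI.mk F hFc h0 (by simp [hF]) ?_ ?_
    · intro t
      rw [hFt t]
      have ht0 := t.2.1
      have ht1 := t.2.2
      apply tw_bij (by fun_prop)
      · intro x y hxy
        have := hm hxy
        simp only
        rcases ht0.eq_or_lt with h | h
        · rw [← h]; linarith
        · nlinarith
      · intro x; rw [h2]; ring
    · exact fun R => ⟨R, fun t z hz => by rw [hn]; exact hz⟩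
  · have : SphIso.tw G = fun z => F (0, z) := by ext z; rw [h0]
    rw [this]; fun_prop

lemma cone {γ : ℂ → ℂ} (hγ : ContinuousOn γ (sphere 0 1)) (hm : MapsTo γ (sphere 0 1) (sphere 0 1))
    (hi : InjOn γ (sphere 0 1)) : ∃ C : ℂ ≃ₜ ℂ, (∀ z ∈ sphere (0:ℂ) 1, C z = γ z) ∧ (∀ z, ‖C z‖ = ‖z‖) ∧
      (PSI C id ∨ PSI C (starRingEnd ℂ)) := by
  have hS : ∀ x : ℝ, Complex.exp (x * Complex.I) ∈ sphere (0:ℂ) 1 := by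
    intro x; simp [Complex.norm_exp_ofReal_mul_I]
  obtain ⟨f, hfc, hf⟩ := exists_log_real (g := fun x : ℝ => γ (Complex.exp (x * Complex.I)))
    (hγ.comp_continuous (by fun_prop) hS) (fun x h => by have := hm (hS x); simp [h] at this)
  set G : ℝ → ℝ := fun x => (f x).im with hG
  have hGc : Continuous G := by fun_prop
  have hGe : ∀ x : ℝ, Complex.exp (G x * Complex.I) = γ (Complex.exp (x * Complex.I)) := by
    intro x
    have hn : ‖Complex.exp (f x)‖ = 1 := by rw [hf]; simpa using hm (hS x)
    rw [← hf]
    rw [Complex.norm_exp] at hn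
    have hre : (f x).re = 0 := by rwa [Real.exp_eq_one_iff] at hn
    congr 1
    apply Complex.ext <;> simp [hG, hre]
  have key : ∀ G' : ℝ → ℝ, Continuous G' → StrictMono G' → (∀ x, G' (x + 2 * Real.pi) = G' x + 2 * Real.pi) →
      ∃ C : ℂ ≃ₜ ℂ, (∀ x : ℝ, C (Complex.exp (x * Complex.I)) = Complex.exp (G' x * Complex.I)) ∧
        (∀ z, ‖C z‖ = ‖z‖) ∧ PSI C id := by
    intro G' h1 h2 h3
    have := PSI.tw h1 h2 h3
    obtain ⟨C, hC⟩ := mkHomeo this.2 (tw_bij h1 h2 h3) (fun R => ⟨R, fun z hz => by rw [tw_norm]; exact hz⟩)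
    refine ⟨C, ?_, ?_, ?_⟩
    · intro x; rw [hC]; simpa using tw_apply h3 zero_le_one x
    · intro z; rw [hC, tw_norm]
    · rw [hC]; exact this.1
  have hpol : ∀ z ∈ sphere (0:ℂ) 1, z = Complex.exp (z.arg * Complex.I) := by
    intro z hz
    have hz1 : ‖z‖ = 1 := by simpa using hz
    have := Complex.norm_mul_exp_arg_mul_I z
    rw [hz1] at this; simpa using this.symm
  rcases lift_cases hGc (fun x => by
      rw [← exp_I_eq_iff, hGe, hGe]; congr 1
      rw [exp_I_eq_iff]; exact ⟨1, by simp⟩) (fun x y h => by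
      rw [← exp_I_eq_iff, hGe, hGe] at h
      rw [← exp_I_eq_iff]; exact hi (hS x) (hS y) h) with ⟨h1, h2⟩ | ⟨h1, h2⟩
  · obtain ⟨C, hC1, hC2, hC3⟩ := key G hGc h1 h2
    refine ⟨C, ?_, hC2, Or.inl hC3⟩
    intro z hz
    rw [hpol z hz, hC1, hGe]
  · obtain ⟨C, hC1, hC2, hC3⟩ := key (fun x => - G x) (by fun_prop) h1 h2
    refine ⟨C.trans Complex.conjLIE.toHomeomorph, ?_, ?_, Or.inr ?_⟩
    · intro z hz
      rw [hpol z hz, ← hGe]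
      simp only [Homeomorph.trans_apply]
      rw [hC1]
      simp [← Complex.exp_conj]
    · intro z; simp [hC2]
    · have := (PSI.refl Complex.conjLIE.toHomeomorph).comp hC3
      exact this

end SphIso
end

section
open Set Filter Topology Metric

namespace SphIso
open unitInterval

theorem plane_cases (h : ℂ ≃ₜ ℂ) : PSI h id ∨ PSI h (starRingEnd ℂ) := by
  obtain ⟨g, gc, gb, gs, gball, c, hc, hd⟩ := caratheodory h
  obtain ⟨C, hC, hCn, hCi⟩ := cone (gc.mono sphere_subset_closedBall) gs
    (gb.injOn.mono sphere_subset_closedBall)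
  have hCsn : ∀ z, ‖C.symm z‖ = ‖z‖ := fun z => by
    have := hCn (C.symm z)
    rw [C.apply_symm_apply] at this
    exact this.symm
  set G : ℂ → ℂ := fun z => if ‖z‖ ≤ 1 then C.symm (g z) else z with hG
  have gn : ∀ z, ‖z‖ ≤ 1 → ‖g z‖ ≤ 1 := fun z hz => by
    have := gb.mapsTo (show z ∈ closedBall (0:ℂ) 1 by simpa using hz)
    simpa using this
  have Gn1 : ∀ z, ‖z‖ ≤ 1 → ‖G z‖ ≤ 1 := fun z hz => by
    simp only [hG, if_pos hz, hCsn]; exact gn z hz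
  have Gn2 : ∀ z, ¬ ‖z‖ ≤ 1 → G z = z := fun z hz => by
    simp only [hG, if_neg hz]
  have Gc : Continuous G := by
    refine continuous_if ?_ ?_ ?_
    · intro a ha
      have ha' : ‖a‖ = 1 := frontier_le_subset_eq continuous_norm continuous_const ha
      have h1 : a ∈ sphere (0:ℂ) 1 := by simpa using ha'
      rw [← hC a h1, C.symm_apply_apply]
    · have : closure {a : ℂ | ‖a‖ ≤ 1} = closedBall (0:ℂ) 1 := by
        have e : {a : ℂ | ‖a‖ ≤ 1} = closedBall (0:ℂ) 1 := by ext; simp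
        rw [e, isClosed_closedBall.closure_eq]
      rw [this]
      exact C.symm.continuous.comp_continuousOn gc
    · exact continuousOn_id
  have Gb : Function.Bijective G := by
    constructor
    · intro z w hzw
      by_cases hz : ‖z‖ ≤ 1 <;> by_cases hw : ‖w‖ ≤ 1
      · simp only [hG, if_pos hz, if_pos hw] at hzw
        exact gb.injOn (by simpa using hz) (by simpa using hw) (C.symm.injective hzw)
      · have := Gn1 z hz
        rw [hzw, Gn2 w hw] at this
        exact absurd this hw
      · have := Gn1 w hw
        rw [← hzw, Gn2 z hz] at this
        exact absurd this hz
      · rwa [Gn2 z hz, Gn2 w hw] at hzw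
    · intro w
      by_cases hw : ‖w‖ ≤ 1
      · obtain ⟨z, hz, hzw⟩ := gb.surjOn (show C w ∈ closedBall (0:ℂ) 1 by simpa [hCn] using hw)
        have hz' : ‖z‖ ≤ 1 := by simpa using hz
        exact ⟨z, by simp only [hG, if_pos hz', hzw, C.symm_apply_apply]⟩
      · exact ⟨w, Gn2 w hw⟩
  have Gd : ∀ z, ‖G z - z‖ ≤ 2 := fun z => by
    by_cases hz : ‖z‖ ≤ 1
    · calc ‖G z - z‖ ≤ ‖G z‖ + ‖z‖ := norm_sub_le _ _
        _ ≤ 2 := by linarith [Gn1 z hz]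
    · rw [Gn2 z hz]; simp
  obtain ⟨E, hE⟩ := mkHomeo Gc Gb (fun R => ⟨R + 2, fun z hz => by
    have h1 := Gd z
    have h2 := norm_sub_norm_le z (G z)
    rw [norm_sub_rev] at h2
    linarith⟩)
  have hEi : PSI E id := PSI.bounded E (C := 2) (fun z => by rw [hE]; exact Gd z)
  have hder : HasDerivAt (E.trans (C.trans h)) c 0 := by
    refine hd.congr_of_eventuallyEq ?_
    filter_upwards [Metric.ball_mem_nhds (0:ℂ) one_pos] with z hz
    have hz' : ‖z‖ ≤ 1 := by
      have : ‖z‖ < 1 := by simpa using hz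
      exact this.le
    simp [hE, hG, if_pos hz']
  have h1 : PSI (E.trans (C.trans h)) id := PSI.of_deriv _ hc hder
  have h2 : PSI (C.trans h) id := by
    have := (PSI.refl (C.trans h)).comp hEi
    exact PSI.trans (PSI.symm this) h1
  rcases hCi with hi | hi
  · left
    exact PSI.trans (PSI.symm ((PSI.refl h).comp hi)) h2
  · right
    have h3 : PSI (h ∘ starRingEnd ℂ) id := PSI.trans (PSI.symm ((PSI.refl h).comp hi)) h2
    have h4 := h3.comp (PSI.refl Complex.conjLIE.toHomeomorph)
    have e : (h ∘ starRingEnd ℂ) ∘ (Complex.conjLIE.toHomeomorph : ℂ ≃ₜ ℂ) = h := by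
      ext z; simp
    rw [e] at h4
    exact h4
end SphIso
end

section
open Set Filter Topology Metric

namespace SphIso
open unitInterval Quaternion

/-- the 2-sphere -/
abbrev S2 : Type := Metric.sphere (0 : EuclideanSpace ℝ (Fin 3)) 1

lemma S2.eq (x : S2) : x.1 0 ^ 2 + x.1 1 ^ 2 + x.1 2 ^ 2 = 1 := by
  have h2 : ∑ i, x.1 i ^ 2 = (1 : ℝ) ^ 2 :=
    (EuclideanSpace.sphere_zero_eq (n := Fin 3) 1 zero_le_one).subset x.2
  simpa [Fin.sum_univ_three] using h2

lemma S2.mem {v : EuclideanSpace ℝ (Fin 3)} (h : v 0 ^ 2 + v 1 ^ 2 + v 2 ^ 2 = 1) :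
    v ∈ Metric.sphere (0 : EuclideanSpace ℝ (Fin 3)) 1 := by
  rw [EuclideanSpace.sphere_zero_eq _ zero_le_one]
  simpa [Fin.sum_univ_three] using h

/-- embedding in the quaternions -/
noncomputable def qj (x : S2) : ℍ[ℝ] := ⟨0, x.1 0, x.1 1, x.1 2⟩

@[simp] lemma qj_re (x : S2) : (qj x).re = 0 := rfl
@[simp] lemma qj_imI (x : S2) : (qj x).imI = x.1 0 := rfl
@[simp] lemma qj_imJ (x : S2) : (qj x).imJ = x.1 1 := rfl
@[simp] lemma qj_imK (x : S2) : (qj x).imK = x.1 2 := rfl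

lemma exists_quat (a b c d : ℝ) : ∃ q : ℍ[ℝ], q.re = a ∧ q.imI = b ∧ q.imJ = c ∧ q.imK = d :=
  ⟨⟨a, b, c, d⟩, rfl, rfl, rfl, rfl⟩

lemma qj_continuous : Continuous qj := by
  have : qj = fun x : S2 => Quaternion.linearIsometryEquivTuple.symm !₂[0, x.1 0, x.1 1, x.1 2] := by
    ext x <;> simp [qj, Quaternion.linearIsometryEquivTuple_symm_apply]
  rw [this]
  fun_prop

lemma qj_sq (x : S2) : qj x * qj x = -1 := by
  have := S2.eq x
  ext <;> simp <;> nlinarith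

lemma qj_inj {x y : S2} (h : qj x = qj y) : x = y := by
  have h0 : x.1 0 = y.1 0 := congrArg (fun q : ℍ[ℝ] => q.imI) h
  have h1 : x.1 1 = y.1 1 := congrArg (fun q : ℍ[ℝ] => q.imJ) h
  have h2 : x.1 2 = y.1 2 := congrArg (fun q : ℍ[ℝ] => q.imK) h
  ext i
  fin_cases i <;> assumption

lemma sq_neg_one {y : ℍ[ℝ]} (h : y * y = -1) : y.re = 0 ∧ y.imI ^ 2 + y.imJ ^ 2 + y.imK ^ 2 = 1 := by
  rw [Quaternion.ext_iff] at h
  simp at h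
  obtain ⟨h0, h1, h2, h3⟩ := h
  have a1 : y.re * y.imI = 0 := by linarith
  have a2 : y.re * y.imJ = 0 := by linarith
  have a3 : y.re * y.imK = 0 := by linarith
  have : y.re = 0 := by
    by_contra hne
    have b1 := (mul_eq_zero.1 a1).resolve_left hne
    have b2 := (mul_eq_zero.1 a2).resolve_left hne
    have b3 := (mul_eq_zero.1 a3).resolve_left hne
    rw [b1, b2, b3] at h0
    nlinarith
  refine ⟨this, ?_⟩
  rw [this] at h0
  nlinarith

/-- back to the sphere -/
noncomputable def qk (y : ℍ[ℝ]) : EuclideanSpace ℝ (Fin 3) := !₂[y.imI, y.imJ, y.imK]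

lemma qk_continuous : Continuous qk := by
  have h1 := Quaternion.continuous_imI
  have h2 := Quaternion.continuous_imJ
  have h3 := Quaternion.continuous_imK
  unfold qk
  fun_prop

lemma qk_mem {y : ℍ[ℝ]} (h : y * y = -1) : qk y ∈ Metric.sphere (0 : EuclideanSpace ℝ (Fin 3)) 1 :=
  S2.mem (by simpa [qk] using (sq_neg_one h).2)

lemma qj_qk {y : ℍ[ℝ]} (h : y * y = -1) : qj ⟨qk y, qk_mem h⟩ = y := by
  have := (sq_neg_one h).1
  ext <;> simp [qj, qk, this]

lemma conj_sq {q : ℍ[ℝ]} (hq : q ≠ 0) (x : S2) : (q * qj x * q⁻¹) * (q * qj x * q⁻¹) = -1 := by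
  have : (q * qj x * q⁻¹) * (q * qj x * q⁻¹) = q * (qj x * ((q⁻¹ * q) * qj x)) * q⁻¹ := by
    simp only [mul_assoc]
  rw [this, inv_mul_cancel₀ hq, one_mul, qj_sq]
  simp [hq]

lemma exists_rot (p p' : S2) : ∃ q : ℍ[ℝ], q ≠ 0 ∧ 0 ≤ q.re ∧ q * qj p = qj p' * q := by
  by_cases h : qj p' * qj p = 1
  · have hp : qj p' = - qj p := by
      have := congrArg (· * qj p) h
      simp only [mul_assoc, qj_sq, one_mul] at this
      rw [← this]; simp
    have e := S2.eq p
    rw [hp]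
    by_cases h0 : p.1 0 = 0 ∧ p.1 1 = 0
    · obtain ⟨q, qa, qb, qc, qd⟩ := exists_quat 0 1 0 0
      refine ⟨q, ?_, qa.ge, ?_⟩
      · rintro rfl; simp at qb
      · ext <;> simp [qa, qb, qc, qd, h0.1, h0.2]
    · obtain ⟨q, qa, qb, qc, qd⟩ := exists_quat 0 (-p.1 1) (p.1 0) 0
      refine ⟨q, ?_, qa.ge, ?_⟩
      · rintro rfl
        simp at qb qc
        exact h0 ⟨qc.symm, qb⟩
      · ext <;> simp [qa, qb, qc, qd] <;> ring
  · refine ⟨1 - qj p' * qj p, fun hh => h (sub_eq_zero.1 hh).symm, ?_, ?_⟩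
    · have e := S2.eq p
      have e' := S2.eq p'
      simp
      nlinarith [sq_nonneg (p.1 0 + p'.1 0), sq_nonneg (p.1 1 + p'.1 1), sq_nonneg (p.1 2 + p'.1 2)]
    · rw [sub_mul, mul_sub, one_mul, mul_one, mul_assoc, qj_sq, ← mul_assoc, qj_sq]
      simp [add_comm]

/-- rotations are transitive, through isotopies -/
lemma exists_rot_SI (p p' : S2) : ∃ R : S2 → S2, SI id R ∧ R p = p' := by
  obtain ⟨q, q0, qr, hq⟩ := exists_rot p p'
  set Q : I → ℍ[ℝ] := fun t => ((1 - (t : ℝ) : ℝ) : ℍ[ℝ]) + ((t : ℝ) : ℍ[ℝ]) * q with hQ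
  have Qc : Continuous Q := by
    have := Quaternion.continuous_coe
    fun_prop
  have Qne : ∀ t, Q t ≠ 0 := fun t ht => by
    by_cases h1 : (t : ℝ) = 1
    · simp [hQ, h1] at ht; exact q0 ht
    · have hlt : (t : ℝ) < 1 := lt_of_le_of_ne t.2.2 h1
      have := congrArg (fun y : ℍ[ℝ] => y.re) ht
      simp [hQ] at this
      have := mul_nonneg t.2.1 qr
      linarith
  have Qinv : Continuous fun t => (Q t)⁻¹ := Qc.inv₀ Qne
  set F : I × S2 → S2 := fun x => ⟨qk (Q x.1 * qj x.2 * (Q x.1)⁻¹), qk_mem (conj_sq (Qne x.1) x.2)⟩ with hF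
  have Fj : ∀ x, qj (F x) = Q x.1 * qj x.2 * (Q x.1)⁻¹ := fun x => qj_qk (conj_sq (Qne x.1) x.2)
  have Fc : Continuous F := by
    refine Continuous.subtype_mk ?_ _
    refine qk_continuous.comp ?_
    exact ((Qc.comp continuous_fst).mul (qj_continuous.comp continuous_snd)).mul (Qinv.comp continuous_fst)
  have Q0 : Q 0 = 1 := by simp [hQ]
  have Q1 : Q 1 = q := by simp [hQ]
  refine ⟨fun x => F (1, x), ⟨F, Fc, fun x => ?_, fun x => rfl, fun t => ⟨fun x y h => ?_, fun y => ?_⟩⟩, ?_⟩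
  · apply qj_inj; rw [Fj]; simp [Q0]
  · have h2 := congrArg qj h
    simp only [Fj] at h2
    exact qj_inj (mul_left_cancel₀ (Qne t) (mul_right_cancel₀ (inv_ne_zero (Qne t)) h2))
  · have h2 := conj_sq (inv_ne_zero (Qne t)) y
    refine ⟨⟨_, qk_mem h2⟩, ?_⟩
    apply qj_inj
    rw [Fj, qj_qk h2]
    simp only [inv_inv, mul_assoc]
    rw [mul_inv_cancel₀ (Qne t), ← mul_assoc (Q t), mul_inv_cancel₀ (Qne t)]
    simp
  · apply qj_inj
    rw [Fj]
    simp only [Q1, hq]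
    rw [mul_assoc, mul_inv_cancel₀ q0, mul_one]

lemma onePoint_homeo (k : OnePoint ℂ ≃ₜ OnePoint ℂ) (hk : k OnePoint.infty = OnePoint.infty) :
    ∃ f : ℂ ≃ₜ ℂ, ⇑k = OnePoint.map f := by
  have key : ∀ k : OnePoint ℂ ≃ₜ OnePoint ℂ, k OnePoint.infty = OnePoint.infty →
      ∃ f : ℂ → ℂ, Continuous f ∧ ∀ z : ℂ, k z = (f z : OnePoint ℂ) := by
    intro k hk
    have : ∀ z : ℂ, ∃ w : ℂ, k z = (w : OnePoint ℂ) := fun z => by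
      have : k z ≠ OnePoint.infty := fun h => by
        rw [← hk] at h
        exact OnePoint.coe_ne_infty z (k.injective h)
      obtain ⟨w, hw⟩ := OnePoint.ne_infty_iff_exists.1 this
      exact ⟨w, hw.symm⟩
    choose f hf using this
    refine ⟨f, ?_, hf⟩
    rw [OnePoint.isOpenEmbedding_coe.isInducing.continuous_iff]
    have : (OnePoint.some ∘ f : ℂ → OnePoint ℂ) = k ∘ OnePoint.some := by ext z; simp [hf]
    rw [this]
    exact k.continuous.comp OnePoint.continuous_coe
  obtain ⟨f, fc, hf⟩ := key k hk
  obtain ⟨g, gc, hg⟩ := key k.symm (by rw [← hk, k.symm_apply_apply, hk])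
  refine ⟨⟨⟨f, g, fun z => ?_, fun z => ?_⟩, fc, gc⟩, ?_⟩
  · apply OnePoint.coe_injective
    rw [← hg, ← hf, k.symm_apply_apply]
  · apply OnePoint.coe_injective
    rw [← hf, ← hg, k.apply_symm_apply]
  · ext z
    induction z using OnePoint.rec with
    | infty => simp [hk]
    | coe z => simp [hf]

lemma SI.homeo {X : Type*} [TopologicalSpace X] [CompactSpace X] [T2Space X] {f g : X → X} (h : SI f g) :
    ∃ e : X ≃ₜ X, ⇑e = g := by
  obtain ⟨F, Fc, F0, F1, Fb⟩ := h
  have : g = fun x => F (1, x) := by ext x; rw [F1]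
  have hh : IsHomeomorph g := by
    rw [isHomeomorph_iff_continuous_bijective, this]
    exact ⟨by fun_prop, Fb 1⟩
  exact ⟨hh.homeomorph, rfl⟩

/-- stereographic-type identification -/
noncomputable def st : OnePoint ℂ ≃ₜ S2 :=
  onePointEquivSphereOfFinrankEq (ι := Fin 3) (V := ℂ) (by simp)

/-- the standard reflection -/
noncomputable def refl2 : S2 → S2 := st ∘ OnePoint.map (starRingEnd ℂ) ∘ st.symm

theorem sphere_cases (h : S2 ≃ₜ S2) : SI h id ∨ SI h refl2 := by
  obtain ⟨R, hR, hp⟩ := exists_rot_SI (h (st OnePoint.infty)) (st OnePoint.infty)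
  obtain ⟨e, he⟩ := hR.homeo
  have hh : SI h (R ∘ h) := hR.comp (SI.refl h.continuous h.bijective)
  obtain ⟨f, hf⟩ := onePoint_homeo (st.trans (h.trans (e.trans st.symm))) (by simp [he, hp])
  have hfe : R ∘ h = st ∘ OnePoint.map f ∘ st.symm := by
    rw [← hf]; ext x; simp [he]
  rw [hfe] at hh
  rcases plane_cases f with h1 | h1
  · left
    refine hh.trans ?_
    have := SI.conj h1 st
    rw [OnePoint.map_id] at this
    have e2 : (st ∘ id ∘ st.symm : S2 → S2) = id := by ext x; simp
    rwa [e2] at this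
  · right
    exact hh.trans (SI.conj h1 st)

end SphIso
end

section
open Set Filter Topology Metric

namespace SphIso
open unitInterval Quaternion

lemma exists_log_complex {g : ℂ → ℂ} (hg : Continuous g) (h0 : ∀ x, g x ≠ 0) :
    ∃ f : ℂ → ℂ, Continuous f ∧ ∀ x, Complex.exp (f x) = g x := by
  have : IsSimplyConnected (univ : Set ℂ) := by
    have := (convex_univ (𝕜 := ℝ) (E := ℂ)).contractibleSpace ⟨0, by simp⟩
    exact (inferInstance : SimplyConnectedSpace (univ : Set ℂ))
  obtain ⟨f, hf, he⟩ := Complex.exists_continuousOn_eqOn_exp_comp this isOpen_univ hg.continuousOn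
    (by rintro ⟨x, _, hx⟩; exact h0 x hx)
  exact ⟨f, continuousOn_univ.1 hf, fun x => he (mem_univ x)⟩

/-- winding number contradiction -/
lemma no_wind {U V : ℂ → ℂ} (hU : Continuous U) (hV : Continuous V) (U0 : ∀ z, U z ≠ 0)
    (V0 : ∀ z, V z ≠ 0) (h : ∀ z, ‖z‖ = 1 → V z = - z ^ 2 * starRingEnd ℂ (U z)) : False := by
  obtain ⟨L, Lc, hL⟩ := exists_log_complex hU U0
  obtain ⟨M, Mc, hM⟩ := exists_log_complex hV V0
  set e : ℝ → ℂ := fun θ => Complex.exp (θ * Complex.I) with he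
  have ec : Continuous e := by fun_prop
  set D : ℝ → ℝ := fun θ => (M (e θ)).im + (L (e θ)).im - 2 * θ - Real.pi with hD
  have Dc : Continuous D := by fun_prop
  have key : ∀ θ, ∃ n : ℤ, D θ = n * (2 * Real.pi) := by
    intro θ
    have h1 := h (e θ) (Complex.norm_exp_ofReal_mul_I θ)
    have h2 : Complex.exp (M (e θ)) =
        Complex.exp (Real.pi * Complex.I + 2 * (θ * Complex.I) + starRingEnd ℂ (L (e θ))) := by
      rw [hM, h1, Complex.exp_add, Complex.exp_add, Complex.exp_pi_mul_I, Complex.exp_conj, hL,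
        two_mul, Complex.exp_add]
      simp only [he]; ring
    obtain ⟨n, hn⟩ := Complex.exp_eq_exp_iff_exists_int.1 h2
    refine ⟨n, ?_⟩
    have := congrArg Complex.im hn
    simp at this
    simp only [hD]
    rw [this]; ring
  obtain ⟨n, hn⟩ := const_of_int_valued Dc (by positivity) key
  have h0 := hn 0
  have h1 := hn (2 * Real.pi)
  have e0 : e (2 * Real.pi) = e 0 := by simp [he, Complex.exp_two_pi_mul_I]
  simp only [hD, e0] at h0 h1
  linarith [Real.pi_pos]

/-- retraction of the plane onto the disc -/
noncomputable def retr (z : ℂ) : ℂ := ((max 1 ‖z‖ : ℝ) : ℂ)⁻¹ * z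

lemma retr_continuous : Continuous retr := by
  have : ∀ z : ℂ, ((max 1 ‖z‖ : ℝ) : ℂ) ≠ 0 := fun z => by
    exact_mod_cast (lt_of_lt_of_le one_pos (le_max_left 1 ‖z‖)).ne'
  have h1 : Continuous fun z : ℂ => ((max 1 ‖z‖ : ℝ) : ℂ) := by fun_prop
  exact (h1.inv₀ this).mul continuous_id

lemma retr_norm (z : ℂ) : ‖retr z‖ ≤ 1 := by
  have h0 : 0 < max 1 ‖z‖ := lt_of_lt_of_le one_pos (le_max_left 1 ‖z‖)
  rw [retr, norm_mul, norm_inv, Complex.norm_real, Real.norm_of_nonneg h0.le, inv_mul_le_iff₀ h0]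
  simp

lemma retr_one {z : ℂ} (h : ‖z‖ = 1) : retr z = z := by simp [retr, h]

/-- hemisphere parametrisation -/
noncomputable def hemi (τ : ℝ) (z : ℂ) : EuclideanSpace ℝ (Fin 3) :=
  !₂[(retr z).re, (retr z).im, τ * √(1 - ‖retr z‖ ^ 2)]

lemma hemi_mem {τ : ℝ} (hτ : τ ^ 2 = 1) (z : ℂ) :
    hemi τ z ∈ Metric.sphere (0 : EuclideanSpace ℝ (Fin 3)) 1 := by
  apply S2.mem
  have h1 := retr_norm z
  have h2 : 0 ≤ 1 - ‖retr z‖ ^ 2 := by nlinarith [norm_nonneg (retr z)]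
  simp only [hemi]
  simp [mul_pow, hτ, Real.sq_sqrt h2]
  rw [Complex.sq_norm, Complex.normSq_apply]; ring

/-- hairy ball theorem -/
theorem hairy (b c d : S2 → ℝ) (hb : Continuous b) (hc : Continuous c) (hd : Continuous d)
    (h0 : ∀ x : S2, b x * x.1 0 + c x * x.1 1 + d x * x.1 2 = 0)
    (hne : ∀ x : S2, ¬ (b x = 0 ∧ c x = 0 ∧ d x = 0)) : False := by
  set X : ℝ → ℂ → S2 := fun τ z => if hτ : τ ^ 2 = 1 then ⟨hemi τ z, hemi_mem hτ z⟩ else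
    ⟨hemi 1 z, hemi_mem (by norm_num) z⟩ with hX
  have X0 : ∀ τ z, τ ^ 2 = 1 → (X τ z).1 0 = (retr z).re := fun τ z h => by
    simp only [hX, dif_pos h]; simp [hemi]
  have X1 : ∀ τ z, τ ^ 2 = 1 → (X τ z).1 1 = (retr z).im := fun τ z h => by
    simp only [hX, dif_pos h]; simp [hemi]
  have X2 : ∀ τ z, τ ^ 2 = 1 → (X τ z).1 2 = τ * √(1 - ‖retr z‖ ^ 2) := fun τ z h => by
    simp only [hX, dif_pos h]; simp [hemi]
  have rc := retr_continuous
  have Xc : ∀ τ, τ ^ 2 = 1 → Continuous (X τ) := fun τ h => by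
    have : X τ = fun z => ⟨hemi τ z, hemi_mem h z⟩ := by
      ext1 z; simp only [hX, dif_pos h]
    rw [this]
    refine Continuous.subtype_mk ?_ _
    have h1 : Continuous fun z => (retr z).re := Complex.continuous_re.comp rc
    have h2 : Continuous fun z => (retr z).im := Complex.continuous_im.comp rc
    unfold hemi
    fun_prop
  set U : ℝ → ℂ → ℂ := fun τ z => (b (X τ z) : ℂ) + c (X τ z) * Complex.I -
    τ * d (X τ z) * retr z * ((1 + √(1 - ‖retr z‖ ^ 2) : ℝ) : ℂ)⁻¹ with hU
  have spos : ∀ z, (0:ℝ) < 1 + √(1 - ‖retr z‖ ^ 2) := fun z => by positivity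
  have Uc : ∀ τ, τ ^ 2 = 1 → Continuous (U τ) := fun τ h => by
    have hXc := Xc τ h
    have h1 : Continuous fun z => ((1 + √(1 - ‖retr z‖ ^ 2) : ℝ) : ℂ)⁻¹ := by
      refine Continuous.inv₀ (by fun_prop) fun z => ?_
      exact_mod_cast (spos z).ne'
    fun_prop
  have Une : ∀ τ, τ ^ 2 = 1 → ∀ z, U τ z ≠ 0 := fun τ h z hz => by
    set s := √(1 - ‖retr z‖ ^ 2) with hs
    have s0 : 0 ≤ s := Real.sqrt_nonneg _
    have hs2 := S2.eq (X τ z)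
    have ht := h0 (X τ z)
    rw [X0 τ z h, X1 τ z h, X2 τ z h, ← hs] at hs2 ht
    have hz1 : (b (X τ z) : ℂ) + c (X τ z) * Complex.I =
        ((τ * d (X τ z) * (1 + s)⁻¹ : ℝ) : ℂ) * retr z := by
      have := sub_eq_zero.1 hz
      rw [this]; push_cast; ring
    have hre := congrArg Complex.re hz1
    have him := congrArg Complex.im hz1
    rw [Complex.re_ofReal_mul] at hre
    rw [Complex.im_ofReal_mul] at him
    simp at hre him
    have hp : (1 + s) ≠ 0 := by positivity
    have hd0 : d (X τ z) = 0 := by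
      have e1 : (1 + s) * (1 + s)⁻¹ = 1 := mul_inv_cancel₀ hp
      set k := (1 + s)⁻¹
      set D := d (X τ z)
      have e2 : (retr z).re ^ 2 + (retr z).im ^ 2 = (1 - s) * (1 + s) := by
        rw [mul_pow, h] at hs2; linarith
      have e3 : τ * D * k * ((retr z).re ^ 2 + (retr z).im ^ 2) + D * (τ * s) = 0 := by
        rw [hre, him] at ht; linarith
      rw [e2] at e3
      have e4 : τ * D = 0 := by
        have : τ * D * k * ((1 - s) * (1 + s)) = τ * D * (1 - s) * ((1 + s) * k) := by ring
        rw [this, e1] at e3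
        linarith
      have : τ ≠ 0 := by rintro rfl; norm_num at h
      exact (mul_eq_zero.1 e4).resolve_left this
    rw [hd0] at hre him
    simp at hre him
    exact hne _ ⟨hre, him, hd0⟩
  have hone : (1 : ℝ) ^ 2 = 1 := by norm_num
  have hneg : (-1 : ℝ) ^ 2 = 1 := by norm_num
  refine no_wind (Uc 1 hone) (Uc (-1) hneg) (Une 1 hone) (Une (-1) hneg) fun z hz => ?_
  have hr := retr_one hz
  have hXX : X (-1) z = X 1 z := by
    ext i
    fin_cases i
    · exact (X0 (-1) z hneg).trans (X0 1 z hone).symm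
    · exact (X1 (-1) z hneg).trans (X1 1 z hone).symm
    · refine (X2 (-1) z hneg).trans ((X2 1 z hone).trans ?_).symm
      rw [hr, hz]; simp
  have ht := h0 (X 1 z)
  have hs2 := S2.eq (X 1 z)
  rw [X0 1 z hone, X1 1 z hone, X2 1 z hone, hr, hz] at ht hs2
  simp at ht hs2
  simp only [hU, hXX, hr, hz]
  set B := b (X 1 z)
  set C := c (X 1 z)
  set D := d (X 1 z)
  apply Complex.ext
  · simp [pow_two]
    linear_combination (2 * z.re) * ht + (-B - D * z.re) * hs2
  · simp [pow_two]
    linear_combination (2 * z.im) * ht + (-C - D * z.im) * hs2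
end SphIso
end

section
open Set Filter Topology Metric

namespace SphIso
open unitInterval Quaternion

/-- The identity of the sphere is not homotopic to the antipodal map. -/
theorem no_antipodal (H : I × S2 → S2) (Hc : Continuous H) (H0 : ∀ x, H (0, x) = x)
    (H1 : ∀ x, qj (H (1, x)) = - qj x) : False := by
  have key : ∃ Q : S2 → ℍ[ℝ], Continuous Q ∧ (∀ x, Q x ≠ 0) ∧
      ∀ x, Q x * qj (H (0, x)) = qj (H (1, x)) * Q x := by
    refine PreconnectedSpace.induction₂' (fun s t : I => ∃ Q : S2 → ℍ[ℝ], Continuous Q ∧ (∀ x, Q x ≠ 0) ∧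
      ∀ x, Q x * qj (H (s, x)) = qj (H (t, x)) * Q x) ?_ ?_ 0 1
    · have step : ∀ s t : I, (∀ x, dist (H (s, x)) (H (t, x)) < 2) → ∃ Q : S2 → ℍ[ℝ], Continuous Q ∧
          (∀ x, Q x ≠ 0) ∧ ∀ x, Q x * qj (H (s, x)) = qj (H (t, x)) * Q x := by
        intro s t hst
        refine ⟨fun x => 1 - qj (H (t, x)) * qj (H (s, x)), ?_, ?_, ?_⟩
        · have := qj_continuous
          fun_prop
        · intro x hx
          have h : qj (H (t, x)) * qj (H (s, x)) = 1 := (sub_eq_zero.1 hx).symm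
          have hp : qj (H (t, x)) = - qj (H (s, x)) := by
            have := congrArg (· * qj (H (s, x))) h
            simp only [mul_assoc, qj_sq, one_mul] at this
            rw [← this]; simp
          have hv : (H (t, x)).1 = - (H (s, x)).1 := by
            have h0 := congrArg (fun q : ℍ[ℝ] => q.imI) hp
            have h1 := congrArg (fun q : ℍ[ℝ] => q.imJ) hp
            have h2 := congrArg (fun q : ℍ[ℝ] => q.imK) hp
            simp at h0 h1 h2
            ext i
            fin_cases i
            · simpa using h0
            · simpa using h1
            · simpa using h2
          have hd := hst x
          rw [Subtype.dist_eq, hv, dist_eq_norm, sub_neg_eq_add, ← two_smul ℝ, norm_smul] at hd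
          have hn : ‖(H (s, x)).1‖ = 1 := by simp
          rw [hn] at hd
          norm_num at hd
        · intro x
          rw [sub_mul, mul_sub, one_mul, mul_one, mul_assoc, qj_sq, ← mul_assoc, qj_sq]
          simp [add_comm]
      intro s
      let K : C(I, C(S2, S2)) := ContinuousMap.curry ⟨H, Hc⟩
      have hK : ∀ᶠ t in 𝓝 s, dist (K t) (K s) < 2 := by
        have := K.continuous.tendsto s
        exact this.eventually (Metric.ball_mem_nhds _ two_pos)
      filter_upwards [hK] with t ht
      have h1 : ∀ x, dist (H (t, x)) (H (s, x)) < 2 := fun x =>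
        lt_of_le_of_lt (ContinuousMap.dist_apply_le_dist (f := K t) (g := K s) x) ht
      exact ⟨step s t fun x => by rw [dist_comm]; exact h1 x, step t s h1⟩
    · constructor
      rintro r s t ⟨Q, Qc, Q0, hQ⟩ ⟨P, Pc, P0, hP⟩
      refine ⟨fun x => P x * Q x, by fun_prop, fun x => mul_ne_zero (P0 x) (Q0 x), fun x => ?_⟩
      rw [mul_assoc, hQ, ← mul_assoc, hP, mul_assoc]
  obtain ⟨Q, Qc, Q0, hQ⟩ := key
  have e : ∀ x : S2, (Q x).re = 0 ∧ (Q x).imI * x.1 0 + (Q x).imJ * x.1 1 + (Q x).imK * x.1 2 = 0 := by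
    intro x
    have h := hQ x
    rw [H0, H1, Quaternion.ext_iff] at h
    simp at h
    obtain ⟨h0, h1, h2, h3⟩ := h
    have hs := S2.eq x
    have a1 : (Q x).re * x.1 0 = 0 := by linarith
    have a2 : (Q x).re * x.1 1 = 0 := by linarith
    have a3 : (Q x).re * x.1 2 = 0 := by linarith
    refine ⟨?_, by linarith⟩
    calc (Q x).re = (Q x).re * (x.1 0 ^ 2 + x.1 1 ^ 2 + x.1 2 ^ 2) := by rw [hs, mul_one]
      _ = (Q x).re * x.1 0 * x.1 0 + (Q x).re * x.1 1 * x.1 1 + (Q x).re * x.1 2 * x.1 2 := by ring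
      _ = 0 := by rw [a1, a2, a3]; ring
  refine hairy (fun x => (Q x).imI) (fun x => (Q x).imJ) (fun x => (Q x).imK)
    (Quaternion.continuous_imI.comp Qc) (Quaternion.continuous_imJ.comp Qc)
    (Quaternion.continuous_imK.comp Qc) (fun x => (e x).2) ?_
  rintro x ⟨h1, h2, h3⟩
  exact Q0 x (Quaternion.ext _ _ (e x).1 h1 h2 h3)

/-- antipodal map -/
noncomputable def anti : S2 ≃ₜ S2 where
  toFun x := -x
  invFun x := -x
  left_inv x := neg_neg x
  right_inv x := neg_neg x
  continuous_toFun := continuous_neg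
  continuous_invFun := continuous_neg

lemma qj_anti (x : S2) : qj (anti x) = - qj x := by
  ext <;> simp [anti]

/-- homotopy of maps -/
def Hpy (f g : S2 → S2) : Prop :=
  ∃ F : I × S2 → S2, Continuous F ∧ (∀ x, F (0, x) = f x) ∧ (∀ x, F (1, x) = g x)

lemma SI.hpy {f g : S2 → S2} (h : SI f g) : Hpy f g := by
  obtain ⟨F, Fc, F0, F1, -⟩ := h
  exact ⟨F, Fc, F0, F1⟩

lemma Hpy.symm {f g : S2 → S2} (h : Hpy f g) : Hpy g f := by
  obtain ⟨F, hc, h0, h1⟩ := h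
  exact ⟨fun p => F (σ p.1, p.2), by fun_prop, by simpa using h1, by simpa using h0⟩

lemma Hpy.trans {f g h : S2 → S2} (h1 : Hpy f g) (h2 : Hpy g h) : Hpy f h := by
  obtain ⟨F, Fc, F0, F1⟩ := h1
  obtain ⟨G, Gc, G0, G1⟩ := h2
  have cf : Continuous f := by
    have : f = fun x => F (0, x) := by ext1 x; rw [F0]
    rw [this]; fun_prop
  have cg : Continuous g := by
    have : g = fun x => F (1, x) := by ext1 x; rw [F1]
    rw [this]; fun_prop
  have ch : Continuous h := by
    have : h = fun x => G (1, x) := by ext1 x; rw [G1]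
    rw [this]; fun_prop
  let F' : ContinuousMap.Homotopy (⟨f, cf⟩ : C(S2, S2)) ⟨g, cg⟩ := ⟨⟨F, Fc⟩, F0, F1⟩
  let G' : ContinuousMap.Homotopy (⟨g, cg⟩ : C(S2, S2)) ⟨h, ch⟩ := ⟨⟨G, Gc⟩, G0, G1⟩
  exact ⟨F'.trans G', by fun_prop, fun x => by simp, fun x => by simp⟩

lemma not_anti : ¬ Hpy anti id := by
  intro h
  obtain ⟨F, Fc, F0, F1⟩ := h.symm
  exact no_antipodal F Fc F0 fun x => by rw [F1, qj_anti]

lemma not_refl2 : ¬ Hpy refl2 id := by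
  intro h
  rcases sphere_cases anti with h1 | h1
  · exact not_anti h1.hpy
  · exact not_anti (h1.hpy.trans h)

theorem main_SI (h : S2 ≃ₜ S2) (hh : Hpy h id) : SI h id := by
  rcases sphere_cases h with h1 | h1
  · exact h1
  · exact absurd (h1.hpy.symm.trans hh) not_refl2

end SphIso
end

open unitInterval

/-- Every homeomorphism of the 2-sphere (the unit sphere in `ℝ³`) that is homotopic
to the identity is isotopic to the identity. -/
theorem homeomorph_sphere_homotopic_to_id_isotopic_to_id
    (h : Homeomorph (Metric.sphere (0 : EuclideanSpace ℝ (Fin 3)) 1)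
      (Metric.sphere (0 : EuclideanSpace ℝ (Fin 3)) 1))
    (H : I × (Metric.sphere (0 : EuclideanSpace ℝ (Fin 3)) 1) →
      Metric.sphere (0 : EuclideanSpace ℝ (Fin 3)) 1)
    (Hcont : Continuous H)
    (H0 : ∀ p, H (0, p) = h p)
    (H1 : ∀ p, H (1, p) = p) :
    ∃ F : I × (Metric.sphere (0 : EuclideanSpace ℝ (Fin 3)) 1) →
        Metric.sphere (0 : EuclideanSpace ℝ (Fin 3)) 1, Continuous F ∧
      (∀ p, F (0, p) = h p) ∧
      (∀ p, F (1, p) = p) ∧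
      (∀ t : I, IsHomeomorph fun p => F (t, p)) := by
  obtain ⟨F, Fc, F0, F1, Fb⟩ := SphIso.main_SI h ⟨H, Hcont, H0, H1⟩
  refine ⟨F, Fc, F0, F1, fun t => ?_⟩
  rw [isHomeomorph_iff_continuous_bijective]
  exact ⟨by fun_prop, Fb t⟩
end

section
/- Every homeomorphism of the half-open annulus that is homotopic to the identity is isotopic to the identity: let A = (ℝ/ℤ) × [0,∞) and let h : A → A be a homeomorphism homotopic to the identity map (as continuous maps). Then there exists a continuous map F : [0,1] × A → A such that F(0,·) = h, F(1,·) = id, and F(t,·) : A → A is a homeomorphism for every t ∈ [0,1]. -/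
open unitInterval


/-- The half-open annulus. -/
abbrev HOA : Type := AddCircle (1 : ℝ) × Set.Ici (0 : ℝ)

/-- There is no nowhere vanishing map on the plane restricting to `w ↦ r w` on the unit circle. -/
theorem hoa_no_ext (F : ℂ → ℂ) (hF : Continuous F) (h0 : ∀ w, F w ≠ 0) (r : ℂ)
    (hr : ∀ w : ℂ, ‖w‖ = 1 → F w = r * w) : False := by
  obtain ⟨L, ⟨-, hL⟩, -⟩ := Complex.isCoveringMapOn_exp.existsUnique_continuousMap_lifts
    (⟨F, hF⟩ : C(ℂ, ℂ)) (a₀ := 0) (e₀ := Complex.log (F 0)) (Complex.exp_log (h0 0))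
    (fun a => h0 a)
  have hL' : ∀ w, Complex.exp (L w) = F w := fun w => congrFun hL w
  have key : (fun x : ℝ => L (Complex.exp (x * Complex.I))) =
      fun x : ℝ => x * Complex.I + L 1 := by
    refine Complex.isCoveringMap_exp.eq_of_comp_eq (by fun_prop) (by fun_prop) ?_ 0 (by simp)
    funext x
    apply Subtype.ext
    simp only [Function.comp]
    rw [hL', hr _ (Complex.norm_exp_ofReal_mul_I x), Complex.exp_add, hL', hr 1 (by simp)]
    ring
  have h2 := congrFun key (2 * Real.pi)
  have h3 : Complex.exp (((2 * Real.pi : ℝ) : ℂ) * Complex.I) = 1 := by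
    push_cast
    exact Complex.exp_two_pi_mul_I
  simp only [h3] at h2
  have h4 : (((2 * Real.pi : ℝ) : ℂ) * Complex.I) = 0 := by
    linear_combination -h2
  simp [Real.pi_ne_zero] at h4

/-- A point is unstable if the identity can be instantly deformed off it. -/
def HOAUnstable (p : HOA) : Prop :=
  ∃ K : I × HOA → HOA, Continuous K ∧ (∀ x, K (0, x) = x) ∧
    ∀ u : I, 0 < u → ∀ x, K (u, x) ≠ p

theorem HOAUnstable.map (h : HOA ≃ₜ HOA) {p : HOA} (hp : HOAUnstable p) : HOAUnstable (h p) := by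
  obtain ⟨K, hK, hK0, hK1⟩ := hp
  refine ⟨fun q => h (K (q.1, h.symm q.2)), by fun_prop, fun x => by simp [hK0], ?_⟩
  intro u hu x hx
  exact hK1 u hu _ (h.injective hx)

theorem hoa_unstable_of_zero (p : HOA) (hp : (p.2 : ℝ) = 0) : HOAUnstable p := by
  refine ⟨fun q => (q.2.1, ⟨(q.2.2 : ℝ) + q.1, add_nonneg q.2.2.2 q.1.2.1⟩), by fun_prop,
    fun x => by simp, ?_⟩
  intro u hu x hx
  have h1 : (x.2 : ℝ) + u = p.2 := congrArg (fun y : HOA => (y.2 : ℝ)) hx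
  have h2 : (0 : ℝ) ≤ x.2 := x.2.2
  have h3 : (0 : ℝ) < u := hu
  linarith

/-- The embedding in the plane. -/
noncomputable def hoaE (p : HOA) : ℂ := ((1 + (p.2 : ℝ) : ℝ) : ℂ) * (AddCircle.toCircle p.1 : ℂ)

theorem hoaE_continuous : Continuous hoaE := by
  unfold hoaE
  have := AddCircle.continuous_toCircle (T := (1 : ℝ))
  fun_prop

theorem hoaE_norm (p : HOA) : ‖hoaE p‖ = 1 + (p.2 : ℝ) := by
  have h2 : (0 : ℝ) ≤ p.2 := p.2.2
  unfold hoaE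
  rw [norm_mul, Circle.norm_coe, mul_one, Complex.norm_real, Real.norm_of_nonneg (by linarith)]

theorem hoaE_injective : Function.Injective hoaE := by
  intro p q hpq
  have hn := hoaE_norm p
  rw [hpq, hoaE_norm q] at hn
  have h2 : (p.2 : ℝ) = q.2 := by linarith
  have h3 : (0 : ℝ) ≤ q.2 := q.2.2
  have h4 : (((1 + (q.2 : ℝ) : ℝ)) : ℂ) ≠ 0 := by
    exact_mod_cast (by linarith : (1 + (q.2 : ℝ)) ≠ 0)
  unfold hoaE at hpq
  rw [h2] at hpq
  have h5 := mul_left_cancel₀ h4 hpq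
  exact Prod.ext (AddCircle.injective_toCircle one_ne_zero (Subtype.ext h5)) (Subtype.ext h2)

theorem hoaE_inverse : ∃ f : {z : ℂ // 1 ≤ ‖z‖} → HOA, Continuous f ∧ ∀ z, hoaE (f z) = z := by
  have hne : ∀ z : {z : ℂ // 1 ≤ ‖z‖}, ‖(z : ℂ)‖ ≠ 0 := fun z => by
    have := z.2
    linarith
  let c : {z : ℂ // 1 ≤ ‖z‖} → Circle := fun z => ⟨(z : ℂ) / ((‖(z : ℂ)‖ : ℝ) : ℂ), by
    apply mem_sphere_zero_iff_norm.2
    rw [norm_div, Complex.norm_real, norm_norm, div_self (hne z)]⟩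
  have hc : Continuous c := by
    apply Continuous.subtype_mk
    apply Continuous.div (by fun_prop) (by fun_prop)
    intro z
    exact_mod_cast hne z
  let Φ := AddCircle.homeomorphCircle (T := (1 : ℝ)) one_ne_zero
  refine ⟨fun z => (Φ.symm (c z), ⟨‖(z : ℂ)‖ - 1, sub_nonneg.2 z.2⟩), by fun_prop, ?_⟩
  intro z
  have h1 : AddCircle.toCircle (Φ.symm (c z)) = c z := by
    rw [← AddCircle.homeomorphCircle_apply one_ne_zero]
    exact Φ.apply_symm_apply _
  unfold hoaE
  simp only [h1]
  have h2 : ((‖(z : ℂ)‖ : ℝ) : ℂ) ≠ 0 := by exact_mod_cast hne z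
  change ((1 + (‖(z : ℂ)‖ - 1) : ℝ) : ℂ) * ((z : ℂ) / ((‖(z : ℂ)‖ : ℝ) : ℂ)) = z
  rw [add_sub_cancel]
  field_simp

theorem hoa_zero_of_unstable (p : HOA) (hp : HOAUnstable p) : (p.2 : ℝ) = 0 := by
  obtain ⟨K, hK, hK0, hK1⟩ := hp
  obtain ⟨f, hf, hfE⟩ := hoaE_inverse
  by_contra hne
  set r : ℝ := (p.2 : ℝ) with hrdef
  have hr : 0 < r := lt_of_le_of_ne p.2.2 (Ne.symm hne)
  have hnorm : ‖hoaE p‖ = 1 + r := hoaE_norm p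
  have hm : ∀ w : ℂ, (0 : ℝ) < max 1 ‖w‖ := fun w => lt_of_lt_of_le one_pos (le_max_left _ _)
  have hz : ∀ w : ℂ, 1 ≤ ‖hoaE p + r * (w / ((max 1 ‖w‖ : ℝ) : ℂ))‖ := by
    intro w
    have h1 : ‖(r : ℂ) * (w / ((max 1 ‖w‖ : ℝ) : ℂ))‖ ≤ r := by
      rw [norm_mul, norm_div, Complex.norm_real, Complex.norm_real,
        Real.norm_of_nonneg hr.le, Real.norm_of_nonneg (hm w).le]
      have : ‖w‖ / max 1 ‖w‖ ≤ 1 := (div_le_one (hm w)).2 (le_max_right _ _)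
      nlinarith
    have h2 := norm_sub_le (hoaE p + r * (w / ((max 1 ‖w‖ : ℝ) : ℂ)))
      ((r : ℂ) * (w / ((max 1 ‖w‖ : ℝ) : ℂ)))
    rw [add_sub_cancel_right] at h2
    linarith
  let u : ℂ → I := fun w => Set.projIcc 0 1 zero_le_one (1 - ‖w‖)
  have hu : Continuous u := continuous_projIcc.comp (by fun_prop)
  let Z : ℂ → {z : ℂ // 1 ≤ ‖z‖} := fun w => ⟨_, hz w⟩
  have hZ : Continuous Z := by
    apply Continuous.subtype_mk
    refine continuous_const.add (continuous_const.mul (Continuous.div (by fun_prop) (by fun_prop) ?_))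
    intro w
    exact_mod_cast (hm w).ne'
  refine hoa_no_ext (fun w => hoaE (K (u w, f (Z w))) - hoaE p) ?_ ?_ r ?_
  · exact (hoaE_continuous.comp (hK.comp (hu.prodMk (hf.comp hZ)))).sub continuous_const
  · intro w hw
    have h1 : K (u w, f (Z w)) = p := hoaE_injective (sub_eq_zero.1 hw)
    rcases lt_or_ge ‖w‖ 1 with hlt | hge
    · refine hK1 (u w) ?_ _ h1
      change (0 : ℝ) < (u w : ℝ)
      simp only [u, Set.coe_projIcc]
      simp [hlt]
    · have h2 : u w = 0 := Set.projIcc_of_le_left _ (by linarith)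
      rw [h2, hK0] at h1
      have h3 := hfE (Z w)
      rw [h1] at h3
      have h4 : (r : ℂ) * (w / ((max 1 ‖w‖ : ℝ) : ℂ)) = 0 := by
        have h5 : hoaE p = hoaE p + r * (w / ((max 1 ‖w‖ : ℝ) : ℂ)) := h3
        linear_combination -h5
      have h6 : ((max 1 ‖w‖ : ℝ) : ℂ) ≠ 0 := by exact_mod_cast (hm w).ne'
      have h7 : w ≠ 0 := by
        rintro rfl
        simp at hge
        linarith
      have h8 : (r : ℂ) ≠ 0 := by exact_mod_cast hr.ne'
      exact mul_ne_zero h8 (div_ne_zero h7 h6) h4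
  · intro w hw
    have h2 : u w = 0 := Set.projIcc_of_le_left _ (by linarith)
    simp only [h2, hK0, hfE]
    simp [Z, hw]

theorem hoa_boundary (h : HOA ≃ₜ HOA) (p : HOA) (hp : (p.2 : ℝ) = 0) : ((h p).2 : ℝ) = 0 :=
  hoa_zero_of_unstable _ ((hoa_unstable_of_zero p hp).map h)

/-- Circle maps. -/
theorem hoa_circle (D : AddCircle (1 : ℝ) → ℝ) (hD : Continuous D)
    (hinj : Function.Injective fun θ : AddCircle (1 : ℝ) => θ + ((D θ : ℝ) : AddCircle (1 : ℝ)))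
    (t : ℝ) (ht0 : 0 ≤ t) (ht1 : t ≤ 1) :
    Function.Bijective fun θ : AddCircle (1 : ℝ) =>
      θ + (((1 - t) * D θ : ℝ) : AddCircle (1 : ℝ)) := by
  have hDm : Continuous fun x : ℝ => D (x : AddCircle (1 : ℝ)) :=
    hD.comp (AddCircle.continuous_mk' 1)
  have hG : Continuous fun x : ℝ => x + D (x : AddCircle (1 : ℝ)) := by fun_prop
  have hGi : Function.Injective fun x : ℝ => x + D (x : AddCircle (1 : ℝ)) := by
    intro x y hxy
    have hxy' : x + D (x : AddCircle (1 : ℝ)) = y + D (y : AddCircle (1 : ℝ)) := hxy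
    have h1 : (x : AddCircle (1 : ℝ)) = (y : AddCircle (1 : ℝ)) := by
      apply hinj
      simp only
      rw [← AddCircle.coe_add, ← AddCircle.coe_add, hxy']
    rw [h1] at hxy'
    linarith
  have hGm : StrictMono fun x : ℝ => x + D (x : AddCircle (1 : ℝ)) := by
    rcases hG.strictMono_of_inj hGi with h | h
    · exact h
    · have h1 := h (zero_lt_one' ℝ)
      simp only [AddCircle.coe_period, AddCircle.coe_zero] at h1
      linarith
  have hTm : StrictMono fun x : ℝ => x + (1 - t) * D (x : AddCircle (1 : ℝ)) := by
    intro x y hxy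
    have h1 : x + D (x : AddCircle (1 : ℝ)) < y + D (y : AddCircle (1 : ℝ)) := hGm hxy
    simp only
    rcases ht1.eq_or_lt with rfl | h2
    · simpa using hxy
    · nlinarith
  have hT : Continuous fun x : ℝ => x + (1 - t) * D (x : AddCircle (1 : ℝ)) := by fun_prop
  obtain ⟨C, hC⟩ : ∃ C, ∀ θ, |D θ| ≤ C := by
    obtain ⟨C, hC⟩ := (isCompact_range hD).isBounded.exists_norm_le
    exact ⟨C, fun θ => hC _ ⟨θ, rfl⟩⟩
  have hC' : ∀ θ, |(1 - t) * D θ| ≤ C := fun θ => by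
    rw [abs_mul, abs_of_nonneg (by linarith : 0 ≤ 1 - t)]
    have := hC θ
    have := abs_nonneg (D θ)
    nlinarith
  constructor
  · intro a b
    induction a using QuotientAddGroup.induction_on with | H x => ?_
    induction b using QuotientAddGroup.induction_on with | H y => ?_
    intro hab
    have hab' : ((x + (1 - t) * D (x : AddCircle (1 : ℝ)) : ℝ) : AddCircle (1 : ℝ)) =
      ((y + (1 - t) * D (y : AddCircle (1 : ℝ)) : ℝ) : AddCircle (1 : ℝ)) := hab
    rw [← sub_eq_zero, ← AddCircle.coe_sub, AddCircle.coe_eq_zero_iff] at hab'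
    obtain ⟨n, hn⟩ := hab'
    have hyn : ((y + n : ℝ) : AddCircle (1 : ℝ)) = (y : AddCircle (1 : ℝ)) := by
      rw [← sub_eq_zero, ← AddCircle.coe_sub, AddCircle.coe_eq_zero_iff]
      exact ⟨n, by simp⟩
    have : x = y + n := by
      apply hTm.injective
      simp only [hyn]
      simp only [zsmul_eq_mul, mul_one] at hn
      linarith
    change (x : AddCircle (1 : ℝ)) = (y : AddCircle (1 : ℝ))
    rw [this, hyn]
  · intro b
    induction b using QuotientAddGroup.induction_on with | H y => ?_
    have hmem : y ∈ Set.Icc ((y - C) + (1 - t) * D ((y - C : ℝ) : AddCircle (1 : ℝ)))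
        ((y + C) + (1 - t) * D ((y + C : ℝ) : AddCircle (1 : ℝ))) := by
      have h1 := abs_le.1 (hC' ((y - C : ℝ) : AddCircle (1 : ℝ)))
      have h2 := abs_le.1 (hC' ((y + C : ℝ) : AddCircle (1 : ℝ)))
      constructor <;> linarith
    obtain ⟨x, hx⟩ := intermediate_value_univ _ _ hT hmem
    refine ⟨(x : AddCircle (1 : ℝ)), ?_⟩
    simp only
    rw [← AddCircle.coe_add]
    exact congrArg _ hx

/-- `m(t,s) = min(s, t/(1-t))`. -/
noncomputable def hoaM (q : I × Set.Ici (0 : ℝ)) : ℝ :=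
  if (q.2 : ℝ) * (1 - q.1) ≤ q.1 then (q.2 : ℝ) else (q.1 : ℝ) / (1 - q.1)

theorem hoaM_continuous : Continuous hoaM := by
  unfold hoaM
  refine continuous_if_le (by fun_prop) (by fun_prop) (by fun_prop) ?_ ?_
  · apply ContinuousOn.div (by fun_prop) (by fun_prop)
    rintro ⟨t, s⟩ hq h0
    simp only [Set.mem_ofPred_eq] at hq h0
    rw [h0, mul_zero] at hq
    linarith
  · rintro ⟨t, s⟩ hq
    simp only at hq ⊢
    have h1 : (1 - (t : ℝ)) ≠ 0 := by
      intro h0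
      rw [h0, mul_zero] at hq
      linarith
    rw [eq_div_iff h1, hq]

theorem hoaM_nonneg (q) : 0 ≤ hoaM q := by
  unfold hoaM
  split_ifs
  · exact q.2.2
  · exact div_nonneg q.1.2.1 (sub_nonneg.2 q.1.2.2)

theorem hoaM_le (q) : hoaM q ≤ q.2 := by
  unfold hoaM
  split_ifs with h
  · exact le_rfl
  · push Not at h
    have h1 : 0 < 1 - (q.1 : ℝ) := by
      refine lt_of_le_of_ne (sub_nonneg.2 q.1.2.2) fun h0 => ?_
      rw [← h0, mul_zero] at h
      have := q.1.2.1
      linarith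
    rw [div_le_iff₀ h1]
    exact h.le

theorem hoaM_zero (s) : hoaM (0, s) = 0 := by
  have : (0 : ℝ) ≤ s := s.2
  unfold hoaM
  split_ifs with h
  · simp at h ⊢
    linarith
  · simp

theorem hoaM_one (s) : hoaM (1, s) = s := by
  unfold hoaM
  simp

/-- The key identity for the shift. -/
theorem hoaM_shift (t : I) (s s' : Set.Ici (0 : ℝ)) (v : ℝ) (hv : 0 ≤ v)
    (hs' : (s' : ℝ) = v + hoaM (t, s)) (hv0 : (s : ℝ) = hoaM (t, s) → v = 0) :
    hoaM (t, s') = hoaM (t, s) := by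
  by_cases hc : (s : ℝ) = hoaM (t, s)
  · have : s' = s := Subtype.ext (by rw [hs', hv0 hc, zero_add, ← hc])
    rw [this]
  · have hs : hoaM (t, s) = (t : ℝ) / (1 - t) := by
      unfold hoaM at hc ⊢
      split_ifs at hc ⊢ with h
      · exact absurd rfl hc
      · rfl
    rw [hs] at hs' hc ⊢
    have hle := hoaM_le (t, s)
    rw [hs] at hle
    by_cases h1 : (1 - (t : ℝ)) = 0
    · exfalso
      have ht : t = 1 := Subtype.ext (by change (t : ℝ) = 1; linarith)
      subst ht
      rw [hoaM_one] at hs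
      exact hc hs
    · have h1' : 0 < 1 - (t : ℝ) := lt_of_le_of_ne (sub_nonneg.2 t.2.2) (Ne.symm h1)
      unfold hoaM
      split_ifs with h
      · simp only at h ⊢
        rw [← le_div_iff₀ h1'] at h
        linarith
      · rfl

/-- The Alexander isotopy. -/
noncomputable def hoaPhi (h : HOA → HOA) (t : I) (p : HOA) : HOA :=
  ((h (p.1, ⟨(p.2 : ℝ) - hoaM (t, p.2), sub_nonneg.2 (hoaM_le (t, p.2))⟩)).1,
    ⟨((h (p.1, ⟨(p.2 : ℝ) - hoaM (t, p.2), sub_nonneg.2 (hoaM_le (t, p.2))⟩)).2 : ℝ)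
      + hoaM (t, p.2), add_nonneg (Subtype.property _) (hoaM_nonneg _)⟩)

theorem hoaPhi_continuous (h : HOA → HOA) (hh : Continuous h) :
    Continuous fun q : I × HOA => hoaPhi h q.1 q.2 := by
  unfold hoaPhi
  have := hoaM_continuous
  fun_prop

theorem hoaPhi_zero (h : HOA → HOA) (p : HOA) : hoaPhi h 0 p = h p := by
  simp [hoaPhi, hoaM_zero]

theorem hoaPhi_one (h : HOA → HOA) (hb : ∀ p : HOA, (p.2 : ℝ) = 0 → ((h p).2 : ℝ) = 0) (p : HOA) :
    hoaPhi h 1 p = ((h (p.1, ⟨0, Set.mem_Ici.2 le_rfl⟩)).1, p.2) := by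
  have h1 := hb (p.1, ⟨0, Set.mem_Ici.2 le_rfl⟩) rfl
  apply Prod.ext
  · simp [hoaPhi, hoaM_one]
  · apply Subtype.ext
    simp [hoaPhi, hoaM_one, h1]

theorem hoaPhi_inv (h h' : HOA → HOA) (hh : ∀ p, h' (h p) = p)
    (hb : ∀ p : HOA, (p.2 : ℝ) = 0 → ((h p).2 : ℝ) = 0) (t : I) (p : HOA) :
    hoaPhi h' t (hoaPhi h t p) = p := by
  have hm : hoaM (t, (hoaPhi h t p).2) = hoaM (t, p.2) := by
    refine hoaM_shift t p.2 _ _ (Subtype.property _) rfl ?_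
    intro h0
    apply hb
    simp only
    linarith
  have hq : ((hoaPhi h t p).1, (⟨((hoaPhi h t p).2 : ℝ) - hoaM (t, (hoaPhi h t p).2),
      sub_nonneg.2 (hoaM_le (t, (hoaPhi h t p).2))⟩ : Set.Ici (0 : ℝ))) =
      h (p.1, ⟨(p.2 : ℝ) - hoaM (t, p.2), sub_nonneg.2 (hoaM_le (t, p.2))⟩) := by
    apply Prod.ext
    · rfl
    · apply Subtype.ext
      simp only
      rw [hm]
      simp [hoaPhi]
  have hq2 := congrArg h' hq
  rw [hh] at hq2
  apply Prod.ext
  · have hq5 := congrArg (fun y : HOA => y.1) hq2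
    exact hq5
  · apply Subtype.ext
    have hq3 := congrArg (fun y : HOA => (y.2 : ℝ)) hq2
    have hq4 : ((hoaPhi h' t (hoaPhi h t p)).2 : ℝ) =
      ((p.2 : ℝ) - hoaM (t, p.2)) + hoaM (t, (hoaPhi h t p).2) :=
      congrArg (fun y : ℝ => y + hoaM (t, (hoaPhi h t p).2)) hq3
    rw [hq4, hm]
    ring

/-- Every homeomorphism of the half-open annulus `(ℝ/ℤ) × [0,∞)` that is homotopic to
the identity is isotopic to the identity. -/
theorem homeomorph_half_open_annulus_homotopic_to_id_isotopic_to_id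
    (h : Homeomorph (AddCircle (1 : ℝ) × Set.Ici (0 : ℝ))
      (AddCircle (1 : ℝ) × Set.Ici (0 : ℝ)))
    (H : I × (AddCircle (1 : ℝ) × Set.Ici (0 : ℝ)) →
      AddCircle (1 : ℝ) × Set.Ici (0 : ℝ))
    (Hcont : Continuous H)
    (H0 : ∀ p, H (0, p) = h p)
    (H1 : ∀ p, H (1, p) = p) :
    ∃ F : I × (AddCircle (1 : ℝ) × Set.Ici (0 : ℝ)) →
        AddCircle (1 : ℝ) × Set.Ici (0 : ℝ), Continuous F ∧
      (∀ p, F (0, p) = h p) ∧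
      (∀ p, F (1, p) = p) ∧
      (∀ t : I, IsHomeomorph fun p => F (t, p)) := by
  have hb := hoa_boundary h
  have hb' := hoa_boundary h.symm
  let z : Set.Ici (0 : ℝ) := ⟨0, Set.mem_Ici.2 le_rfl⟩
  -- the boundary homeomorphism
  have hz : ∀ θ, h (θ, z) = ((h (θ, z)).1, z) := fun θ =>
    Prod.ext rfl (Subtype.ext (hb (θ, z) rfl))
  have hz' : ∀ θ, h.symm (θ, z) = ((h.symm (θ, z)).1, z) := fun θ =>
    Prod.ext rfl (Subtype.ext (hb' (θ, z) rfl))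
  let g : AddCircle (1 : ℝ) ≃ₜ AddCircle (1 : ℝ) :=
    { toFun := fun θ => (h (θ, z)).1
      invFun := fun θ => (h.symm (θ, z)).1
      left_inv := fun θ => by
        simp only
        rw [← hz, h.symm_apply_apply]
      right_inv := fun θ => by
        simp only
        rw [← hz', h.apply_symm_apply]
      continuous_toFun := by fun_prop
      continuous_invFun := by fun_prop }
  -- the displacement
  obtain ⟨D, hD, hgD⟩ : ∃ D : AddCircle (1 : ℝ) → ℝ, Continuous D ∧
      ∀ θ, g θ = θ + ((D θ : ℝ) : AddCircle (1 : ℝ)) := by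
    let M : C(I × AddCircle (1 : ℝ), AddCircle (1 : ℝ)) :=
      ⟨fun q => (H (σ q.1, (q.2, z))).1 - q.2, by fun_prop⟩
    have hM0 : ∀ a, M (0, a) =
        (((ContinuousMap.const (AddCircle (1 : ℝ)) (0 : ℝ)) a : ℝ) : AddCircle (1 : ℝ)) := by
      intro a
      simp [M, H1]
    have cov := AddCircle.isCoveringMap_coe (1 : ℝ)
    refine ⟨fun θ => cov.liftHomotopy M (ContinuousMap.const _ 0) hM0 (1, θ), by fun_prop, ?_⟩
    intro θ
    have h1 := congrFun (cov.liftHomotopy_lifts M (ContinuousMap.const _ 0) hM0) (1, θ)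
    simp only [Function.comp] at h1
    rw [h1]
    simp [M, H0, g]
  have hinj : Function.Injective
      fun θ : AddCircle (1 : ℝ) => θ + ((D θ : ℝ) : AddCircle (1 : ℝ)) := by
    intro a b hab
    apply g.injective
    rw [hgD, hgD]
    exact hab
  have hcoe : Continuous ((↑) : ℝ → AddCircle (1 : ℝ)) := AddCircle.continuous_mk' 1
  have hΦ := hoaPhi_continuous h h.continuous
  have hΦ' := hoaPhi_continuous h.symm h.symm.continuous
  let Ψ : I × AddCircle (1 : ℝ) → AddCircle (1 : ℝ) :=
    fun q => q.2 + (((1 - (q.1 : ℝ)) * D q.2 : ℝ) : AddCircle (1 : ℝ))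
  have hΨ : Continuous Ψ := continuous_snd.add (hcoe.comp (by fun_prop))
  have hΨb : ∀ t : I, Function.Bijective fun θ => Ψ (t, θ) := fun t =>
    hoa_circle D hD hinj t t.2.1 t.2.2
  have hΨh : ∀ t : I, IsHomeomorph fun θ => Ψ (t, θ) := fun t =>
    isHomeomorph_iff_continuous_bijective.2 ⟨by fun_prop, hΨb t⟩
  refine ⟨fun q => hoaPhi h q.1 (g.symm (Ψ (q.1, q.2.1)), q.2.2), ?_, ?_, ?_, ?_⟩
  · have h1 : Continuous fun q : I × HOA => (q.1, ((g.symm (Ψ (q.1, q.2.1)), q.2.2) : HOA)) := by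
      fun_prop
    exact hΦ.comp h1
  · intro p
    have h1 : Ψ (0, p.1) = g p.1 := by simp [Ψ, hgD]
    simp only [hoaPhi_zero, h1, g.symm_apply_apply]
  · intro p
    have h1 : Ψ (1, p.1) = p.1 := by simp [Ψ]
    simp only [h1]
    rw [hoaPhi_one h hb]
    exact Prod.ext (g.apply_symm_apply p.1) rfl
  · intro t
    let P : HOA ≃ₜ HOA :=
      { toFun := hoaPhi h t
        invFun := hoaPhi h.symm t
        left_inv := hoaPhi_inv h h.symm h.symm_apply_apply hb t
        right_inv := hoaPhi_inv h.symm h h.apply_symm_apply hb' t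
        continuous_toFun := hΦ.comp (Continuous.prodMk_right t)
        continuous_invFun := hΦ'.comp (Continuous.prodMk_right t) }
    let Q : AddCircle (1 : ℝ) ≃ₜ AddCircle (1 : ℝ) := ((hΨh t).homeomorph _).trans g.symm
    exact ((Q.prodCongr (Homeomorph.refl (Set.Ici (0 : ℝ)))).trans P).isHomeomorph
end

section
/- Let P = ℝ × [0,∞) be the closed half-plane and let h : P → P be a homeomorphism for which there exists a homotopy H : [0,1] × P → P from h to the identity (H(0,·) = h, H(1,·) = id) such that H is a proper map and H(t, ·) maps the boundary ℝ × {0} into ℝ × {0} for every t ∈ [0,1]. Then h is isotopic to the identity: there exists a continuous map F : [0,1] × P → P such that F(0,·) = h, F(1,·) = id, and F(t,·) : P → P is a homeomorphism for every t ∈ [0,1]. -/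
open unitInterval

/-- Conjugation of `k` by the vertical translation by `s`, extended by the identity below. -/
noncomputable def shiftMap (k : ℝ × Set.Ici (0 : ℝ) → ℝ × Set.Ici (0 : ℝ)) (s : ℝ)
    (p : ℝ × Set.Ici (0 : ℝ)) : ℝ × Set.Ici (0 : ℝ) :=
  ((k (p.1, ⟨max ((p.2 : ℝ) - s) 0, Set.mem_Ici.2 (le_max_right _ _)⟩)).1,
    ⟨((k (p.1, ⟨max ((p.2 : ℝ) - s) 0, Set.mem_Ici.2 (le_max_right _ _)⟩)).2 : ℝ) + min (p.2 : ℝ) (max s 0),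
      Set.mem_Ici.2 <| add_nonneg (k (p.1, ⟨max ((p.2 : ℝ) - s) 0, Set.mem_Ici.2 (le_max_right _ _)⟩)).2.2
        (le_min p.2.2 (le_max_right _ _))⟩)

lemma shiftMap_of_le (k : ℝ × Set.Ici (0 : ℝ) → ℝ × Set.Ici (0 : ℝ))
    (hk : ∀ x, k (x, ⟨0, Set.mem_Ici.2 le_rfl⟩) = (x, ⟨0, Set.mem_Ici.2 le_rfl⟩)) {s : ℝ} (hs : 0 ≤ s)
    {p : ℝ × Set.Ici (0 : ℝ)} (hp : (p.2 : ℝ) ≤ s) : shiftMap k s p = p := by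
  obtain ⟨x, y, hy⟩ := p
  have e : max (y - s) 0 = 0 := max_eq_right (by simp at hp; linarith)
  simp at hp
  simp [shiftMap, e, hk, hs, hp]

lemma shiftMap_of_ge (k : ℝ × Set.Ici (0 : ℝ) → ℝ × Set.Ici (0 : ℝ)) {s : ℝ} (hs : 0 ≤ s)
    (x y : ℝ) (hy : 0 ≤ y) :
    shiftMap k s (x, ⟨y + s, Set.mem_Ici.2 (add_nonneg hy hs)⟩) =
      ((k (x, ⟨y, Set.mem_Ici.2 hy⟩)).1, ⟨((k (x, ⟨y, Set.mem_Ici.2 hy⟩)).2 : ℝ) + s, Set.mem_Ici.2 (add_nonneg (k (x, ⟨y, Set.mem_Ici.2 hy⟩)).2.2 hs)⟩) := by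
  simp [shiftMap, hs, hy]

lemma shiftMap_inv (k : Homeomorph (ℝ × Set.Ici (0 : ℝ)) (ℝ × Set.Ici (0 : ℝ)))
    (hk : ∀ x, k (x, ⟨0, Set.mem_Ici.2 le_rfl⟩) = (x, ⟨0, Set.mem_Ici.2 le_rfl⟩)) {s : ℝ} (hs : 0 ≤ s)
    (p : ℝ × Set.Ici (0 : ℝ)) : shiftMap k.symm s (shiftMap k s p) = p := by
  have hk' : ∀ x, k.symm (x, ⟨0, Set.mem_Ici.2 le_rfl⟩) = (x, ⟨0, Set.mem_Ici.2 le_rfl⟩) := fun x => by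
    rw [Homeomorph.symm_apply_eq, hk]
  rcases le_total (p.2 : ℝ) s with hp | hp
  · rw [shiftMap_of_le k hk hs hp, shiftMap_of_le _ hk' hs hp]
  · obtain ⟨x, y, hy⟩ := p
    simp only at hp
    obtain ⟨z, rfl⟩ : ∃ z, y = z + s := ⟨y - s, by ring⟩
    have hz : 0 ≤ z := by linarith
    rw [shiftMap_of_ge k hs x z hz]
    rw [shiftMap_of_ge k.symm hs _ _ (k (x, ⟨z, hz⟩)).2.2]
    simp

lemma continuous_shiftMap (k : ℝ × Set.Ici (0 : ℝ) → ℝ × Set.Ici (0 : ℝ)) (hk : Continuous k) :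
    Continuous fun q : ℝ × (ℝ × Set.Ici (0 : ℝ)) => shiftMap k q.1 q.2 := by
  unfold shiftMap
  have h1 : Continuous fun q : ℝ × (ℝ × Set.Ici (0 : ℝ)) =>
      k (q.2.1, ⟨max ((q.2.2 : ℝ) - q.1) 0, Set.mem_Ici.2 (le_max_right _ _)⟩) := by
    refine hk.comp (Continuous.prodMk (by fun_prop) (Continuous.subtype_mk (by fun_prop) _))
  refine Continuous.prodMk h1.fst (Continuous.subtype_mk ?_ _)
  exact (continuous_subtype_val.comp h1.snd).add (by fun_prop)

lemma isHomeomorph_shiftMap (k : Homeomorph (ℝ × Set.Ici (0 : ℝ)) (ℝ × Set.Ici (0 : ℝ)))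
    (hk : ∀ x, k (x, ⟨0, Set.mem_Ici.2 le_rfl⟩) = (x, ⟨0, Set.mem_Ici.2 le_rfl⟩)) {s : ℝ} (hs : 0 ≤ s) :
    IsHomeomorph (shiftMap k s) := by
  have hk' : ∀ x, k.symm (x, ⟨0, Set.mem_Ici.2 le_rfl⟩) = (x, ⟨0, Set.mem_Ici.2 le_rfl⟩) := fun x => by
    rw [Homeomorph.symm_apply_eq, hk]
  let e : Homeomorph (ℝ × Set.Ici (0 : ℝ)) (ℝ × Set.Ici (0 : ℝ)) :=
    { toFun := shiftMap k s
      invFun := shiftMap k.symm s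
      left_inv := shiftMap_inv k hk hs
      right_inv := shiftMap_inv k.symm hk' hs
      continuous_toFun := (continuous_shiftMap k k.continuous).comp
        (Continuous.prodMk continuous_const continuous_id)
      continuous_invFun := (continuous_shiftMap k.symm k.symm.continuous).comp
        (Continuous.prodMk continuous_const continuous_id) }
  exact e.isHomeomorph

/-- The Alexander-type isotopy: push the support of `k` up to infinity. -/
lemma exists_isotopy_of_fix (k : Homeomorph (ℝ × Set.Ici (0 : ℝ)) (ℝ × Set.Ici (0 : ℝ)))
    (hk : ∀ x, k (x, ⟨0, Set.mem_Ici.2 le_rfl⟩) = (x, ⟨0, Set.mem_Ici.2 le_rfl⟩)) :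
    ∃ F : I × (ℝ × Set.Ici (0 : ℝ)) → ℝ × Set.Ici (0 : ℝ), Continuous F ∧
      (∀ p, F (0, p) = k p) ∧
      (∀ p, F (1, p) = p) ∧
      (∀ t : I, IsHomeomorph fun p => F (t, p)) := by
  classical
  have hnn : ∀ t : I, 0 ≤ (t : ℝ) / (1 - t) := fun t =>
    div_nonneg t.2.1 (by linarith [t.2.2])
  refine ⟨fun q => if q.1 = 1 then q.2 else shiftMap k ((q.1 : ℝ) / (1 - q.1)) q.2,
    ?_, ?_, ?_, ?_⟩
  · rw [continuous_iff_continuousAt]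
    rintro ⟨t, p⟩
    by_cases ht : t = 1
    · subst ht
      have hU : ∀ᶠ q : I × (ℝ × Set.Ici (0 : ℝ)) in nhds (1, p),
          (q.2.2 : ℝ) * (1 - q.1) < q.1 := by
        have : IsOpen {q : I × (ℝ × Set.Ici (0 : ℝ)) | (q.2.2 : ℝ) * (1 - q.1) < q.1} :=
          isOpen_lt (by fun_prop) (by fun_prop)
        exact this.mem_nhds (by simp)
      refine (continuous_snd.continuousAt (x := (1, p))).congr ?_
      filter_upwards [hU] with q hq
      split_ifs with h1
      · rfl
      · have : (q.1 : ℝ) < 1 := lt_of_le_of_ne q.1.2.2 (fun h => h1 (Subtype.ext h))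
        rw [shiftMap_of_le k hk (hnn q.1)]
        rw [le_div_iff₀ (by linarith)]
        exact hq.le
    · have hU : ∀ᶠ q : I × (ℝ × Set.Ici (0 : ℝ)) in nhds (t, p), q.1 ≠ 1 :=
        (continuous_fst.continuousAt (x := (t, p))).eventually_ne ht
      have ht' : (1 : ℝ) - t ≠ 0 := fun h => ht (Subtype.ext (sub_eq_zero.1 h).symm)
      have hc : ContinuousAt (fun q : I × (ℝ × Set.Ici (0 : ℝ)) =>
          shiftMap k ((q.1 : ℝ) / (1 - q.1)) q.2) (t, p) := by
        have h2 : ContinuousAt (fun q : I × (ℝ × Set.Ici (0 : ℝ)) =>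
            (((q.1 : ℝ) / (1 - q.1), q.2) : ℝ × (ℝ × Set.Ici (0 : ℝ)))) (t, p) := by
          refine ContinuousAt.prodMk (ContinuousAt.div ?_ ?_ ht') continuous_snd.continuousAt
          · exact Continuous.continuousAt (by fun_prop)
          · exact Continuous.continuousAt (by fun_prop)
        exact ((continuous_shiftMap k k.continuous).continuousAt).comp h2
      refine hc.congr ?_
      filter_upwards [hU] with q hq
      simp [hq]
  · intro p
    obtain ⟨x, y, hy⟩ := p
    have h0 := shiftMap_of_ge k (le_refl (0 : ℝ)) x y hy
    simp only [add_zero] at h0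
    simp [h0]
  · intro p; simp
  · intro t
    by_cases ht : t = 1
    · simp only [ht, if_true]
      exact (Homeomorph.refl _).isHomeomorph
    · simp only [ht, if_false]
      exact isHomeomorph_shiftMap k hk (hnn t)

/-- A strictly monotone continuous function with values on both sides of every real. -/
lemma strictMono_homeo (g : ℝ → ℝ) (hg : StrictMono g) (hc : Continuous g)
    (hb : ∀ c, ∃ a b, g a < c ∧ c < g b) : ∃ e : Homeomorph ℝ ℝ, ∀ x, e x = g x := by
  have hs : Function.Surjective g := fun c => by
    obtain ⟨a, b, ha, hb⟩ := hb c
    exact mem_range_of_exists_le_of_exists_ge hc ⟨a, ha.le⟩ ⟨b, hb.le⟩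
  exact ⟨(StrictMono.orderIsoOfSurjective g hg hs).toHomeomorph, fun x => rfl⟩

/-- Every homeomorphism of the closed half-plane `ℝ × [0,∞)` that is properly homotopic
to the identity rel boundary is isotopic to the identity. -/
theorem homeomorph_half_plane_properly_homotopic_to_id_isotopic_to_id
    (h : Homeomorph (ℝ × Set.Ici (0 : ℝ)) (ℝ × Set.Ici (0 : ℝ)))
    (H : I × (ℝ × Set.Ici (0 : ℝ)) → ℝ × Set.Ici (0 : ℝ))
    (Hcont : Continuous H)
    (H0 : ∀ p, H (0, p) = h p)
    (H1 : ∀ p, H (1, p) = p)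
    (Hproper : IsProperMap H)
    (Hbd : ∀ (t : I) (p : ℝ × Set.Ici (0 : ℝ)),
      (p.2 : ℝ) = 0 → ((H (t, p)).2 : ℝ) = 0) :
    ∃ F : I × (ℝ × Set.Ici (0 : ℝ)) → ℝ × Set.Ici (0 : ℝ), Continuous F ∧
      (∀ p, F (0, p) = h p) ∧
      (∀ p, F (1, p) = p) ∧
      (∀ t : I, IsHomeomorph fun p => F (t, p)) := by
  let z : Set.Ici (0 : ℝ) := ⟨0, Set.mem_Ici.2 le_rfl⟩
  have hz : ∀ t x, (H (t, (x, z))).2 = z := fun t x => Subtype.ext (Hbd t (x, z) rfl)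
  let g : ℝ → ℝ := fun x => (h (x, z)).1
  have hg : ∀ x, h (x, z) = (g x, z) := fun x => Prod.ext rfl (by rw [← H0]; exact hz 0 x)
  have gc : Continuous g := by
    exact (h.continuous.comp (Continuous.prodMk continuous_id continuous_const)).fst
  have ginj : Function.Injective g := fun x y hxy => by
    have : h (x, z) = h (y, z) := by rw [hg, hg, hxy]
    simpa using h.injective this
  -- control of the ends
  have key : ∀ c, ∃ R : ℝ, ∀ x, R < |x| → ∀ t, (H (t, (x, z))).1 ≠ c := by
    intro c
    have hcpt : IsCompact (H ⁻¹' {(c, z)}) := Hproper.isCompact_preimage isCompact_singleton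
    have h2 : IsCompact ((fun q : I × (ℝ × Set.Ici (0 : ℝ)) => |q.2.1|) '' (H ⁻¹' {(c, z)})) :=
      hcpt.image (by fun_prop)
    obtain ⟨R, hR⟩ := h2.bddAbove
    refine ⟨R, fun x hx t ht => ?_⟩
    have : |x| ≤ R := hR ⟨(t, (x, z)), by
      simp only [Set.mem_preimage, Set.mem_singleton_iff]
      exact Prod.ext ht (hz t x), rfl⟩
    linarith
  have slice : ∀ x, Continuous fun t : I => (H (t, (x, z))).1 := fun x =>
    (Hcont.comp (Continuous.prodMk continuous_id continuous_const)).fst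
  have g0 : ∀ x, (H (0, (x, z))).1 = g x := fun x => by rw [H0]
  have ends : ∀ c, ∃ a b, a < c ∧ g a < c ∧ c < b ∧ c < g b := by
    intro c
    obtain ⟨R, hR⟩ := key c
    have hRb : R < |(|R| + |c| + 1)| := by
      rw [abs_of_nonneg (by positivity)]
      linarith [le_abs_self R, abs_nonneg c]
    have hRa : R < |(-(|R| + |c| + 1))| := by rwa [abs_neg]
    have hb : c < |R| + |c| + 1 := by linarith [le_abs_self c, abs_nonneg R]
    have ha : -(|R| + |c| + 1) < c := by linarith [neg_abs_le c, abs_nonneg R]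
    refine ⟨_, _, ha, ?_, hb, ?_⟩
    · by_contra! hcon
      obtain ⟨t, ht⟩ := mem_range_of_exists_le_of_exists_ge (slice (-(|R| + |c| + 1))) (c := c)
        ⟨1, by rw [H1]; exact ha.le⟩ ⟨0, by rw [g0]; exact hcon⟩
      exact hR _ hRa t ht
    · by_contra! hcon
      obtain ⟨t, ht⟩ := mem_range_of_exists_le_of_exists_ge (slice (|R| + |c| + 1)) (c := c)
        ⟨0, by rw [g0]; exact hcon⟩ ⟨1, by rw [H1]; exact hb.le⟩
      exact hR _ hRb t ht
  have gmono : StrictMono g := by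
    rcases gc.strictMono_of_inj ginj with hm | hm
    · exact hm
    · obtain ⟨a, b, ha, hga, hb, hgb⟩ := ends 0
      have := hm (ha.trans hb)
      linarith
  -- straight line isotopy of the boundary
  let L : I → ℝ → ℝ := fun t x => (1 - (t : ℝ)) * g x + t * x
  have Lhom : ∀ t : I, ∃ e : Homeomorph ℝ ℝ, ∀ x, e x = L t x := by
    intro t
    have ht0 : (0 : ℝ) ≤ t := t.2.1
    have ht1 : (t : ℝ) ≤ 1 := t.2.2
    have conv : ∀ u v u' v' : ℝ, u < u' → v < v' →
        (1 - (t : ℝ)) * u + t * v < (1 - (t : ℝ)) * u' + t * v' := by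
      intro u v u' v' hu hv
      rcases ht0.eq_or_lt with h0 | h0
      · rw [← h0]; linarith
      · have := mul_lt_mul_of_pos_left hv h0
        have := mul_le_mul_of_nonneg_left hu.le (sub_nonneg.2 ht1)
        linarith
    apply strictMono_homeo
    · intro x y hxy
      exact conv _ _ _ _ (gmono hxy) hxy
    · exact (continuous_const.mul gc).add (continuous_const.mul continuous_id)
    · intro c
      obtain ⟨a, b, ha, hga, hb, hgb⟩ := ends c
      have e1 := conv _ _ _ _ hga ha
      have e2 := conv _ _ _ _ hgb hb
      refine ⟨a, b, ?_, ?_⟩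
      · show (1 - (t : ℝ)) * g a + t * a < c
        linarith
      · show c < (1 - (t : ℝ)) * g b + t * b
        linarith
  choose E hE using Lhom
  let G : I → Homeomorph (ℝ × Set.Ici (0 : ℝ)) (ℝ × Set.Ici (0 : ℝ)) := fun t =>
    (E t).prodCongr (Homeomorph.refl _)
  have hG : ∀ t p, G t p = (L t p.1, p.2) := fun t p => by
    rw [← hE]; rfl
  have G0 : ∀ x, G 0 (x, z) = (g x, z) := fun x => by rw [hG]; simp [L]
  obtain ⟨Φ, Φc, Φ0, Φ1, Φh⟩ := exists_isotopy_of_fix ((G 0).symm.trans h) (by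
    intro x
    obtain ⟨⟨y, w⟩, hy⟩ := (G 0).surjective (x, z)
    have hw : w = z := by rw [hG] at hy; exact congrArg Prod.snd hy
    subst hw
    change h ((G 0).symm (x, z)) = (x, z)
    rw [← hy, Homeomorph.symm_apply_apply, hg, G0])
  refine ⟨fun q => Φ (q.1, G q.1 q.2), ?_, ?_, ?_, ?_⟩
  · refine Φc.comp (Continuous.prodMk continuous_fst ?_)
    simp only [hG, L]
    fun_prop
  · intro p
    simp [Φ0]
  · intro p
    simp [Φ1, hG, L]
  · intro t
    exact (Φh t).comp (G t).isHomeomorph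
end
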